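/- arXiv:1603.06639 — 2 statements merged into one kernel-verified Lean document; each statement's English description precedes it below -/
import Mathlib

section
/- Let (R, m) be a regular local ring containing a field and let I be an ideal of R. Suppose that inj.dim_R(H_I^i(R)) = dim_R(H_I^i(R)) = c. If μ^c(p, H_I^i(R)) ≠ 0 for a prime ideal p of R, then p = m, i.e., p is the maximal ideal of R. -/
open CategoryTheory Opposite

noncomputable section

/-- Krull dimension of the support of a module. -/
def moduleSuppDim (R : Type) [CommRing R] (M : Type) [AddCommGroup M] [Module R M] :
    WithBot ℕ∞ :=
  Order.krullDim (Module.support R M)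

/-- `M` has injective dimension at most `n` (as `R`-module), characterized by
vanishing of `Ext^i(N, M)` for all `i > n`. -/
def injDimLE (R : Type) [CommRing R] (M : Type) [AddCommGroup M] [Module R M] (n : ℕ) : Prop :=
  ∀ (N : ModuleCat R) (i : ℕ), n < i →
    Subsingleton (((Ext R (ModuleCat R) i).obj (op N)).obj (ModuleCat.of R M))

/-- The injective dimension of `M` as an `R`-module, valued in `ℕ∞`. -/
def injDim (R : Type) [CommRing R] (M : Type) [AddCommGroup M] [Module R M] : ℕ∞ :=
  sInf {n : ℕ∞ | ∃ m : ℕ, (m : ℕ∞) = n ∧ injDimLE R M m}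

/-- The height of an ideal: the infimum of the heights of primes containing it. -/
def idealHeight (R : Type) [CommRing R] (I : Ideal R) : ℕ∞ :=
  sInf {h : ℕ∞ | ∃ p : PrimeSpectrum R, I ≤ p.asIdeal ∧ Order.height p = h}

/-- A regular local ring: a Noetherian local ring whose maximal ideal can be generated
by `dim R` elements. -/
def IsRegularLocal (R : Type) [CommRing R] [IsLocalRing R] : Prop :=
  IsNoetherianRing R ∧
    ∃ s : Finset R, Ideal.span (s : Set R) = IsLocalRing.maximalIdeal R ∧
      (s.card : WithBot ℕ∞) = ringKrullDim R

/-- A ring contains a field if some subring of it is a field. -/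
def ContainsField (R : Type) [CommRing R] : Prop :=
  ∃ k : Subring R, IsField k

/-- The underlying module of the `i`-th local cohomology of `R` with support in `I`. -/
abbrev LocalCohomologyMod (R : Type) [CommRing R] (I : Ideal R) (i : ℕ) : Type :=
  (localCohomology I i).obj (ModuleCat.of R R)

/-- The `j`-th Bass number `μ^j(p, M) = dim_{κ(p)} Ext^j_{R_p}(κ(p), M_p)` is nonzero,
expressed as nontriviality of the `Ext` module. -/
def BassNumberNonzero (R : Type) [CommRing R] (p : Ideal R) [p.IsPrime]
    (M : Type) [AddCommGroup M] [Module R M] (j : ℕ) : Prop :=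
  Nontrivial
    (((Ext (Localization.AtPrime p) (ModuleCat (Localization.AtPrime p)) j).obj
        (op (ModuleCat.of (Localization.AtPrime p)
          (IsLocalRing.ResidueField (Localization.AtPrime p))))).obj
      (ModuleCat.of (Localization.AtPrime p) (LocalizedModule p.primeCompl M)))

end

/-!
Suppose `p` is not maximal. Then `S = R_p` is regular by Serre's theorem, its maximal ideal is
generated by a regular sequence, and the localization `M` of `H_I^i(R)` at `p` has support of
dimension `< c`; it is enough that `Ext^j(κ(p), M) = 0` for `j > dim Supp M`.

This bound comes from Taylor expansions. A ring homomorphism `f ↦ f(x + t)` from `S` to an extension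
of a flat `S`-algebra by a nilpotent `t` has an analogue on `M`. For `M = R` it is the homomorphism
itself, and it passes to kernels, cokernels, finite products and localizations, hence to local
cohomology. If `x ^ n • y = 0`, then the expansion of `y` is killed by `(x + t) ^ n`, and comparing
coefficients of `t ^ n` modulo `x` gives `y ∈ xM`. So no prime in the support of `M / xM` is minimal
in the support of `M`: passing to `M / xM` lowers the dimension, and the vanishing of `Ext` follows
by induction on the regular sequence.

Enough translations exist because `S` is flat under its completion, which is a power series ring
`k⟦x⟧` by Cohen's structure theorem, and there coordinates may be translated by the variable of
`k[t] / (t ^ (N + 1))`.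
-/

universe u

section ModuleExt

variable {R : Type u} [CommRing R]

/-- `Ext^j_R(N, M)` for unbundled modules, in the derived-category model `Abelian.Ext`, which has
long exact sequences in both arguments. -/
abbrev ModuleExt (R : Type u) [CommRing R] (N M : Type u) [AddCommGroup N] [Module R N]
    [AddCommGroup M] [Module R M] (j : ℕ) : Type u :=
  Abelian.Ext.{u} (ModuleCat.of R N) (ModuleCat.of R M) j

variable {N N' N'' M M' M'' : Type u}
  [AddCommGroup N] [Module R N] [AddCommGroup N'] [Module R N'] [AddCommGroup N''] [Module R N'']
  [AddCommGroup M] [Module R M] [AddCommGroup M'] [Module R M'] [AddCommGroup M''] [Module R M'']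

lemma shortExact_of_exact {f : M →ₗ[R] M'} {g : M' →ₗ[R] M''} (hf : Function.Injective f)
    (hg : Function.Surjective g) (h : Function.Exact f g) :
    (ModuleCat.shortComplexOfCompEqZero f g h.linearMap_comp_eq_zero).ShortExact where
  exact := ModuleCat.shortComplex_exact _ h
  mono_f := (ModuleCat.mono_iff_injective _).2 hf
  epi_g := (ModuleCat.epi_iff_surjective _).2 hg

namespace ModuleExt

/-- The map `Ext^j(N, M) → Ext^j(N, M')` induced by `M → M'`. -/
noncomputable def postcomp (N : Type u) [AddCommGroup N] [Module R N] (f : M →ₗ[R] M') (j : ℕ) :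
    ModuleExt R N M j →ₗ[R] ModuleExt R N M' j :=
  (Abelian.Ext.mk₀ (ModuleCat.ofHom f)).postcompOfLinear R _ (add_zero j)

/-- The map `Ext^j(N', M) → Ext^j(N, M)` induced by `N → N'`. -/
noncomputable def precomp (M : Type u) [AddCommGroup M] [Module R M] (f : N →ₗ[R] N') (j : ℕ) :
    ModuleExt R N' M j →ₗ[R] ModuleExt R N M j :=
  (Abelian.Ext.mk₀ (ModuleCat.ofHom f)).precompOfLinear R _ (zero_add j)

@[simp]
lemma postcomp_apply (f : M →ₗ[R] M') (j : ℕ) (e : ModuleExt R N M j) :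
    postcomp N f j e = e.comp (Abelian.Ext.mk₀ (ModuleCat.ofHom f)) (add_zero j) := rfl

@[simp]
lemma precomp_apply (f : N →ₗ[R] N') (j : ℕ) (e : ModuleExt R N' M j) :
    precomp M f j e = (Abelian.Ext.mk₀ (ModuleCat.ofHom f)).comp e (zero_add j) := rfl

lemma postcomp_comp (f : M →ₗ[R] M') (g : M' →ₗ[R] M'') (j : ℕ) (e : ModuleExt R N M j) :
    postcomp N (g ∘ₗ f) j e = postcomp N g j (postcomp N f j e) := by
  simp

lemma precomp_comp (f : N →ₗ[R] N') (g : N' →ₗ[R] N'') (j : ℕ) (e : ModuleExt R N'' M j) :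
    precomp M (g ∘ₗ f) j e = precomp M f j (precomp M g j e) := by
  simp

lemma postcomp_precomp (f : N →ₗ[R] N') (g : M →ₗ[R] M') (j : ℕ) (e : ModuleExt R N' M j) :
    postcomp N g j (precomp M f j e) = precomp M' f j (postcomp N' g j e) := by
  simp

lemma postcomp_id (j : ℕ) (e : ModuleExt R N M j) : postcomp N LinearMap.id j e = e := by
  simp

lemma precomp_id (j : ℕ) (e : ModuleExt R N M j) : precomp M LinearMap.id j e = e := by
  simp

lemma postcomp_smul (x : R) (f : M →ₗ[R] M') (j : ℕ) (e : ModuleExt R N M j) :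
    postcomp N (x • f) j e = x • postcomp N f j e := by
  change e.comp (Abelian.Ext.mk₀ (x • ModuleCat.ofHom f)) (add_zero j) = _
  rw [Abelian.Ext.mk₀_smul, Abelian.Ext.comp_smul]; rfl

lemma precomp_smul (x : R) (f : N →ₗ[R] N') (j : ℕ) (e : ModuleExt R N' M j) :
    precomp M (x • f) j e = x • precomp M f j e := by
  change (Abelian.Ext.mk₀ (x • ModuleCat.ofHom f)).comp e (zero_add j) = _
  rw [Abelian.Ext.mk₀_smul, Abelian.Ext.smul_comp]; rfl

lemma postcomp_add (f g : M →ₗ[R] M') (j : ℕ) (e : ModuleExt R N M j) :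
    postcomp N (f + g) j e = postcomp N f j e + postcomp N g j e := by
  change e.comp (Abelian.Ext.mk₀ (ModuleCat.ofHom f + ModuleCat.ofHom g)) (add_zero j) = _
  rw [Abelian.Ext.mk₀_add, Abelian.Ext.comp_add]; rfl

lemma postcomp_zero (j : ℕ) (e : ModuleExt R N M j) : postcomp N (0 : M →ₗ[R] M') j e = 0 := by
  simp

lemma precomp_zero (j : ℕ) (e : ModuleExt R N' M j) : precomp M (0 : N →ₗ[R] N') j e = 0 := by
  simp

section LongExactSequence

variable {f : M →ₗ[R] M'} {g : M' →ₗ[R] M''} (hf : Function.Injective f)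
  (hg : Function.Surjective g) (h : Function.Exact f g)

/-- The covariant connecting map `Ext^j(N, M'') → Ext^{j+1}(N, M)` of `0 → M → M' → M'' → 0`. -/
noncomputable def connecting (N : Type u) [AddCommGroup N] [Module R N] (j : ℕ) :
    ModuleExt R N M'' j →ₗ[R] ModuleExt R N M (j + 1) :=
  (shortExact_of_exact hf hg h).extClass.postcompOfLinear R _ rfl

/-- The contravariant connecting map `Ext^j(M, N) → Ext^{j+1}(M'', N)` of
`0 → M → M' → M'' → 0`. -/
noncomputable def coconnecting (N : Type u) [AddCommGroup N] [Module R N] (j : ℕ) :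
    ModuleExt R M N j →ₗ[R] ModuleExt R M'' N (j + 1) :=
  (shortExact_of_exact hf hg h).extClass.precompOfLinear R _ (add_comm 1 j)

include hf hg h in
lemma exact_postcomp_postcomp (j : ℕ) : Function.Exact (postcomp N f j) (postcomp N g j) := by
  refine fun e ↦ ⟨Abelian.Ext.covariant_sequence_exact₂ _ (shortExact_of_exact hf hg h) e, ?_⟩
  rintro ⟨e, rfl⟩
  rw [← postcomp_comp, h.linearMap_comp_eq_zero, postcomp_zero]

lemma exact_postcomp_connecting (j : ℕ) :
    Function.Exact (postcomp N g j) (connecting hf hg h N j) := by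
  refine fun e ↦ ⟨Abelian.Ext.covariant_sequence_exact₃ _ (shortExact_of_exact hf hg h) e rfl, ?_⟩
  rintro ⟨e, rfl⟩
  exact (e.comp_assoc_of_second_deg_zero _ _ _).trans
    ((congrArg (e.comp · rfl) (shortExact_of_exact hf hg h).comp_extClass).trans
      (e.comp_zero _ _ _ _))

lemma exact_connecting_postcomp (j : ℕ) :
    Function.Exact (connecting hf hg h N j) (postcomp N f (j + 1)) := by
  refine fun e ↦
    ⟨(Abelian.Ext.covariant_sequence_exact₁ _ (shortExact_of_exact hf hg h) e · rfl), ?_⟩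
  rintro ⟨e, rfl⟩
  exact (e.comp_assoc_of_third_deg_zero _ _ _).trans
    ((congrArg (e.comp · rfl) (shortExact_of_exact hf hg h).extClass_comp).trans
      (e.comp_zero _ _ _ _))

lemma exact_precomp_coconnecting (j : ℕ) :
    Function.Exact (precomp N f j) (coconnecting hf hg h N j) := by
  refine fun e ↦ ⟨Abelian.Ext.contravariant_sequence_exact₁ (shortExact_of_exact hf hg h) _ e
    (add_comm 1 j), ?_⟩
  rintro ⟨e, rfl⟩
  change (shortExact_of_exact hf hg h).extClass.comp
    ((Abelian.Ext.mk₀ (ModuleCat.ofHom f)).comp e (zero_add j)) (add_comm 1 j) = 0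
  rw [← Abelian.Ext.comp_assoc_of_second_deg_zero]
  erw [(shortExact_of_exact hf hg h).extClass_comp]
  simp only [Abelian.Ext.zero_comp]

lemma exact_coconnecting_precomp (j : ℕ) :
    Function.Exact (coconnecting hf hg h N j) (precomp N g (j + 1)) := by
  refine fun e ↦ ⟨(Abelian.Ext.contravariant_sequence_exact₃ (shortExact_of_exact hf hg h) _ e ·
    (add_comm 1 j)), ?_⟩
  rintro ⟨e, rfl⟩
  change (Abelian.Ext.mk₀ (ModuleCat.ofHom g)).comp
    ((shortExact_of_exact hf hg h).extClass.comp e (add_comm 1 j)) (zero_add _) = 0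
  rw [← Abelian.Ext.comp_assoc _ _ _ (zero_add 1) (add_comm 1 j) (by omega)]
  erw [(shortExact_of_exact hf hg h).comp_extClass]
  simp only [Abelian.Ext.zero_comp]

lemma precomp_connecting (F : N →ₗ[R] N') (j : ℕ) (e : ModuleExt R N' M'' j) :
    precomp M F (j + 1) (connecting hf hg h N' j e) =
      connecting hf hg h N j (precomp M'' F j e) :=
  (Abelian.Ext.comp_assoc _ _ _ (zero_add j) rfl (by omega)).symm

end LongExactSequence

instance subsingleton_of_projective [Module.Projective R N] (j : ℕ) :
    Subsingleton (ModuleExt R N M (j + 1)) :=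
  Abelian.Ext.subsingleton_of_projective _ _ _

instance subsingleton_of_injective [Module.Injective R M] (j : ℕ) :
    Subsingleton (ModuleExt R N M (j + 1)) :=
  have : Injective (ModuleCat.of R M) := Module.injective_object_of_injective_module ..
  ⟨fun a b ↦ by rw [a.eq_zero_of_injective, b.eq_zero_of_injective]⟩

/-- `Ext^0` is `Hom`. -/
noncomputable def zeroEquiv : ModuleExt R N M 0 ≃ₗ[R] (N →ₗ[R] M) :=
  Abelian.Ext.linearEquiv₀ (R := R) ≪≫ₗ ModuleCat.homLinearEquiv

lemma postcomp_zeroEquiv_symm (f : N →ₗ[R] M) (g : M →ₗ[R] M') :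
    postcomp N g 0 (zeroEquiv.symm f) = zeroEquiv.symm (g ∘ₗ f) :=
  Abelian.Ext.mk₀_comp_mk₀ _ _

lemma precomp_zeroEquiv_symm (f : N' →ₗ[R] M) (g : N →ₗ[R] N') :
    precomp M g 0 (zeroEquiv.symm f) = zeroEquiv.symm (f ∘ₗ g) :=
  Abelian.Ext.mk₀_comp_mk₀ _ _

end ModuleExt

end ModuleExt

section ExtComparison

variable {R : Type u} [CommRing R] {X X' : ModuleCat.{u} R}

/-- The complex `Hom(P, Y)` of a projective resolution `P`, as a chain complex in the opposite
category: this is the complex whose homology defines the derived functor `Ext`. -/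
noncomputable abbrev homComplex (P : ProjectiveResolution X) (Y : ModuleCat.{u} R) :
    HomologicalComplex (ModuleCat.{u} R)ᵒᵖ (ComplexShape.down ℕ) :=
  (((linearYoneda R (ModuleCat.{u} R)).obj Y).rightOp.mapHomologicalComplex _).obj P.complex

/-- The map `Hom(P, Y) → Hom(P', Y)` (written in the opposite category) induced by `P' → P`. -/
noncomputable abbrev homComplexMap {P : ProjectiveResolution X} {P' : ProjectiveResolution X'}
    (Y : ModuleCat.{u} R) (φ : P'.complex ⟶ P.complex) : homComplex P' Y ⟶ homComplex P Y :=
  (((linearYoneda R (ModuleCat.{u} R)).obj Y).rightOp.mapHomologicalComplex _).map φ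

/-- The module of `n`-cocycles of `Hom(P, Y)`. -/
noncomputable abbrev HomCocycles (P : ProjectiveResolution X) (Y : ModuleCat.{u} R) (n : ℕ) :
    ModuleCat.{u} R :=
  ((homComplex P Y).opcycles n).unop

/-- The value at `(X, Y)` of the functor `Ext^n` obtained by deriving `Hom`. -/
noncomputable abbrev DerivedExt (X Y : ModuleCat.{u} R) (n : ℕ) : ModuleCat.{u} R :=
  ((Ext R (ModuleCat.{u} R) n).obj (op X)).obj Y

namespace HomCocycles

variable (P : ProjectiveResolution X) (P' : ProjectiveResolution X') (Y : ModuleCat.{u} R) (n : ℕ)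

/-- The homomorphism `P_n → Y` underlying a cocycle. -/
noncomputable def hom : HomCocycles P Y n →ₗ[R] (P.complex.X n ⟶ Y) :=
  ((homComplex P Y).pOpcycles n).unop.hom

/-- The class of a cocycle in the derived functor `Ext`. -/
noncomputable def derivedClass : HomCocycles P Y n →ₗ[R] DerivedExt X Y n :=
  (((homComplex P Y).homologyι n).unop ≫
    (P.isoLeftDerivedObj ((linearYoneda R (ModuleCat.{u} R)).obj Y).rightOp n).hom.unop).hom

/-- The map on cocycles induced by a chain map between resolutions. -/
noncomputable def map (φ : P'.complex ⟶ P.complex) : HomCocycles P Y n →ₗ[R] HomCocycles P' Y n :=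
  (HomologicalComplex.opcyclesMap (homComplexMap Y φ) n).unop.hom

lemma hom_injective : Function.Injective (hom P Y n) :=
  (ModuleCat.mono_iff_injective ((homComplex P Y).pOpcycles n).unop).1 inferInstance

lemma derivedClass_surjective : Function.Surjective (derivedClass P Y n) :=
  ((ModuleCat.epi_iff_surjective
    (P.isoLeftDerivedObj ((linearYoneda R (ModuleCat.{u} R)).obj Y).rightOp n).hom.unop).1
      inferInstance).comp
    ((ModuleCat.epi_iff_surjective ((homComplex P Y).homologyι n).unop).1 inferInstance)

lemma mem_range_hom_iff (f : P.complex.X n ⟶ Y) :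
    f ∈ LinearMap.range (hom P Y n) ↔ P.complex.d (n + 1) n ≫ f = 0 :=
  have exact := ShortComplex.exact_of_g_is_cokernel
    (ShortComplex.mk _ _ ((homComplex P Y).d_pOpcycles (n + 1) n))
    ((homComplex P Y).opcyclesIsCokernel (n + 1) n (by simp))
  ((ShortComplex.ShortExact.moduleCat_exact_iff_function_exact _).1 exact.unop f).symm

lemma d_comp_hom (o : HomCocycles P Y n) : P.complex.d (n + 1) n ≫ hom P Y n o = 0 :=
  (mem_range_hom_iff P Y n _).1 ⟨o, rfl⟩

lemma derivedClass_eq_zero_iff (o : HomCocycles P Y n) :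
    derivedClass P Y n o = 0 ↔ ∃ g : P.complex.X ((ComplexShape.down ℕ).next n) ⟶ Y,
      P.complex.d n _ ≫ g = hom P Y n o := by
  have exact := ShortComplex.exact_of_f_is_kernel
    (ShortComplex.mk ((homComplex P Y).homologyι n)
      ((homComplex P Y).fromOpcycles n ((ComplexShape.down ℕ).next n)) (by simp))
    ((homComplex P Y).homologyIsKernel n _ rfl)
  have exact_at_o :=
    (ShortComplex.ShortExact.moduleCat_exact_iff_function_exact _).1 exact.unop o
  have iso_injective := (ModuleCat.mono_iff_injective
    (P.isoLeftDerivedObj ((linearYoneda R (ModuleCat.{u} R)).obj Y).rightOp n).hom.unop).1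
    inferInstance
  have class_eq_zero :
      derivedClass P Y n o = 0 ↔ ((homComplex P Y).homologyι n).unop.hom o = 0 :=
    map_eq_zero_iff _ iso_injective
  rw [class_eq_zero]
  refine exact_at_o.trans (exists_congr fun g ↦ ((hom_injective P Y n).eq_iff.symm.trans ?_))
  have d_eq := congrArg (fun f ↦ f.unop.hom g)
    ((homComplex P Y).p_fromOpcycles n ((ComplexShape.down ℕ).next n))
  exact Eq.congr d_eq rfl

end HomCocycles

variable (P : ProjectiveResolution X) (P' : ProjectiveResolution X') (Y : ModuleCat.{u} R) (n : ℕ)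

lemma eq_zero_of_extMk_zero_eq_zero (f : P.complex.X 0 ⟶ Y) (hf : P.complex.d 1 0 ≫ f = 0)
    (h : P.extMk f 1 rfl hf = 0) : f = 0 := by
  rw [← P.extEquivCohomologyClass.apply_eq_iff_eq,
    ProjectiveResolution.extEquivCohomologyClass_extMk,
    ProjectiveResolution.extEquivCohomologyClass_zero,
    CochainComplex.HomComplex.CohomologyClass.mk_eq_zero_iff,
    CochainComplex.HomComplex.Cocycle.toSingleMk_mem_coboundaries_iff _ _ _ _ _ 1 (by simp)] at h
  obtain ⟨g, hg⟩ := h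
  have d_eq_zero : P.cochainComplex.d (-((0 : ℕ) : ℤ)) 1 = 0 :=
    (P.cochainComplex.isZero_of_isStrictlyLE 0 1 (by omega)).eq_of_tgt _ _
  rw [d_eq_zero, Limits.zero_comp] at hg
  rw [← cancel_epi (P.cochainComplexXIso (-((0 : ℕ) : ℤ)) 0 rfl).hom, ← hg, Limits.comp_zero]

-- `next 0 = 0` in `ComplexShape.down ℕ`, where the differential vanishes.
lemma extMk_eq_zero_iff_exists (f : P.complex.X n ⟶ Y) (hf : P.complex.d (n + 1) n ≫ f = 0) :
    P.extMk f (n + 1) rfl hf = 0 ↔ ∃ g : P.complex.X ((ComplexShape.down ℕ).next n) ⟶ Y,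
      P.complex.d n _ ≫ g = f := by
  rcases n with _ | n
  · constructor
    · intro h
      exact ⟨0, by rw [eq_zero_of_extMk_zero_eq_zero P Y f hf h, Limits.comp_zero]⟩
    · rintro ⟨g, rfl⟩
      simp
  · rw [P.extMk_eq_zero_iff f (n + 1 + 1) rfl hf n rfl, ChainComplex.next_nat_succ]

namespace HomCocycles

/-- The class of a cocycle in `Abelian.Ext`. -/
noncomputable def abelianClass : HomCocycles P Y n →ₗ[R] Abelian.Ext.{u} X Y n where
  toFun o := P.extMk (hom P Y n o) (n + 1) rfl (d_comp_hom P Y n o)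
  map_add' a b := by
    rw [P.add_extMk]; congr 1; exact map_add _ _ _
  map_smul' r a := by
    rw [RingHom.id_apply, Abelian.Ext.smul_eq_comp_mk₀, P.extMk_comp_mk₀]
    congr 1; simp

lemma abelianClass_surjective : Function.Surjective (abelianClass P Y n) := by
  intro α
  obtain ⟨f, hf, rfl⟩ := P.extMk_surjective α (n + 1) rfl
  obtain ⟨o, rfl⟩ := (mem_range_hom_iff P Y n f).2 hf
  exact ⟨o, rfl⟩

lemma ker_derivedClass :
    LinearMap.ker (derivedClass P Y n) = LinearMap.ker (abelianClass P Y n) := by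
  ext o
  rw [LinearMap.mem_ker, LinearMap.mem_ker, derivedClass_eq_zero_iff]
  exact (extMk_eq_zero_iff_exists P Y n _ (d_comp_hom P Y n o)).symm

lemma hom_map (φ : P'.complex ⟶ P.complex) (o : HomCocycles P Y n) :
    hom P' Y n (map P P' Y n φ o) = φ.f n ≫ hom P Y n o :=
  congrArg (fun f ↦ f.unop.hom o) (HomologicalComplex.p_opcyclesMap (homComplexMap Y φ) n)

lemma derivedClass_map (g : X' ⟶ X) (φ : P'.complex ⟶ P.complex)
    (comm : φ.f 0 ≫ P.π.f 0 = P'.π.f 0 ≫ g) (o : HomCocycles P Y n) :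
    derivedClass P' Y n (map P P' Y n φ o) =
      (((Ext R (ModuleCat.{u} R) n).map g.op).app Y).hom (derivedClass P Y n o) := by
  have naturality : (((linearYoneda R (ModuleCat.{u} R)).obj Y).rightOp.leftDerived n).map g ≫
        (P.isoLeftDerivedObj _ n).hom ≫ (homComplex P Y).homologyι n =
      (P'.isoLeftDerivedObj _ n).hom ≫ (homComplex P' Y).homologyι n ≫
        HomologicalComplex.opcyclesMap (homComplexMap Y φ) n :=
    (Category.assoc _ _ _).symm.trans
      ((congrArg (· ≫ (homComplex P Y).homologyι n)
          (ProjectiveResolution.isoLeftDerivedObj_hom_naturality g P' P φ comm _ n)).trans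
        ((Category.assoc _ _ _).trans
          (congrArg ((P'.isoLeftDerivedObj _ n).hom ≫ ·)
            (HomologicalComplex.homologyι_naturality (homComplexMap Y φ) n))))
  exact (congrArg (fun f ↦ f.unop.hom o) naturality).symm

end HomCocycles

open HomCocycles

/-- The derived functor `Ext` agrees with `Abelian.Ext`. -/
noncomputable def derivedExtEquiv : DerivedExt X Y n ≃ₗ[R] Abelian.Ext.{u} X Y n :=
  ((derivedClass P Y n).quotKerEquivOfSurjective (derivedClass_surjective P Y n)).symm ≪≫ₗ
    Submodule.quotEquivOfEq _ _ (ker_derivedClass P Y n) ≪≫ₗ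
    (abelianClass P Y n).quotKerEquivOfSurjective (abelianClass_surjective P Y n)

lemma derivedExtEquiv_derivedClass (o : HomCocycles P Y n) :
    derivedExtEquiv P Y n (derivedClass P Y n o) = abelianClass P Y n o := by
  have symm_apply : ((derivedClass P Y n).quotKerEquivOfSurjective
      (derivedClass_surjective P Y n)).symm (derivedClass P Y n o) = Submodule.Quotient.mk o := by
    rw [LinearEquiv.symm_apply_eq]; rfl
  simp only [derivedExtEquiv, LinearEquiv.trans_apply, symm_apply]
  rfl

lemma derivedExtEquiv_map (g : X' ⟶ X) (z : DerivedExt X Y n) :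
    derivedExtEquiv P' Y n ((((Ext R (ModuleCat.{u} R) n).map g.op).app Y).hom z) =
      (Abelian.Ext.mk₀ g).comp (derivedExtEquiv P Y n z) (zero_add n) := by
  obtain ⟨o, rfl⟩ := derivedClass_surjective P Y n z
  have comm := ProjectiveResolution.lift_commutes_zero g P' P
  let φ : ProjectiveResolution.Hom P' P g := ⟨ProjectiveResolution.lift g P' P, comm⟩
  rw [← derivedClass_map P P' Y n g φ.hom comm, derivedExtEquiv_derivedClass,
    derivedExtEquiv_derivedClass]
  refine Eq.trans ?_ (P.mk₀_comp_extMk (hom P Y n o) (n + 1) rfl (d_comp_hom P Y n o) φ).symm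
  change P'.extMk (hom P' Y n (map P P' Y n φ.hom o)) (n + 1) rfl (d_comp_hom P' Y n _) = _
  congr 1
  exact hom_map P P' Y n φ.hom o

end ExtComparison

section ExtLimit

variable {R : Type u} [CommRing R]

namespace ModuleExt

/-- The transition map `Ext^i(R ⧸ I ^ n, M) → Ext^i(R ⧸ I ^ m, M)` for `n ≤ m`. -/
noncomputable def transition (I : Ideal R) (M : Type u) [AddCommGroup M] [Module R M] (i : ℕ)
    {n m : ℕ} (h : n ≤ m) : ModuleExt R (R ⧸ I ^ n) M i →ₗ[R] ModuleExt R (R ⧸ I ^ m) M i :=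
  precomp M (Submodule.factor (Ideal.pow_le_pow_right h)) i

variable (I : Ideal R) {M M' M'' : Type u} [AddCommGroup M] [Module R M] [AddCommGroup M']
  [Module R M'] [AddCommGroup M''] [Module R M'']

lemma transition_self (i n : ℕ) (e : ModuleExt R (R ⧸ I ^ n) M i) :
    transition I M i le_rfl e = e := by
  have factor_eq_id : Submodule.factor (le_refl (I ^ n)) = LinearMap.id :=
    Submodule.linearMap_qext _ rfl
  exact (congrArg (precomp M · i e) factor_eq_id).trans (precomp_id i e)

lemma transition_transition (i : ℕ) {n m k : ℕ} (h : n ≤ m) (h' : m ≤ k)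
    (e : ModuleExt R (R ⧸ I ^ n) M i) :
    transition I M i h' (transition I M i h e) = transition I M i (h.trans h') e :=
  (precomp_comp _ _ i e).symm.trans
    (congrArg (precomp M · i e) (Submodule.factor_comp _ _))

lemma postcomp_transition (f : M →ₗ[R] M') (i : ℕ) {n m : ℕ} (h : n ≤ m)
    (e : ModuleExt R (R ⧸ I ^ n) M i) :
    postcomp _ f i (transition I M i h e) = transition I M' i h (postcomp _ f i e) :=
  postcomp_precomp _ _ _ _

lemma transition_connecting {f : M →ₗ[R] M'} {g : M' →ₗ[R] M''} (hf : Function.Injective f)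
    (hg : Function.Surjective g) (hfg : Function.Exact f g) (i : ℕ) {n m : ℕ} (h : n ≤ m)
    (e : ModuleExt R (R ⧸ I ^ n) M'' i) :
    transition I M (i + 1) h (connecting hf hg hfg _ i e) =
      connecting hf hg hfg _ i (transition I M'' i h e) :=
  precomp_connecting _ _ _ _ _ _

instance directedSystem (i : ℕ) : DirectedSystem (fun n : ℕ ↦ ModuleExt R (R ⧸ I ^ n) M i)
    fun _ _ h ↦ transition I M i h where
  map_self n e := transition_self I i n e
  map_map _ _ _ h h' e := transition_transition I i h h' e

end ModuleExt

open ModuleExt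

/-- The direct limit of `Ext^i(R ⧸ I ^ n, M)` over `n`, which computes local cohomology. -/
abbrev ExtLimit (I : Ideal R) (M : Type u) [AddCommGroup M] [Module R M] (i : ℕ) : Type u :=
  Module.DirectLimit (fun n : ℕ ↦ ModuleExt R (R ⧸ I ^ n) M i) fun _ _ h ↦ transition I M i h

variable (I : Ideal R) (M : Type u) [AddCommGroup M] [Module R M] (i : ℕ)

namespace ExtLimit

/-- The canonical map from `Ext^i(R ⧸ I ^ n, M)` to the direct limit. -/
noncomputable abbrev of (n : ℕ) : ModuleExt R (R ⧸ I ^ n) M i →ₗ[R] ExtLimit I M i :=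
  Module.DirectLimit.of R ℕ (fun n : ℕ ↦ ModuleExt R (R ⧸ I ^ n) M i)
    (fun _ _ h ↦ transition I M i h) n

variable {I M i}

lemma of_eq_zero_of_transition_eq_zero {n m : ℕ} (h : n ≤ m) {e : ModuleExt R (R ⧸ I ^ n) M i}
    (he : transition I M i h e = 0) : of I M i n e = 0 := by
  have of_transition : of I M i m (transition I M i h e) = of I M i n e := Module.DirectLimit.of_f
  rw [← of_transition, he, map_zero]

/-- The powers of `I` as the index diagram of local cohomology. -/
noncomputable abbrev diagram (I : Ideal R) (i : ℕ) : (ℕᵒᵖ)ᵒᵖ ⥤ ModuleCat.{u} R ⥤ ModuleCat.{u} R :=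
  localCohomology.diagram (localCohomology.idealPowersDiagram I) i

/-- The cocone exhibiting `H_I^i(M)` as a colimit of modules. -/
noncomputable def cocone (I : Ideal R) (i : ℕ) (M : ModuleCat.{u} R) :
    Limits.Cocone (diagram I i ⋙ (evaluation _ _).obj M) :=
  ((evaluation _ _).obj M).mapCocone (Limits.colimit.cocone (diagram I i))

/-- `cocone` is a colimit because evaluation of functors preserves colimits. -/
noncomputable def coconeIsColimit (I : Ideal R) (i : ℕ) (M : ModuleCat.{u} R) :
    Limits.IsColimit (cocone I i M) :=
  Limits.isColimitOfPreserves _ (Limits.colimit.isColimit (diagram I i))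

/-- The comparison of the two versions of `Ext^i(R ⧸ I ^ n, M)`. -/
noncomputable def comparison (I : Ideal R) (M : Type u) [AddCommGroup M] [Module R M] (i n : ℕ) :
    DerivedExt (ModuleCat.of R (R ⧸ I ^ n)) (ModuleCat.of R M) i ≃ₗ[R]
      ModuleExt R (R ⧸ I ^ n) M i :=
  derivedExtEquiv (projectiveResolution _) (ModuleCat.of R M) i

/-- The map from `Ext^i(R ⧸ I ^ n, M)` to `H_I^i(M)`. -/
noncomputable def toLocalCohomology (I : Ideal R) (M : Type u) [AddCommGroup M] [Module R M]
    (i n : ℕ) : ModuleExt R (R ⧸ I ^ n) M i →ₗ[R] (localCohomology I i).obj (ModuleCat.of R M) :=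
  ((cocone I i (ModuleCat.of R M)).ι.app (op (op n))).hom ∘ₗ (comparison I M i n).symm.toLinearMap

lemma diagram_map_comparison_symm {n m : ℕ} (f : (op (op n) : (ℕᵒᵖ)ᵒᵖ) ⟶ op (op m)) (h : n ≤ m)
    (e : ModuleExt R (R ⧸ I ^ n) M i) :
    ((diagram I i ⋙ (evaluation _ _).obj (ModuleCat.of R M)).map f).hom
        ((comparison I M i n).symm e) =
      (comparison I M i m).symm (transition I M i h e) := by
  refine (LinearEquiv.eq_symm_apply _).2 ?_
  have natural := derivedExtEquiv_map (projectiveResolution _)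
    (projectiveResolution (ModuleCat.of R (R ⧸ I ^ m))) (ModuleCat.of R M) i
    (ModuleCat.ofHom (Submodule.factor (Ideal.pow_le_pow_right h))) ((comparison I M i n).symm e)
  exact natural.trans (congrArg (precomp M _ i) ((comparison I M i n).apply_symm_apply e))

lemma toLocalCohomology_transition {n m : ℕ} (h : n ≤ m) (e : ModuleExt R (R ⧸ I ^ n) M i) :
    toLocalCohomology I M i m (transition I M i h e) = toLocalCohomology I M i n e := by
  let f : (op (op n) : (ℕᵒᵖ)ᵒᵖ) ⟶ op (op m) := (homOfLE h).op.op
  have w := congrArg (fun t ↦ t.hom ((comparison I M i n).symm e))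
    ((cocone I i (ModuleCat.of R M)).w f)
  exact (congrArg ((cocone I i (ModuleCat.of R M)).ι.app (op (op m))).hom
    (diagram_map_comparison_symm f h e).symm).trans w

lemma exists_transition_eq_zero {n : ℕ} {e : ModuleExt R (R ⧸ I ^ n) M i}
    (he : toLocalCohomology I M i n e = 0) :
    ∃ (m : ℕ) (h : n ≤ m), transition I M i h e = 0 := by
  have ι_eq : ((cocone I i (ModuleCat.of R M)).ι.app (op (op n))).hom
      ((comparison I M i n).symm e) =
      ((cocone I i (ModuleCat.of R M)).ι.app (op (op n))).hom 0 := by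
    rw [map_zero]; exact he
  have := Limits.preservesSmallestFilteredColimits_of_preservesFilteredColimits
    (forget (ModuleCat.{u} R))
  obtain ⟨⟨⟨k⟩⟩, f, g, hfg⟩ := Limits.Concrete.isColimit_exists_of_rep_eq _
    (coconeIsColimit I i (ModuleCat.of R M)) _ _ ι_eq
  have hk : n ≤ k := leOfHom f.unop.unop
  exact ⟨k, hk, (LinearEquiv.map_eq_zero_iff _).1
    ((diagram_map_comparison_symm f hk e).symm.trans (hfg.trans (map_zero _)))⟩

lemma exists_toLocalCohomology_eq (z : (localCohomology I i).obj (ModuleCat.of R M)) :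
    ∃ (n : ℕ) (e : ModuleExt R (R ⧸ I ^ n) M i), toLocalCohomology I M i n e = z := by
  have := Limits.preservesSmallestFilteredColimits_of_preservesFilteredColimits
    (forget (ModuleCat.{u} R))
  obtain ⟨⟨⟨n⟩⟩, y, hy⟩ := Limits.Concrete.isColimit_exists_rep _
    (coconeIsColimit I i (ModuleCat.of R M)) z
  refine ⟨n, comparison I M i n y, Eq.trans ?_ hy⟩
  exact congrArg ((cocone I i (ModuleCat.of R M)).ι.app (op (op n))).hom
    ((comparison I M i n).symm_apply_apply y)

variable (I M i) in
/-- Local cohomology as the direct limit of the modules `Ext^i(R ⧸ I ^ n, M)`. -/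
noncomputable def equivLocalCohomology :
    ExtLimit I M i ≃ₗ[R] (localCohomology I i).obj (ModuleCat.of R M) := by
  refine LinearEquiv.ofBijective (Module.DirectLimit.lift R ℕ _ _ (toLocalCohomology I M i)
    fun _ _ h e ↦ toLocalCohomology_transition h e) ⟨?_, fun z ↦ ?_⟩
  · rw [injective_iff_map_eq_zero]
    intro z hz
    obtain ⟨n, e, rfl⟩ := Module.DirectLimit.exists_of z
    rw [Module.DirectLimit.lift_of] at hz
    obtain ⟨m, h, hm⟩ := exists_transition_eq_zero hz
    exact of_eq_zero_of_transition_eq_zero h hm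
  · obtain ⟨n, e, rfl⟩ := exists_toLocalCohomology_eq z
    exact ⟨of I M i n e, Module.DirectLimit.lift_of ..⟩

-- The hypotheses say that `φ` is an isomorphism of ind-objects.
lemma nonempty_equiv_of_map {A B : Type u} [AddCommGroup A] [Module R A] [AddCommGroup B]
    [Module R B] {i j : ℕ}
    (φ : ∀ n, ModuleExt R (R ⧸ I ^ n) A i →ₗ[R] ModuleExt R (R ⧸ I ^ n) B j)
    (comm : ∀ n m (h : n ≤ m) e, φ m (transition I A i h e) = transition I B j h (φ n e))
    (inj : ∀ n e, φ n e = 0 → ∃ (m : ℕ) (h : n ≤ m), transition I A i h e = 0)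
    (surj : ∀ n e', ∃ (m : ℕ) (h : n ≤ m) (e : _), φ m e = transition I B j h e') :
    Nonempty (ExtLimit I A i ≃ₗ[R] ExtLimit I B j) := by
  refine ⟨LinearEquiv.ofBijective
    (Module.DirectLimit.map φ fun n m h ↦ LinearMap.ext (comm n m h)) ⟨?_, fun z ↦ ?_⟩⟩
  · rw [injective_iff_map_eq_zero]
    intro z hz
    obtain ⟨n, e, rfl⟩ := Module.DirectLimit.exists_of z
    rw [Module.DirectLimit.map_apply_of] at hz
    obtain ⟨m, hm, hφe⟩ := Module.DirectLimit.of.zero_exact hz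
    obtain ⟨k, hk, he⟩ := inj m _ ((comm n m hm e).trans hφe)
    rw [transition_transition] at he
    exact of_eq_zero_of_transition_eq_zero (hm.trans hk) he
  · obtain ⟨n, e', rfl⟩ := Module.DirectLimit.exists_of z
    obtain ⟨m, h, e, he⟩ := surj n e'
    refine ⟨of I A i m e, ?_⟩
    rw [Module.DirectLimit.map_apply_of, he]
    exact Module.DirectLimit.of_f

end ExtLimit

end ExtLimit

section IdealTorsion

variable {R : Type u} [CommRing R]

/-- The submodule `Γ_I(M)` of elements killed by a power of `I`. -/
def idealTorsion (I : Ideal R) (M : Type u) [AddCommGroup M] [Module R M] : Submodule R M where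
  carrier := {m | ∃ n : ℕ, ∀ a ∈ I ^ n, a • m = 0}
  zero_mem' := ⟨0, by simp⟩
  add_mem' := by
    rintro x y ⟨n, hn⟩ ⟨m, hm⟩
    refine ⟨max n m, fun a ha ↦ ?_⟩
    rw [smul_add, hn a (Ideal.pow_le_pow_right (le_max_left _ _) ha),
      hm a (Ideal.pow_le_pow_right (le_max_right _ _) ha), add_zero]
  smul_mem' := by
    rintro r x ⟨n, hn⟩
    exact ⟨n, fun a ha ↦ by rw [smul_comm, hn a ha, smul_zero]⟩

variable {I : Ideal R} {M N : Type u} [AddCommGroup M] [Module R M] [AddCommGroup N] [Module R N]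

lemma map_mem_idealTorsion (f : M →ₗ[R] N) {m : M} (hm : m ∈ idealTorsion I M) :
    f m ∈ idealTorsion I N := by
  obtain ⟨n, hn⟩ := hm
  exact ⟨n, fun a ha ↦ by rw [← map_smul, hn a ha, map_zero]⟩

lemma idealTorsion_idealTorsion : idealTorsion I (idealTorsion I M) = ⊤ :=
  eq_top_iff.2 fun ⟨_, n, hn⟩ _ ↦ ⟨n, fun a ha ↦ Subtype.ext (hn a ha)⟩

lemma idealTorsion_eq_top_of_surjective (h : idealTorsion I M = ⊤) (f : M →ₗ[R] N)
    (hf : Function.Surjective f) : idealTorsion I N = ⊤ := by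
  refine eq_top_iff.2 fun y _ ↦ ?_
  obtain ⟨m, rfl⟩ := hf y
  exact map_mem_idealTorsion f (h ▸ Submodule.mem_top)

lemma exists_pow_le_annihilator [Module.Finite R M] (h : idealTorsion I M = ⊤) :
    ∃ n, I ^ n ≤ Module.annihilator R M := by
  obtain ⟨s, hs⟩ := Module.finite_def.1 ‹Module.Finite R M›
  have torsion : ∀ m : M, ∃ n : ℕ, ∀ a ∈ I ^ n, a • m = 0 := fun m ↦
    (h ▸ Submodule.mem_top : m ∈ idealTorsion I M)
  choose n hn using torsion
  refine ⟨s.sup n, fun a ha ↦ ?_⟩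
  have s_le_ker : (s : Set M) ⊆ LinearMap.ker (LinearMap.lsmul R M a) := fun m hm ↦
    hn m a (Ideal.pow_le_pow_right (Finset.le_sup hm) ha)
  rw [Module.mem_annihilator]
  exact fun m ↦ Submodule.span_le.2 s_le_ker (hs ▸ Submodule.mem_top)

lemma exists_map_eq_zero_of_mem_pow_smul [IsNoetherianRing R] [Module.Finite R M]
    {J : Submodule R M} (g : J →ₗ[R] N) (hN : idealTorsion I N = ⊤) :
    ∃ k, ∀ x : J, (x : M) ∈ I ^ k • (⊤ : Submodule R M) → g x = 0 := by
  obtain ⟨n, hn⟩ := exists_pow_le_annihilator (I := I) (M := LinearMap.range g)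
    (eq_top_iff.2 fun ⟨y, _⟩ _ ↦ by
      obtain ⟨n, hn⟩ : y ∈ idealTorsion I N := hN ▸ Submodule.mem_top
      exact ⟨n, fun a ha ↦ Subtype.ext (hn a ha)⟩)
  have pow_smul_le_ker : I ^ n • (⊤ : Submodule R J) ≤ LinearMap.ker g :=
    Submodule.smul_le.2 fun a ha x _ ↦ by
      rw [LinearMap.mem_ker, map_smul]
      exact congrArg Subtype.val
        (Module.mem_annihilator.1 (hn ha) (⟨g x, LinearMap.mem_range_self g x⟩))
  obtain ⟨k, artin_rees⟩ := I.exists_pow_inf_eq_pow_smul J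
  refine ⟨n + k, fun x hx ↦ ?_⟩
  have hx' : (x : M) ∈ I ^ (n + k) • (⊤ : Submodule R M) ⊓ J := ⟨hx, x.2⟩
  rw [artin_rees (n + k) (Nat.le_add_left k n), Nat.add_sub_cancel] at hx'
  have hx'' : (x : M) ∈ (I ^ n • (⊤ : Submodule R J)).map J.subtype := by
    rw [Submodule.map_smul'', Submodule.map_subtype_top]
    exact Submodule.smul_mono le_rfl inf_le_right hx'
  obtain ⟨z, hz, hzx⟩ := hx''
  rw [← Subtype.ext (a1 := z) (a2 := x) hzx]
  exact pow_smul_le_ker hz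

-- By Artin–Rees, a map `J → Γ_I(E)` factors through `J ⧸ J ∩ I ^ k ⊆ R ⧸ I ^ k`, and any extension
-- of it to a map `R ⧸ I ^ k → E` again has values in `Γ_I(E)`.
lemma injective_idealTorsion [IsNoetherianRing R] [Module.Injective R M] :
    Module.Injective R (idealTorsion I M) := by
  apply Module.Baer.injective
  intro J g
  obtain ⟨k, hk⟩ := exists_map_eq_zero_of_mem_pow_smul (J := (J : Submodule R R)) g
    idealTorsion_idealTorsion
  let K : Submodule R J := Submodule.comap J.subtype (I ^ k)
  let ι : (J ⧸ K) →ₗ[R] (R ⧸ I ^ k) := Submodule.mapQ K _ J.subtype le_rfl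
  have ι_injective : Function.Injective ι := by
    rw [← LinearMap.ker_eq_bot, Submodule.ker_mapQ, eq_bot_iff, Submodule.map_le_iff_le_comap]
    exact fun x hx ↦ (Submodule.Quotient.mk_eq_zero K).2 hx
  let g' : (J ⧸ K) →ₗ[R] M := K.liftQ ((idealTorsion I M).subtype ∘ₗ g) fun x hx ↦ by
    rw [LinearMap.mem_ker, LinearMap.comp_apply, hk x (by simpa [K] using hx), map_zero]
  obtain ⟨h, hh⟩ := Module.Baer.of_injective ‹_› |>.extension_property ι ι_injective g'
  let φ : R →ₗ[R] M := h ∘ₗ Submodule.mkQ (I ^ k)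
  have φ_mem : ∀ r, φ r ∈ idealTorsion I M := fun r ↦ by
    refine ⟨k, fun a ha ↦ ?_⟩
    have mk_eq_zero : Submodule.mkQ (I ^ k) (a • r) = 0 :=
      (Submodule.Quotient.mk_eq_zero _).2 (Ideal.mul_mem_right r _ ha)
    rw [← map_smul, LinearMap.comp_apply, mk_eq_zero, map_zero]
  exact ⟨φ.codRestrict _ φ_mem, fun x hx ↦
    Subtype.ext (LinearMap.congr_fun hh (Submodule.Quotient.mk ⟨x, hx⟩))⟩

end IdealTorsion

section LocalCohomologyInduction

open ModuleExt

variable {R : Type u} [CommRing R] {I : Ideal R} {M N : Type u} [AddCommGroup M] [Module R M]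
  [AddCommGroup N] [Module R N]

lemma exists_injective_embedding (R : Type u) [CommRing R] (M : Type u) [AddCommGroup M]
    [Module R M] :
    ∃ (E : Type u) (_ : AddCommGroup E) (_ : Module R E) (f : M →ₗ[R] E),
      Module.Injective R E ∧ Function.Injective f := by
  have : Injective (Injective.under (ModuleCat.of R M)) := inferInstance
  exact ⟨(Injective.under (ModuleCat.of R M) : ModuleCat R), inferInstance, inferInstance,
    (Injective.ι (ModuleCat.of R M)).hom, Module.injective_module_of_injective_object ..,
    (ModuleCat.mono_iff_injective _).1 inferInstance⟩

lemma exists_injective_torsion_embedding [IsNoetherianRing R] (hM : idealTorsion I M = ⊤) :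
    ∃ (E : Type u) (_ : AddCommGroup E) (_ : Module R E) (f : M →ₗ[R] E),
      Module.Injective R E ∧ idealTorsion I E = ⊤ ∧ Function.Injective f := by
  obtain ⟨E, _, _, f, _, hf⟩ := exists_injective_embedding R M
  exact ⟨idealTorsion I E, inferInstance, inferInstance,
    f.codRestrict _ fun m ↦ map_mem_idealTorsion f (hM ▸ Submodule.mem_top),
    injective_idealTorsion, idealTorsion_idealTorsion, fun a b hab ↦ hf (congrArg Subtype.val hab)⟩

lemma exists_comp_factor_eq_mkQ_comp {A : Submodule R N} (hN : idealTorsion I N = ⊤) {n : ℕ}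
    (φ : (R ⧸ I ^ n) →ₗ[R] N ⧸ A) :
    ∃ (m : ℕ) (h : n ≤ m) (ψ : (R ⧸ I ^ m) →ₗ[R] N),
      φ ∘ₗ Submodule.factor (Ideal.pow_le_pow_right h) = A.mkQ ∘ₗ ψ := by
  obtain ⟨y, hy⟩ := A.mkQ_surjective (φ (Submodule.Quotient.mk 1))
  obtain ⟨k, hk⟩ : y ∈ idealTorsion I N := hN ▸ Submodule.mem_top
  refine ⟨max n k, le_max_left n k, Submodule.liftQ _ (LinearMap.toSpanSingleton R _ y)
    fun a ha ↦ hk a (Ideal.pow_le_pow_right (le_max_right n k) ha), ?_⟩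
  refine Submodule.linearMap_qext _ (LinearMap.ext_ring ?_)
  change φ (Submodule.Quotient.mk 1) = A.mkQ ((1 : R) • y)
  rw [one_smul, hy]

lemma exists_transition_eq_zero_of_idealTorsion_eq_top [IsNoetherianRing R]
    (hM : idealTorsion I M = ⊤) (i n : ℕ) (e : ModuleExt R (R ⧸ I ^ n) M (i + 1)) :
    ∃ (m : ℕ) (h : n ≤ m), transition I M (i + 1) h e = 0 := by
  induction i generalizing M with
  | zero =>
    obtain ⟨E, _, _, f, _, hE, hf⟩ := exists_injective_torsion_embedding hM
    have mkQ_surjective := Submodule.mkQ_surjective (LinearMap.range f)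
    have exact := LinearMap.exact_map_mkQ_range f
    obtain ⟨e, rfl⟩ := (exact_connecting_postcomp hf mkQ_surjective exact 0 e).1
      (Subsingleton.elim _ _)
    obtain ⟨φ, rfl⟩ := zeroEquiv.symm.surjective e
    obtain ⟨m, h, ψ, hψ⟩ := exists_comp_factor_eq_mkQ_comp hE φ
    refine ⟨m, h, ?_⟩
    rw [transition_connecting, transition, precomp_zeroEquiv_symm, hψ, ← postcomp_zeroEquiv_symm]
    exact (exact_postcomp_connecting hf mkQ_surjective exact 0 _).2 ⟨_, rfl⟩
  | succ i ih =>
    obtain ⟨E, _, _, f, _, hE, hf⟩ := exists_injective_torsion_embedding hM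
    have mkQ_surjective := Submodule.mkQ_surjective (LinearMap.range f)
    obtain ⟨e, rfl⟩ := (exact_connecting_postcomp hf mkQ_surjective
      (LinearMap.exact_map_mkQ_range f) (i + 1) e).1 (Subsingleton.elim _ _)
    obtain ⟨m, h, he⟩ := ih (idealTorsion_eq_top_of_surjective hE _ mkQ_surjective) e
    exact ⟨m, h, by rw [transition_connecting, he, map_zero]⟩

namespace ModuleExt

lemma subsingleton_pi {ι : Type} [Finite ι] (L : ι → Type u) [∀ j, AddCommGroup (L j)]
    [∀ j, Module R (L j)] (i : ℕ) (h : ∀ j, Subsingleton (ModuleExt R N (L j) i)) :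
    Subsingleton (ModuleExt R N (∀ j, L j) i) := by
  classical
  have := Fintype.ofFinite ι
  refine subsingleton_of_forall_eq 0 fun e ↦ ?_
  let act : ((∀ j, L j) →ₗ[R] ∀ j, L j) →+ ModuleExt R N (∀ j, L j) i :=
    AddMonoidHom.mk' (fun f ↦ postcomp N f i e) fun f g ↦ postcomp_add f g i e
  have id_eq_sum : (LinearMap.id : (∀ j, L j) →ₗ[R] _) =
      ∑ j, LinearMap.single R L j ∘ₗ LinearMap.proj j := by
    refine LinearMap.ext fun x ↦ ?_
    rw [LinearMap.sum_apply]
    exact (Finset.univ_sum_single x).symm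
  calc e = act LinearMap.id := (postcomp_id i e).symm
    _ = ∑ j, act (LinearMap.single R L j ∘ₗ LinearMap.proj j) := by rw [id_eq_sum, map_sum]
    _ = 0 := Finset.sum_eq_zero fun j _ ↦ (postcomp_comp _ _ i e).trans <| by
      rw [(h j).elim (postcomp N (LinearMap.proj j) i e) 0, map_zero]

lemma subsingleton_of_smul {x : R} (hN : ∀ y : N, x • y = 0)
    (hM : Function.Bijective fun m : M ↦ x • m) (i : ℕ) : Subsingleton (ModuleExt R N M i) := by
  let g : M ≃ₗ[R] M := LinearEquiv.ofBijective (x • LinearMap.id) hM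
  have smul_eq_zero (e : ModuleExt R N M i) : x • e = 0 := by
    have smul_id : x • (LinearMap.id : N →ₗ[R] N) = 0 := LinearMap.ext hN
    rw [← precomp_id i e, ← precomp_smul, smul_id, precomp_zero]
  have postcomp_eq_smul (e : ModuleExt R N M i) : postcomp N g.toLinearMap i e = x • e := by
    rw [← postcomp_id i e, ← postcomp_comp, ← postcomp_smul]; rfl
  refine subsingleton_of_forall_eq 0 fun e ↦ ?_
  rw [← postcomp_id i e, ← g.symm_comp, postcomp_comp, postcomp_eq_smul, smul_eq_zero, map_zero]

end ModuleExt

/-- The map from `M` to the product of the localizations of `M` at the elements `f j`. -/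
noncomputable def toLocalizations {ι : Type} (f : ι → R) (M : Type u) [AddCommGroup M]
    [Module R M] : M →ₗ[R] ∀ j, LocalizedModule (Submonoid.powers (f j)) M :=
  LinearMap.pi fun j ↦ LocalizedModule.mkLinearMap (Submonoid.powers (f j)) M

lemma mem_ker_toLocalizations {ι : Type} (f : ι → R) (m : M) :
    m ∈ LinearMap.ker (toLocalizations f M) ↔ ∀ j, ∃ n : ℕ, f j ^ n • m = 0 := by
  rw [LinearMap.mem_ker, funext_iff]
  refine forall_congr' fun j ↦ ?_
  change LocalizedModule.mkLinearMap (Submonoid.powers (f j)) M m = 0 ↔ _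
  rw [IsLocalizedModule.eq_zero_iff (Submonoid.powers (f j))]
  exact ⟨by rintro ⟨⟨_, n, rfl⟩, h⟩; exact ⟨n, h⟩, fun ⟨n, h⟩ ↦ ⟨⟨_, n, rfl⟩, h⟩⟩

lemma ker_toLocalizations {ι : Type} [Finite ι] (f : ι → R) (M : Type u) [AddCommGroup M]
    [Module R M] :
    LinearMap.ker (toLocalizations f M) = idealTorsion (Ideal.span (Set.range f)) M := by
  ext m
  rw [mem_ker_toLocalizations]
  constructor
  · intro h
    have span_le : Ideal.span (Set.range f) ≤ (Ideal.torsionOf R M m).radical :=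
      Ideal.span_le.2 (Set.range_subset_iff.2 h)
    exact Ideal.exists_pow_le_of_le_radical_of_fg span_le
      (Submodule.fg_span (Set.finite_range f))
  · exact fun ⟨n, hn⟩ j ↦ ⟨n, hn _ (Ideal.pow_mem_pow (Ideal.subset_span (Set.mem_range_self j)) n)⟩

lemma bijective_smul_localizedModule (x : R) (n : ℕ) :
    Function.Bijective fun y : LocalizedModule (Submonoid.powers x) M ↦ x ^ n • y :=
  (Module.End.isUnit_iff _).1 (IsLocalizedModule.map_units
    (LocalizedModule.mkLinearMap (Submonoid.powers x) M)
      ⟨x ^ n, pow_mem (Submonoid.mem_powers x) n⟩)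

namespace ExtLimit

lemma nonempty_equiv_idealTorsion (I : Ideal R) (M : Type u) [AddCommGroup M] [Module R M] :
    Nonempty (ExtLimit I M 0 ≃ₗ[R] idealTorsion I M) := by
  have pow_smul_one (n : ℕ) {a : R} (ha : a ∈ I ^ n) :
      a • (Submodule.Quotient.mk 1 : R ⧸ I ^ n) = 0 :=
    (Submodule.Quotient.mk_eq_zero (I ^ n)).2 (Ideal.mul_mem_right 1 _ ha)
  let ev (n : ℕ) : ModuleExt R (R ⧸ I ^ n) M 0 →ₗ[R] idealTorsion I M :=
    LinearMap.codRestrict _ (LinearMap.applyₗ (Submodule.Quotient.mk 1) ∘ₗ zeroEquiv.toLinearMap)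
      fun e ↦ ⟨n, fun a ha ↦ by
        change a • (zeroEquiv e) (Submodule.Quotient.mk 1) = 0
        rw [← map_smul, pow_smul_one n ha, map_zero]⟩
  have ev_symm (n : ℕ) (φ : (R ⧸ I ^ n) →ₗ[R] M) :
      (ev n (zeroEquiv.symm φ) : M) = φ (Submodule.Quotient.mk 1) :=
    LinearMap.congr_fun (zeroEquiv.apply_symm_apply φ) _
  refine ⟨LinearEquiv.ofBijective (Module.DirectLimit.lift R ℕ _ _ ev fun n m h e ↦ ?_) ⟨?_, ?_⟩⟩
  · obtain ⟨φ, rfl⟩ := zeroEquiv.symm.surjective e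
    refine Subtype.ext ?_
    rw [transition, precomp_zeroEquiv_symm, ev_symm, ev_symm]
    rfl
  · rw [injective_iff_map_eq_zero]
    intro z hz
    obtain ⟨n, e, rfl⟩ := Module.DirectLimit.exists_of z
    rw [Module.DirectLimit.lift_of] at hz
    obtain ⟨φ, rfl⟩ := zeroEquiv.symm.surjective e
    have hφ : φ = 0 := Submodule.linearMap_qext _
      (LinearMap.ext_ring ((ev_symm n φ).symm.trans (congrArg Subtype.val hz)))
    rw [hφ, map_zero, map_zero]
  · rintro ⟨y, n, hn⟩
    refine ⟨of I M 0 n (zeroEquiv.symm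
      (Submodule.liftQ _ (LinearMap.toSpanSingleton R _ y) hn)), ?_⟩
    rw [Module.DirectLimit.lift_of]
    exact Subtype.ext ((ev_symm n _).trans (one_smul R y))

lemma nonempty_equiv_range [IsNoetherianRing R] (f : M →ₗ[R] N)
    (hf : idealTorsion I (LinearMap.ker f) = ⊤) (i : ℕ) :
    Nonempty (ExtLimit I M (i + 1) ≃ₗ[R] ExtLimit I (LinearMap.range f) (i + 1)) := by
  have inj := Submodule.injective_subtype (LinearMap.ker f)
  have surj := f.surjective_rangeRestrict
  have exact : Function.Exact (LinearMap.ker f).subtype f.rangeRestrict :=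
    LinearMap.exact_iff.2 (by rw [LinearMap.ker_rangeRestrict, Submodule.range_subtype])
  refine nonempty_equiv_of_map (fun n ↦ postcomp _ f.rangeRestrict (i + 1))
    (fun n m h e ↦ postcomp_transition I _ _ h e) (fun n e he ↦ ?_) (fun n e ↦ ?_)
  · obtain ⟨e, rfl⟩ := (exact_postcomp_postcomp inj surj exact (i + 1) e).1 he
    obtain ⟨m, h, hm⟩ := exists_transition_eq_zero_of_idealTorsion_eq_top hf i n e
    exact ⟨m, h, by rw [← postcomp_transition, hm, map_zero]⟩
  · obtain ⟨m, h, hm⟩ := exists_transition_eq_zero_of_idealTorsion_eq_top hf (i + 1) n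
      (connecting inj surj exact _ (i + 1) e)
    rw [transition_connecting] at hm
    obtain ⟨e', he'⟩ := (exact_postcomp_connecting inj surj exact (i + 1) _).1 hm
    exact ⟨m, h, e', he'⟩

lemma nonempty_equiv_of_exact {L : Type u} [AddCommGroup L] [Module R L] {f : M →ₗ[R] N}
    {g : N →ₗ[R] L} (hf : Function.Injective f) (hg : Function.Surjective g)
    (h : Function.Exact f g) (hN : ∀ n i, Subsingleton (ModuleExt R (R ⧸ I ^ n) N i)) (i : ℕ) :
    Nonempty (ExtLimit I L i ≃ₗ[R] ExtLimit I M (i + 1)) := by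
  refine nonempty_equiv_of_map (fun n ↦ connecting hf hg h _ i)
    (fun n m k e ↦ (transition_connecting I hf hg h i k e).symm) (fun n e he ↦ ⟨n, le_rfl, ?_⟩)
    (fun n e ↦ ⟨n, le_rfl, ?_⟩)
  · obtain ⟨e, rfl⟩ := (exact_postcomp_connecting hf hg h i e).1 he
    rw [(hN n i).elim e 0, map_zero, map_zero]
  · obtain ⟨e, rfl⟩ := (exact_connecting_postcomp hf hg h i e).1 ((hN n _).elim _ _)
    exact ⟨e, (transition_self I (i + 1) n _).symm⟩

lemma nonempty_equiv_succ [IsNoetherianRing R] {ι : Type} [Finite ι] (f : ι → R) (M : Type u)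
    [AddCommGroup M] [Module R M] (i : ℕ) :
    Nonempty (ExtLimit (Ideal.span (Set.range f))
        ((∀ j, LocalizedModule (Submonoid.powers (f j)) M) ⧸ LinearMap.range (toLocalizations f M))
        i ≃ₗ[R] ExtLimit (Ideal.span (Set.range f)) M (i + 1)) := by
  set I := Ideal.span (Set.range f)
  have torsion_ker : idealTorsion I (LinearMap.ker (toLocalizations f M)) = ⊤ := by
    rw [ker_toLocalizations]; exact idealTorsion_idealTorsion
  have ext_vanishes (n i : ℕ) : Subsingleton (ModuleExt R (R ⧸ I ^ n)
      (∀ j, LocalizedModule (Submonoid.powers (f j)) M) i) :=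
    subsingleton_pi _ i fun j ↦ subsingleton_of_smul (x := f j ^ n)
      (fun y ↦ by
        obtain ⟨r, rfl⟩ := Submodule.Quotient.mk_surjective _ y
        exact (Submodule.Quotient.mk_eq_zero _).2 (Ideal.mul_mem_right _ _
          (Ideal.pow_mem_pow (Ideal.subset_span (Set.mem_range_self j)) n)))
      (bijective_smul_localizedModule (f j) n) i
  obtain ⟨φ⟩ := nonempty_equiv_of_exact (Submodule.injective_subtype _)
    (Submodule.mkQ_surjective (LinearMap.range (toLocalizations f M)))
    (LinearMap.exact_subtype_mkQ _) ext_vanishes i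
  obtain ⟨ψ⟩ := nonempty_equiv_range _ torsion_ker i
  exact ⟨φ ≪≫ₗ ψ.symm⟩

end ExtLimit

-- This rests on `H_I^0(M) = ker (M → ∏ M_{f j})` and
-- `H_I^{i+1}(M) ≃ H_I^i(coker (M → ∏ M_{f j}))`, for `I` generated by the `f j`.
theorem localCohomology_induction [IsNoetherianRing R] (I : Ideal R)
    (P : ∀ (M : Type u) [AddCommGroup M] [Module R M], Prop)
    (equiv : ∀ (M M' : Type u) [AddCommGroup M] [Module R M] [AddCommGroup M'] [Module R M'],
      (M ≃ₗ[R] M') → P M → P M')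
    (ker : ∀ (M : Type u) [AddCommGroup M] [Module R M] (k : ℕ) (f : Fin k → R), P M →
      P (LinearMap.ker (toLocalizations f M)))
    (coker : ∀ (M : Type u) [AddCommGroup M] [Module R M] (k : ℕ) (f : Fin k → R), P M →
      P ((∀ j, LocalizedModule (Submonoid.powers (f j)) M) ⧸
        LinearMap.range (toLocalizations f M)))
    (i : ℕ) (M : Type u) [AddCommGroup M] [Module R M] (hM : P M) :
    P ((localCohomology I i).obj (ModuleCat.of R M)) := by
  refine equiv _ _ (ExtLimit.equivLocalCohomology I M i) ?_
  obtain ⟨k, f, rfl⟩ := Submodule.fg_iff_exists_fin_generating_family.1 (IsNoetherian.noetherian I)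
  change P (ExtLimit (Ideal.span (Set.range f)) M i)
  induction i generalizing M with
  | zero =>
    obtain ⟨φ⟩ := ExtLimit.nonempty_equiv_idealTorsion (Ideal.span (Set.range f)) M
    exact equiv _ _ φ.symm (equiv _ _ (LinearEquiv.ofEq _ _ (ker_toLocalizations f M))
      (ker M k f hM))
  | succ i ih =>
    obtain ⟨φ⟩ := ExtLimit.nonempty_equiv_succ f M i
    exact equiv _ _ φ (ih _ (coker M k f hM))

end LocalCohomologyInduction

section Taylor

open scoped TensorProduct

/-- A Taylor datum over `R`: a ring homomorphism `shift : R → Jet` which is congruent to the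
structure map modulo a nilpotent `t`. The model is the shift `g(x) ↦ g(x + t)` from `k[x]` to
`k[x][t] ⧸ (t ^ (N + 1))`, `N` being the `order`, where `aug` is evaluation at `t = 0` and
`topCoeff` takes the coefficient of `t ^ N`. Enlarging `k[x]` to a flat algebra `Base` makes such
shifts available over more rings `R`. -/
structure TaylorDatum (R : Type u) [CommRing R] where
  Jet : Type u
  Base : Type u
  [commRingJet : CommRing Jet]
  [commRingBase : CommRing Base]
  [algebraJet : Algebra R Jet]
  [algebraBase : Algebra R Base]
  [flatJet : Module.Flat R Jet]
  [flatBase : Module.Flat R Base]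
  aug : Jet →ₐ[R] Base
  topCoeff : Jet →ₗ[R] Base
  t : Jet
  order : ℕ
  shift : R →+* Jet
  t_pow_succ_order : t ^ (order + 1) = 0
  aug_t : aug t = 0
  exists_shift_eq : ∀ r, ∃ z, shift r = algebraMap R Jet r + t * z
  topCoeff_t_pow_order_mul : ∀ z, topCoeff (t ^ order * z) = aug z

attribute [instance] TaylorDatum.commRingJet TaylorDatum.commRingBase TaylorDatum.algebraJet
  TaylorDatum.algebraBase TaylorDatum.flatJet TaylorDatum.flatBase

variable {R : Type u} [CommRing R] {M M' : Type u} [AddCommGroup M] [Module R M] [AddCommGroup M']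
  [Module R M']

lemma isUnit_algebraMap_end_tensorProduct (A : Type u) [CommRing A] [Algebra R A] {r : R}
    (hr : IsUnit (algebraMap R (Module.End R M) r)) :
    IsUnit (algebraMap R (Module.End A (A ⊗[R] M)) r) := by
  rw [← (Module.End.baseChangeHom R A M).commutes r]
  exact hr.map _

lemma exists_semilinear_lift {A P : Type u} [CommRing A] [AddCommGroup P] [Module A P]
    {σ : R →+* A} (W : Submonoid R) (ℓ : M →ₗ[R] M') [IsLocalizedModule W ℓ] (g : M →ₛₗ[σ] P)
    (hP : ∀ w ∈ W, IsUnit (algebraMap A (Module.End A P) (σ w))) :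
    ∃ h : M' →ₛₗ[σ] P, ∀ m, h (ℓ m) = g m := by
  let _ : Module R P := Module.compHom P σ
  let g' : M →ₗ[R] P := { g with map_smul' := g.map_smulₛₗ }
  have units (w : W) : IsUnit (algebraMap R (Module.End R P) w) := by
    have bijective := (Module.End.isUnit_iff _).1 (hP w w.2)
    exact (Module.End.isUnit_iff _).2 bijective
  let h := IsLocalizedModule.lift W ℓ g' units
  exact ⟨{ h with map_smul' := h.map_smul }, IsLocalizedModule.lift_apply W ℓ g' units⟩

namespace TaylorDatum

variable (D : TaylorDatum R)

/-- The map `aug ⊗ M`. -/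
noncomputable abbrev augTensor (M : Type u) [AddCommGroup M] [Module R M] :
    D.Jet ⊗[R] M →ₗ[R] D.Base ⊗[R] M :=
  LinearMap.rTensor M D.aug.toLinearMap

lemma aug_shift (r : R) : D.aug (D.shift r) = algebraMap R D.Base r := by
  obtain ⟨z, hz⟩ := D.exists_shift_eq r
  rw [hz, map_add, map_mul, D.aug_t, zero_mul, add_zero, AlgHom.commutes]

lemma augTensor_smul (a : D.Jet) (z : D.Jet ⊗[R] M) :
    D.augTensor M (a • z) = D.aug a • D.augTensor M z := by
  induction z with
  | zero => simp only [smul_zero, map_zero]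
  | tmul x m =>
    simp only [TensorProduct.smul_tmul', smul_eq_mul, LinearMap.rTensor_tmul,
      AlgHom.toLinearMap_apply, map_mul]
  | add x y hx hy => simp only [smul_add, map_add, hx, hy]

lemma augTensor_shift_smul (r : R) (z : D.Jet ⊗[R] M) :
    D.augTensor M (D.shift r • z) = r • D.augTensor M z := by
  rw [augTensor_smul, aug_shift, algebraMap_smul]

lemma augTensor_baseChange (f : M →ₗ[R] M') (z : D.Jet ⊗[R] M) :
    D.augTensor M' (f.baseChange D.Jet z) = f.lTensor D.Base (D.augTensor M z) :=
  LinearMap.congr_fun (LinearMap.rTensor_comp_lTensor ..) z |>.trans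
    (LinearMap.congr_fun (LinearMap.lTensor_comp_rTensor ..) z).symm

lemma topCoeff_rTensor_t_pow_order_smul (z : D.Jet ⊗[R] M) :
    LinearMap.rTensor M D.topCoeff (D.t ^ D.order • z) = D.augTensor M z := by
  induction z with
  | zero => simp only [smul_zero, map_zero]
  | tmul x m =>
    rw [TensorProduct.smul_tmul', smul_eq_mul, LinearMap.rTensor_tmul, LinearMap.rTensor_tmul,
      D.topCoeff_t_pow_order_mul, AlgHom.toLinearMap_apply]
  | add x y hx hy => rw [smul_add, map_add, map_add, hx, hy]

-- `shift r` differs from `r` by a nilpotent.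
lemma isUnit_shift {r : R} (hr : IsUnit (algebraMap R (Module.End R M) r)) :
    IsUnit (algebraMap D.Jet (Module.End D.Jet (D.Jet ⊗[R] M)) (D.shift r)) := by
  obtain ⟨z, hz⟩ := D.exists_shift_eq r
  have nilpotent :
      IsNilpotent (algebraMap D.Jet (Module.End D.Jet (D.Jet ⊗[R] M)) (D.t * z)) :=
    IsNilpotent.map ⟨D.order + 1, by rw [mul_pow, D.t_pow_succ_order, zero_mul]⟩ _
  have unit :
      IsUnit (algebraMap D.Jet (Module.End D.Jet (D.Jet ⊗[R] M)) (algebraMap R D.Jet r)) := by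
    rw [← IsScalarTower.algebraMap_apply]
    exact isUnit_algebraMap_end_tensorProduct D.Jet hr
  rw [hz, map_add]
  exact IsNilpotent.isUnit_add_left_of_commute (R := Module.End D.Jet (D.Jet ⊗[R] M)) nilpotent unit
    (Algebra.commutes _ _).symm

/-- A Taylor structure on `M`: a lift of `m ↦ 1 ⊗ m` to the jets which is linear along `shift`,
like `g(x) ↦ g(x + t)`. -/
structure Structure (M : Type u) [AddCommGroup M] [Module R M] where
  expand : M →ₛₗ[D.shift] D.Jet ⊗[R] M
  aug_expand : ∀ m, D.augTensor M (expand m) = 1 ⊗ₜ m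

variable {D}

namespace Structure

/-- A linear map compatible with Taylor structures on its source and target. -/
def Compatible (s : D.Structure M) (s' : D.Structure M') (f : M →ₗ[R] M') : Prop :=
  ∀ m, s'.expand (f m) = f.baseChange D.Jet (s.expand m)

/-- The Taylor structure `r ↦ shift r ⊗ 1` on `R`. -/
noncomputable def self (D : TaylorDatum R) : D.Structure R where
  expand :=
    { toFun r := D.shift r ⊗ₜ 1
      map_add' x y := by rw [map_add, TensorProduct.add_tmul]
      map_smul' r x := by rw [smul_eq_mul, map_mul, TensorProduct.smul_tmul', smul_eq_mul] }
  aug_expand r := by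
    change D.aug (D.shift r) ⊗ₜ[R] (1 : R) = _
    rw [aug_shift, Algebra.algebraMap_eq_smul_one, TensorProduct.smul_tmul, smul_eq_mul, mul_one]

/-- Transport of a Taylor structure along an isomorphism. -/
noncomputable def congr (s : D.Structure M) (e : M ≃ₗ[R] M') : D.Structure M' where
  expand := e.toLinearMap.baseChange D.Jet ∘ₛₗ s.expand ∘ₛₗ e.symm.toLinearMap
  aug_expand m := by
    change D.augTensor M' (e.toLinearMap.baseChange D.Jet (s.expand (e.symm m))) = _
    rw [augTensor_baseChange, s.aug_expand, LinearMap.lTensor_tmul, LinearEquiv.coe_coe,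
      LinearEquiv.apply_symm_apply]

variable {s : D.Structure M} {s' : D.Structure M'} {f : M →ₗ[R] M'}

/-- The Taylor structure on the cokernel of a compatible map. -/
noncomputable def coker (h : s.Compatible s' f) : D.Structure (M' ⧸ LinearMap.range f) where
  expand := Submodule.liftQ _ ((LinearMap.range f).mkQ.baseChange D.Jet ∘ₛₗ s'.expand) <| by
    rintro _ ⟨m, rfl⟩
    rw [LinearMap.mem_ker, LinearMap.comp_apply, h, ← LinearMap.comp_apply,
      ← LinearMap.baseChange_comp, LinearMap.range_mkQ_comp, LinearMap.baseChange_zero,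
      LinearMap.zero_apply]
  aug_expand m := by
    obtain ⟨m, rfl⟩ := Submodule.mkQ_surjective _ m
    change D.augTensor _ ((LinearMap.range f).mkQ.baseChange D.Jet (s'.expand m)) = _
    rw [augTensor_baseChange, s'.aug_expand, LinearMap.lTensor_tmul]

/-- The Taylor structure on the kernel of a compatible map, which exists because `Jet` is flat. -/
noncomputable def ker (h : s.Compatible s' f) : D.Structure (LinearMap.ker f) :=
  let ι := (LinearMap.ker f).subtype.baseChange D.Jet
  have ι_injective : Function.Injective ι :=
    Module.Flat.lTensor_preserves_injective_linearMap _ (LinearMap.ker f).injective_subtype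
  have expand_mem (m : LinearMap.ker f) : s.expand m ∈ LinearMap.range ι :=
    (Module.Flat.lTensor_exact D.Jet (LinearMap.exact_subtype_ker_map f) (s.expand m)).1 <|
      (h m).symm.trans (by rw [LinearMap.map_coe_ker, map_zero])
  { expand := (LinearEquiv.ofInjective ι ι_injective).symm.toLinearMap ∘ₛₗ
      (s.expand ∘ₛₗ (LinearMap.ker f).subtype).codRestrict _ expand_mem
    aug_expand m := by
      apply Module.Flat.lTensor_preserves_injective_linearMap (M := D.Base) _
        (LinearMap.ker f).injective_subtype
      rw [← augTensor_baseChange, LinearMap.lTensor_tmul, Submodule.subtype_apply,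
        ← s.aug_expand]
      exact congrArg (D.augTensor M) (congrArg Subtype.val
        ((LinearEquiv.ofInjective ι ι_injective).apply_symm_apply ⟨_, expand_mem m⟩)) }

section Pi

variable {ι : Type} [Fintype ι] [DecidableEq ι] {L : ι → Type u} [∀ j, AddCommGroup (L j)]
  [∀ j, Module R (L j)]

/-- The Taylor structure on a finite product. -/
noncomputable def pi (s : ∀ j, D.Structure (L j)) : D.Structure (∀ j, L j) where
  expand := ∑ j, (LinearMap.single R L j).baseChange D.Jet ∘ₛₗ (s j).expand ∘ₛₗ LinearMap.proj j
  aug_expand m := by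
    have component (j : ι) :
        D.augTensor _ ((LinearMap.single R L j).baseChange D.Jet ((s j).expand (m j))) =
          1 ⊗ₜ Pi.single j (m j) := by
      rw [augTensor_baseChange, (s j).aug_expand, LinearMap.lTensor_tmul, LinearMap.single_apply]
    rw [LinearMap.sum_apply, map_sum]
    exact (Finset.sum_congr rfl fun j _ ↦ component j).trans
      (by rw [← TensorProduct.tmul_sum, Finset.univ_sum_single])

lemma Compatible.pi {s : D.Structure M} {s' : ∀ j, D.Structure (L j)} {f : ∀ j, M →ₗ[R] L j}
    (h : ∀ j, s.Compatible (s' j) (f j)) : s.Compatible (Structure.pi s') (LinearMap.pi f) := by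
  intro m
  have pi_eq_sum : LinearMap.pi f = ∑ j, LinearMap.single R L j ∘ₗ f j := by
    refine LinearMap.ext fun x ↦ ?_
    rw [LinearMap.sum_apply]
    exact (Finset.univ_sum_single (LinearMap.pi f x)).symm
  have baseChange_pi : (LinearMap.pi f).baseChange D.Jet =
      ∑ j, (LinearMap.single R L j).baseChange D.Jet ∘ₗ (f j).baseChange D.Jet := by
    rw [pi_eq_sum, ← LinearMap.baseChangeHom_apply, map_sum]
    exact Finset.sum_congr rfl fun j _ ↦ LinearMap.baseChange_comp ..
  rw [baseChange_pi, LinearMap.sum_apply]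
  refine (LinearMap.sum_apply ..).trans (Finset.sum_congr rfl fun j _ ↦ ?_)
  exact congrArg _ (h j m)

end Pi

lemma exists_compatible_localizedModule (s : D.Structure M) (W : Submonoid R) :
    ∃ s' : D.Structure (LocalizedModule W M),
      s.Compatible s' (LocalizedModule.mkLinearMap W M) := by
  let ℓ := LocalizedModule.mkLinearMap W M
  have units (w : W) := IsLocalizedModule.map_units ℓ w
  obtain ⟨T, hT⟩ := exists_semilinear_lift W ℓ (ℓ.baseChange D.Jet ∘ₛₗ s.expand)
    fun w hw ↦ D.isUnit_shift (units ⟨w, hw⟩)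
  let augT : LocalizedModule W M →ₗ[R] D.Base ⊗[R] LocalizedModule W M :=
    { toFun z := D.augTensor _ (T z)
      map_add' x y := by rw [map_add, map_add]
      map_smul' r z := by rw [map_smulₛₗ, augTensor_shift_smul, RingHom.id_apply] }
  have augT_eq : augT = TensorProduct.mk R D.Base _ 1 := by
    refine IsLocalizedModule.ext W ℓ (fun w ↦ ?_) (LinearMap.ext fun m ↦ ?_)
    · have bijective := (Module.End.isUnit_iff _).1
        (isUnit_algebraMap_end_tensorProduct D.Base (units w))
      exact (Module.End.isUnit_iff _).2 bijective
    · change D.augTensor _ (T (ℓ m)) = 1 ⊗ₜ ℓ m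
      rw [hT, LinearMap.comp_apply, augTensor_baseChange, s.aug_expand, LinearMap.lTensor_tmul]
  exact ⟨⟨T, LinearMap.congr_fun augT_eq⟩, hT⟩

lemma exists_compatible_toLocalizations (s : D.Structure M) {k : ℕ} (f : Fin k → R) :
    ∃ s' : D.Structure (∀ j, LocalizedModule (Submonoid.powers (f j)) M),
      s.Compatible s' (toLocalizations f M) := by
  choose s' hs' using fun j ↦ s.exists_compatible_localizedModule (Submonoid.powers (f j))
  exact ⟨pi s', Compatible.pi hs'⟩

theorem nonempty_localCohomology [IsNoetherianRing R] (D : TaylorDatum R) (I : Ideal R) (i : ℕ) :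
    Nonempty (D.Structure ((localCohomology I i).obj (ModuleCat.of R R))) := by
  refine localCohomology_induction I (fun M _ _ ↦ Nonempty (D.Structure M)) ?_ ?_ ?_ i R ⟨self D⟩
  · rintro M M' _ _ _ _ e ⟨s⟩
    exact ⟨s.congr e⟩
  · rintro M _ _ k f ⟨s⟩
    obtain ⟨_, h⟩ := s.exists_compatible_toLocalizations f
    exact ⟨ker h⟩
  · rintro M _ _ k f ⟨s⟩
    obtain ⟨_, h⟩ := s.exists_compatible_toLocalizations f
    exact ⟨coker h⟩

end Structure

end TaylorDatum

end Taylor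

section TaylorBaseChange

open scoped TensorProduct

variable {S : Type u} [CommRing S]

namespace TaylorDatum

variable (R : Type u) [CommRing R] [Algebra R S]

/-- The Taylor datum over `R` underlying a Taylor datum over a flat `R`-algebra `S`. -/
noncomputable abbrev restrict [Module.Flat R S] (D : TaylorDatum S) : TaylorDatum R :=
  letI : Algebra R D.Jet := Algebra.compHom D.Jet (algebraMap R S)
  letI : Algebra R D.Base := Algebra.compHom D.Base (algebraMap R S)
  haveI : IsScalarTower R S D.Jet := IsScalarTower.of_algebraMap_eq fun _ ↦ rfl
  haveI : IsScalarTower R S D.Base := IsScalarTower.of_algebraMap_eq fun _ ↦ rfl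
  { Jet := D.Jet
    Base := D.Base
    flatJet := Module.Flat.trans R S D.Jet
    flatBase := Module.Flat.trans R S D.Base
    aug := D.aug.restrictScalars R
    topCoeff := D.topCoeff.restrictScalars R
    t := D.t
    order := D.order
    shift := D.shift.comp (algebraMap R S)
    t_pow_succ_order := D.t_pow_succ_order
    aug_t := D.aug_t
    exists_shift_eq r := D.exists_shift_eq (algebraMap R S r)
    topCoeff_t_pow_order_mul := D.topCoeff_t_pow_order_mul }

theorem Structure.nonempty_of_restrict {R} [CommRing R] [Algebra R S] (W : Submonoid R)
    [IsLocalization W S] [Module.Flat R S] {D : TaylorDatum S} {M : Type u} [AddCommGroup M]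
    [Module R M] [Module S M] [IsScalarTower R S M] (s : (D.restrict R).Structure M) :
    Nonempty (D.Structure M) := by
  let _ : Algebra R D.Jet := Algebra.compHom D.Jet (algebraMap R S)
  let _ : Algebra R D.Base := Algebra.compHom D.Base (algebraMap R S)
  have : IsScalarTower R S D.Jet := IsScalarTower.of_algebraMap_eq fun _ ↦ rfl
  have : IsScalarTower R S D.Base := IsScalarTower.of_algebraMap_eq fun _ ↦ rfl
  let πJet : D.Jet ⊗[R] M →ₗ[D.Jet] D.Jet ⊗[S] M := TensorProduct.mapOfCompatibleSMul S R ..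
  let πBase : D.Base ⊗[R] M →ₗ[D.Base] D.Base ⊗[S] M := TensorProduct.mapOfCompatibleSMul S R ..
  let T : M →+ D.Jet ⊗[S] M := πJet.toAddMonoidHom.comp s.expand.toAddMonoidHom
  have T_algebraMap_smul (r : R) (m : M) :
      T (algebraMap R S r • m) = D.shift (algebraMap R S r) • T m := by
    rw [algebraMap_smul]
    exact (congrArg πJet (s.expand.map_smulₛₗ r m)).trans (πJet.map_smul _ _)
  have T_smul (x : S) (m : M) : T (x • m) = D.shift x • T m := by
    obtain ⟨⟨r, w⟩, hw⟩ := IsLocalization.surj W x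
    refine ((IsLocalization.map_units S w).map D.shift).smul_left_cancel.1 ?_
    rw [← T_algebraMap_smul, smul_smul, smul_smul, ← map_mul, mul_comm, hw, T_algebraMap_smul]
  have augTensor_πJet (z : D.Jet ⊗[R] M) :
      D.augTensor M (πJet z) = πBase ((D.restrict R).augTensor M z) := by
    induction z with
    | zero => simp only [map_zero]
    | tmul x y => rfl
    | add x y hx hy => simp only [map_add, hx, hy]
  exact ⟨{ expand := { T with map_smul' := T_smul }
           aug_expand m := (augTensor_πJet _).trans (congrArg πBase (s.aug_expand m)) }⟩

end TaylorDatum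

end TaylorBaseChange

section Translation

open scoped TensorProduct

variable {R : Type u} [CommRing R] {M : Type u} [AddCommGroup M] [Module R M]

namespace TaylorDatum

variable {D : TaylorDatum R} {x : R}

lemma Structure.compatible_lsmul (s : D.Structure M) (hx : D.shift x = algebraMap R D.Jet x) :
    s.Compatible s (LinearMap.lsmul R M x) := by
  intro m
  have lsmul_eq : LinearMap.lsmul R M x = x • LinearMap.id := rfl
  rw [lsmul_eq, LinearMap.baseChange_smul, LinearMap.baseChange_id, LinearMap.smul_apply,
    LinearMap.smul_apply, map_smulₛₗ, hx, algebraMap_smul]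
  rfl

/-- `D` expands to order `n` along the coordinate `x`: its shift translates `x` by `t` and fixes the
other members of the list of coordinates `l`. -/
structure Translates (D : TaylorDatum R) (x : R) (l : List R) (n : ℕ) : Prop where
  order_eq : D.order = n
  faithfullyFlat_base : Module.FaithfullyFlat R D.Base
  shift_self : D.shift x = algebraMap R D.Jet x + D.t
  shift_of_ne : ∀ y ∈ l, y ≠ x → D.shift y = algebraMap R D.Jet y

lemma Translates.mono {l l' : List R} {n : ℕ} (h : D.Translates x l n) (hl : l' ⊆ l) :
    D.Translates x l' n :=
  { h with shift_of_ne := fun y hy ↦ h.shift_of_ne y (hl hy) }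

-- Modulo `x`, the shift of `x` acts as `t`, and `t ^ order` detects the zeroth Taylor coefficient.
theorem Structure.mem_range_lsmul_of_pow_smul_eq_zero (s : D.Structure M)
    [Module.FaithfullyFlat R D.Base] (hx : D.shift x = algebraMap R D.Jet x + D.t) {y : M}
    (hy : x ^ D.order • y = 0) : y ∈ LinearMap.range (LinearMap.lsmul R M x) := by
  let q := (LinearMap.range (LinearMap.lsmul R M x)).mkQ
  have smul_q : x • q = 0 :=
    LinearMap.ext fun m ↦ (Submodule.Quotient.mk_eq_zero _).2 ⟨m, rfl⟩
  have smul_baseChange_q (w : D.Jet ⊗[R] M) : x • q.baseChange D.Jet w = 0 := by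
    rw [← LinearMap.smul_apply, ← LinearMap.baseChange_smul, smul_q, LinearMap.baseChange_zero,
      LinearMap.zero_apply]
  have shift_pow_smul (k : ℕ) (w : D.Jet ⊗[R] M) :
      D.shift x ^ k • q.baseChange D.Jet w = D.t ^ k • q.baseChange D.Jet w := by
    induction k generalizing w with
    | zero => rw [pow_zero, pow_zero]
    | succ k ih =>
      rw [pow_succ, mul_smul, hx, add_smul, algebraMap_smul, smul_baseChange_q, zero_add, ← hx,
        ← map_smul, ih, map_smul, ← mul_smul, ← pow_succ]
  have t_pow_smul : D.t ^ D.order • q.baseChange D.Jet (s.expand y) = 0 := by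
    rw [← shift_pow_smul, ← map_smul, ← map_pow, ← map_smulₛₗ, hy, map_zero, map_zero]
  have one_tmul_q : (1 : D.Base) ⊗ₜ[R] q y = 0 := by
    rw [← LinearMap.lTensor_tmul, ← s.aug_expand, ← augTensor_baseChange,
      ← topCoeff_rTensor_t_pow_order_smul, t_pow_smul, map_zero]
  exact (Submodule.Quotient.mk_eq_zero _).1
    ((Module.FaithfullyFlat.one_tmul_eq_zero_iff (A := D.Base) R _ _).1 one_tmul_q)

end TaylorDatum

/-- `M` has Taylor expansions of all orders along each of the coordinates in `l`. -/
def HasTaylorExpansions (l : List R) (M : Type u) [AddCommGroup M] [Module R M] : Prop :=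
  ∀ x ∈ l, ∀ n, ∃ D : TaylorDatum R, D.Translates x l n ∧ Nonempty (D.Structure M)

namespace HasTaylorExpansions

variable {l : List R} {x : R}

lemma mem_range_lsmul_of_pow_smul_eq_zero (h : HasTaylorExpansions l M) (hx : x ∈ l) {y : M}
    {n : ℕ} (hy : x ^ n • y = 0) : y ∈ LinearMap.range (LinearMap.lsmul R M x) := by
  obtain ⟨D, hD, ⟨s⟩⟩ := h x hx n
  have := hD.faithfullyFlat_base
  exact s.mem_range_lsmul_of_pow_smul_eq_zero hD.shift_self (by rwa [hD.order_eq])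

lemma ker_lsmul (h : HasTaylorExpansions (l ++ [x]) M) (hx : x ∉ l) :
    HasTaylorExpansions l (LinearMap.ker (LinearMap.lsmul R M x)) := by
  intro z hz n
  obtain ⟨D, hD, ⟨s⟩⟩ := h z (List.mem_append_left _ hz) n
  have shift_x := hD.shift_of_ne x (List.mem_append_right _ List.mem_cons_self)
    (ne_of_mem_of_not_mem hz hx).symm
  exact ⟨D, hD.mono (List.subset_append_left _ _), ⟨.ker (s.compatible_lsmul shift_x)⟩⟩

lemma coker_lsmul (h : HasTaylorExpansions (l ++ [x]) M) (hx : x ∉ l) :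
    HasTaylorExpansions l (M ⧸ LinearMap.range (LinearMap.lsmul R M x)) := by
  intro z hz n
  obtain ⟨D, hD, ⟨s⟩⟩ := h z (List.mem_append_left _ hz) n
  have shift_x := hD.shift_of_ne x (List.mem_append_right _ List.mem_cons_self)
    (ne_of_mem_of_not_mem hz hx).symm
  exact ⟨D, hD.mono (List.subset_append_left _ _), ⟨.coker (s.compatible_lsmul shift_x)⟩⟩

end HasTaylorExpansions

end Translation

section SupportDimension

lemma krullDim_add_one_le_of_forall_exists_lt {α β : Type*} [Preorder α] [Preorder β] {f : α → β}
    (hf : StrictMono f) (h : ∀ a, ∃ b, b < f a) : Order.krullDim α + 1 ≤ Order.krullDim β := by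
  rcases isEmpty_or_nonempty α with _ | _
  · rw [Order.krullDim_eq_bot, WithBot.bot_add]
    exact bot_le
  have : Nonempty β := ‹Nonempty α›.map f
  rw [Order.krullDim_eq_iSup_length, Order.krullDim_eq_iSup_length, ← WithBot.coe_one,
    ← WithBot.coe_add, WithBot.coe_le_coe, ENat.iSup_add, iSup_le_iff]
  intro p
  obtain ⟨b, hb⟩ := h p.head
  have length_cons : ((p.map f hf).cons b hb).length = p.length + 1 :=
    RelSeries.cons_length (p.map f hf) b hb
  refine le_iSup_of_le ((p.map f hf).cons b hb) ?_
  exact_mod_cast length_cons.ge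

variable {R : Type u} [CommRing R] {M : Type u} [AddCommGroup M] [Module R M] {x : R}

lemma exists_lt_mem_support_of_mem_support_quotient
    (hx : ∀ y : M, ∀ n : ℕ, x ^ n • y = 0 → y ∈ LinearMap.range (LinearMap.lsmul R M x))
    {q : PrimeSpectrum R}
    (hq : q ∈ Module.support R (M ⧸ LinearMap.range (LinearMap.lsmul R M x))) :
    ∃ q' ∈ Module.support R M, q' < q := by
  obtain ⟨z, hz⟩ := Module.mem_support_iff_exists_annihilator.1 hq
  obtain ⟨y, rfl⟩ := Submodule.mkQ_surjective _ z
  have mem_of_smul_mem {s : R} (hs : s • y ∈ LinearMap.range (LinearMap.lsmul R M x)) :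
      s ∈ q.asIdeal := by
    apply hz
    rwa [Submodule.mem_annihilator_span_singleton, ← map_smul, Submodule.mkQ_apply,
      Submodule.Quotient.mk_eq_zero]
  let J : Ideal R := LinearMap.ker
    (LocalizedModule.mkLinearMap (Submonoid.powers x) M ∘ₗ LinearMap.toSpanSingleton R M y)
  have mem_J {s : R} : s ∈ J ↔ ∃ n : ℕ, x ^ n • s • y = 0 := by
    rw [LinearMap.mem_ker, LinearMap.comp_apply, LinearMap.toSpanSingleton_apply,
      IsLocalizedModule.eq_zero_iff (Submonoid.powers x)]
    exact ⟨fun ⟨⟨_, n, rfl⟩, h⟩ ↦ ⟨n, h⟩, fun ⟨n, h⟩ ↦ ⟨⟨_, n, rfl⟩, h⟩⟩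
  have J_le : J ≤ q.asIdeal := fun s hs ↦
    have ⟨n, hn⟩ := mem_J.1 hs
    mem_of_smul_mem (hx _ n hn)
  obtain ⟨q', hq', le⟩ := Ideal.exists_minimalPrimes_le J_le
  refine ⟨⟨q', hq'.1.1⟩, ?_, lt_of_le_of_ne le ?_⟩
  · refine Module.mem_support_iff_exists_annihilator.2 ⟨y, fun s hs ↦ hq'.1.2 (mem_J.2 ⟨0, ?_⟩)⟩
    rw [(Submodule.mem_annihilator_span_singleton _ _).1 hs, smul_zero]
  · rintro rfl
    obtain ⟨s, hs, hxs⟩ :=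
      Ideal.exists_mul_mem_of_mem_minimalPrimes hq' (mem_of_smul_mem ⟨y, rfl⟩)
    obtain ⟨n, hn⟩ := mem_J.1 hxs
    exact hs (mem_J.2 ⟨n + 1, by rwa [pow_succ, mul_smul, ← mul_smul x]⟩)

theorem supportDim_quotient_range_lsmul_add_one_le
    (hx : ∀ y : M, ∀ n : ℕ, x ^ n • y = 0 → y ∈ LinearMap.range (LinearMap.lsmul R M x)) :
    Module.supportDim R (M ⧸ LinearMap.range (LinearMap.lsmul R M x)) + 1 ≤
      Module.supportDim R M :=
  krullDim_add_one_le_of_forall_exists_lt (f := Set.inclusion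
      (Module.support_subset_of_surjective _ (Submodule.mkQ_surjective _))) (fun _ _ h ↦ h)
    fun q ↦ have ⟨q', hq', lt⟩ := exists_lt_mem_support_of_mem_support_quotient hx q.2
      ⟨⟨q', hq'⟩, lt⟩

lemma subsingleton_of_supportDim_lt_zero (h : Module.supportDim R M < (0 : ℕ)) : Subsingleton M :=
  (Module.supportDim_eq_bot_iff_subsingleton R M).1 (WithBot.lt_coe_bot.1 h)

end SupportDimension

section ExtVanishing

variable {R : Type u} [CommRing R] {M M' N N' : Type u} [AddCommGroup M] [Module R M]
  [AddCommGroup M'] [Module R M'] [AddCommGroup N] [Module R N] [AddCommGroup N'] [Module R N']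

namespace ModuleExt

lemma injective_postcomp (f : M →ₗ[R] M') (j : ℕ)
    [Subsingleton (ModuleExt R N (LinearMap.ker f) (j + 1))]
    [Subsingleton (ModuleExt R N (M' ⧸ LinearMap.range f) j)] :
    Function.Injective (postcomp N f (j + 1)) := by
  have exact_ker : Function.Exact (LinearMap.ker f).subtype f.rangeRestrict :=
    LinearMap.exact_iff.2 (by rw [LinearMap.ker_rangeRestrict, Submodule.range_subtype])
  have exact_range := LinearMap.exact_subtype_mkQ (LinearMap.range f)
  refine (injective_iff_map_eq_zero _).2 fun e he ↦ ?_
  rw [← f.subtype_comp_codRestrict _ f.mem_range_self, postcomp_comp] at he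
  obtain ⟨a, ha⟩ := (exact_connecting_postcomp (LinearMap.range f).injective_subtype
    (Submodule.mkQ_surjective _) exact_range j _).1 he
  rw [Subsingleton.elim a 0, map_zero] at ha
  obtain ⟨b, rfl⟩ := (exact_postcomp_postcomp (LinearMap.ker f).injective_subtype
    f.surjective_rangeRestrict exact_ker (j + 1) e).1 ha.symm
  rw [Subsingleton.elim b 0, map_zero]

lemma surjective_postcomp (f : M →ₗ[R] M') (j : ℕ)
    [Subsingleton (ModuleExt R N (LinearMap.ker f) (j + 1))]
    [Subsingleton (ModuleExt R N (M' ⧸ LinearMap.range f) j)] :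
    Function.Surjective (postcomp N f j) := by
  have exact_ker : Function.Exact (LinearMap.ker f).subtype f.rangeRestrict :=
    LinearMap.exact_iff.2 (by rw [LinearMap.ker_rangeRestrict, Submodule.range_subtype])
  have exact_range := LinearMap.exact_subtype_mkQ (LinearMap.range f)
  intro e
  obtain ⟨a, rfl⟩ := (exact_postcomp_postcomp (LinearMap.range f).injective_subtype
    (Submodule.mkQ_surjective _) exact_range j e).1 (Subsingleton.elim _ _)
  obtain ⟨b, rfl⟩ := (exact_postcomp_connecting (LinearMap.ker f).injective_subtype
    f.surjective_rangeRestrict exact_ker j a).1 (Subsingleton.elim _ _)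
  exact ⟨b, by rw [← postcomp_comp]; rfl⟩

lemma postcomp_lsmul (x : R) (j : ℕ) (e : ModuleExt R N M j) :
    postcomp N (LinearMap.lsmul R M x) j e = x • e :=
  (postcomp_smul x LinearMap.id j e).trans (by rw [postcomp_id])

lemma precomp_lsmul (x : R) (j : ℕ) (e : ModuleExt R N M j) :
    precomp M (LinearMap.lsmul R N x) j e = x • e :=
  (precomp_smul x LinearMap.id j e).trans (by rw [precomp_id])

lemma subsingleton_of_exact_lsmul {x : R} {g : N' →ₗ[R] N} (hg : Function.Surjective g)
    (hx : Function.Injective (LinearMap.lsmul R N' x))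
    (h : Function.Exact (LinearMap.lsmul R N' x) g) (j : ℕ)
    [Subsingleton (ModuleExt R N' (LinearMap.ker (LinearMap.lsmul R M x)) (j + 1))]
    [Subsingleton (ModuleExt R N' (M ⧸ LinearMap.range (LinearMap.lsmul R M x)) j)] :
    Subsingleton (ModuleExt R N M (j + 1)) := by
  refine subsingleton_of_forall_eq 0 fun e ↦ ?_
  have precomp_g_eq_zero : precomp M g (j + 1) e = 0 := by
    refine (injective_iff_map_eq_zero _).1 (injective_postcomp (LinearMap.lsmul R M x) j) _ ?_
    rw [postcomp_lsmul, ← precomp_lsmul, ← precomp_comp, h.linearMap_comp_eq_zero, precomp_zero]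
  obtain ⟨a, rfl⟩ := (exact_coconnecting_precomp hx hg h j e).1 precomp_g_eq_zero
  obtain ⟨b, rfl⟩ := surjective_postcomp (LinearMap.lsmul R M x) j a
  rw [postcomp_lsmul, ← precomp_lsmul]
  exact (exact_precomp_coconnecting hx hg h j).apply_apply_eq_zero b

end ModuleExt

lemma exact_lsmul_factor (I : Ideal R) (x : R) :
    Function.Exact (LinearMap.lsmul R (R ⧸ I) x)
      (Submodule.factor (le_sup_left : I ≤ I ⊔ Ideal.span {x})) := by
  refine LinearMap.exact_iff.2 (le_antisymm ?_ ?_)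
  · intro z hz
    obtain ⟨s, rfl⟩ := Submodule.mkQ_surjective _ z
    obtain ⟨a, ha, b, hb, rfl⟩ := Submodule.mem_sup.1 ((Submodule.Quotient.mk_eq_zero _).1 hz)
    obtain ⟨c, rfl⟩ := Ideal.mem_span_singleton'.1 hb
    refine ⟨Submodule.Quotient.mk c, (Submodule.Quotient.eq _).2 ?_⟩
    change x * c - (a + c * x) ∈ I
    rw [mul_comm x, sub_add_cancel_right]
    exact neg_mem ha
  · rintro _ ⟨z, rfl⟩
    obtain ⟨c, rfl⟩ := Submodule.mkQ_surjective _ z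
    exact (Submodule.Quotient.mk_eq_zero _).2
      (Submodule.mem_sup_right (Ideal.mem_span_singleton'.2 ⟨c, mul_comm ..⟩))

open RingTheory.Sequence in
theorem HasTaylorExpansions.subsingleton_ext {l : List R} (hM : HasTaylorExpansions l M)
    (nodup : l.Nodup) (regular : IsWeaklyRegular R l) {j : ℕ} (hj : Module.supportDim R M < j) :
    Subsingleton (ModuleExt R (R ⧸ Ideal.ofList l) M j) := by
  induction l using List.reverseRecOn generalizing M j with
  | nil =>
    rcases j with _ | j
    · have := subsingleton_of_supportDim_lt_zero hj
      exact ModuleExt.zeroEquiv.toEquiv.subsingleton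
    · have : Module.Projective R (R ⧸ Ideal.ofList ([] : List R)) :=
        .of_equiv (Submodule.quotEquivOfEqBot _ Ideal.ofList_nil).symm
      infer_instance
  | append_singleton l x ih =>
    rcases j with _ | j
    · have := subsingleton_of_supportDim_lt_zero hj
      exact ModuleExt.zeroEquiv.toEquiv.subsingleton
    obtain ⟨nodup_l, -, disjoint⟩ := List.nodup_append'.1 nodup
    have hx : x ∉ l := List.disjoint_singleton.1 disjoint
    obtain ⟨regular_l, regular_x⟩ := (isWeaklyRegular_append_iff _ _ _).1 regular
    rw [smul_eq_mul, Ideal.mul_top, isWeaklyRegular_singleton_iff] at regular_x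
    have ext_ker := ih (hM.ker_lsmul hx) nodup_l regular_l
      ((Module.supportDim_le_of_injective _ (Submodule.injective_subtype _)).trans_lt hj)
    have dim_coker := supportDim_quotient_range_lsmul_add_one_le fun y n hy ↦
      hM.mem_range_lsmul_of_pow_smul_eq_zero (List.mem_append_right l List.mem_cons_self) hy
    have ext_coker := ih (hM.coker_lsmul hx) nodup_l regular_l (j := j)
      (lt_of_add_lt_add_right (dim_coker.trans_lt (by exact_mod_cast hj)))
    rw [Ideal.ofList_append, Ideal.ofList_singleton]
    exact ModuleExt.subsingleton_of_exact_lsmul (Submodule.factor_surjective _) regular_x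
      (exact_lsmul_factor _ x) j

end ExtVanishing

section PerfectField

open Algebra MvPolynomial

namespace SelfGenerators

variable (R A B : Type u) [CommRing R] [CommRing A] [CommRing B] [Algebra R A] [Algebra R B]
  [Algebra A B]

/-- The map between the tautological presentations of `A` and `B` by polynomials in their own
elements; it lets an element of the cotangent complex of `B` descend to a subalgebra `A`. -/
noncomputable abbrev hom : (Generators.self R A).Hom (Generators.self R B) :=
  Generators.defaultHom _ _

lemma hom_toAlgHom_apply (p : MvPolynomial A R) :
    (hom R A B).toAlgHom p = rename (algebraMap A B) p := by
  have toAlgHom_eq : (hom R A B).toAlgHom =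
      (rename (algebraMap A B) : MvPolynomial A R →ₐ[R] MvPolynomial B R) := by
    refine MvPolynomial.algHom_ext fun i ↦ ?_
    rw [rename_X]
    exact aeval_X _ _
  exact DFunLike.congr_fun toAlgHom_eq p

lemma cotangentSpaceBasis_repr_map
    [IsScalarTower R A B] (hAB : Function.Injective (algebraMap A B))
    (w : (Generators.self R A).toExtension.CotangentSpace) (a : A) :
    (Generators.self R B).cotangentSpaceBasis.repr
        (Extension.CotangentSpace.map (hom R A B).toExtensionHom w) (algebraMap A B a) =
      algebraMap A B ((Generators.self R A).cotangentSpaceBasis.repr w a) := by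
  let bA := (Generators.self R A).cotangentSpaceBasis
  let bB := (Generators.self R B).cotangentSpaceBasis
  have mem_span : w ∈ Submodule.span A (Set.range bA) := by
    rw [bA.span_eq]
    trivial
  induction mem_span using Submodule.span_induction with
  | zero => simp
  | add x y _ _ hx hy => simp only [map_add, Finsupp.add_apply, hx, hy]
  | smul c x _ hx =>
    have map_smul_eq : Extension.CotangentSpace.map (hom R A B).toExtensionHom (c • x) =
        algebraMap A B c • Extension.CotangentSpace.map (hom R A B).toExtensionHom x := by
      rw [map_smul, algebraMap_smul]
    have reprB := bB.repr.map_smul (algebraMap A B c)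
      (Extension.CotangentSpace.map (hom R A B).toExtensionHom x)
    have reprA := bA.repr.map_smul c x
    rw [map_smul_eq, reprB, reprA, Finsupp.smul_apply, Finsupp.smul_apply, smul_eq_mul,
      smul_eq_mul, map_mul, hx]
  | mem x hx =>
    classical
    obtain ⟨a', rfl⟩ := hx
    have val_eq : (hom R A B).val a' = X (algebraMap A B a') := rfl
    rw [Generators.repr_CotangentSpaceMap, val_eq, pderiv_X, Module.Basis.repr_self]
    obtain rfl | ne := eq_or_ne a' a
    · simp
    · rw [Finsupp.single_eq_of_ne ne.symm, Pi.single_eq_of_ne (hAB.ne ne)]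
      simp

lemma injective_cotangentSpace_map [IsScalarTower R A B]
    (hAB : Function.Injective (algebraMap A B)) :
    Function.Injective (Extension.CotangentSpace.map (hom R A B).toExtensionHom) := by
  rw [injective_iff_map_eq_zero]
  intro w hw
  refine (Generators.self R A).cotangentSpaceBasis.repr.injective (Finsupp.ext fun a ↦ hAB ?_)
  rw [← cotangentSpaceBasis_repr_map R A B hAB, hw]
  simp

lemma exists_cotangent_map_eq [IsScalarTower R A B] (hAB : Function.Injective (algebraMap A B))
    (p : (Generators.self R B).toExtension.ker)
    (hp : ((show MvPolynomial B R from p.1).vars : Set B) ⊆ Set.range (algebraMap A B)) :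
    ∃ q, Extension.Cotangent.map (hom R A B).toExtensionHom (Extension.Cotangent.mk q) =
      Extension.Cotangent.mk p := by
  obtain ⟨q, hq⟩ := MvPolynomial.exists_rename_eq_of_vars_subset_range
    (show MvPolynomial B R from p.1) (algebraMap A B) hAB hp
  have aeval_p : aeval (Generators.self R B).val (show MvPolynomial B R from p.1) = 0 := by
    have mem_ker : p.1 ∈ (Generators.self R B).ker := p.2
    rwa [Generators.ker_eq_ker_aeval_val] at mem_ker
  have q_mem : q ∈ (Generators.self R A).toExtension.ker := by
    change q ∈ (Generators.self R A).ker
    rw [Generators.ker_eq_ker_aeval_val, RingHom.mem_ker]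
    apply hAB
    rw [map_zero, ← aeval_p, ← hq, aeval_rename, ← MvPolynomial.aeval_algebraMap_apply]
    rfl
  refine ⟨⟨q, q_mem⟩, ?_⟩
  rw [Extension.Cotangent.map_mk]
  exact congrArg _ (Subtype.ext ((hom_toAlgHom_apply R A B q).trans hq))

end SelfGenerators

-- An element of the cotangent complex involves finitely many elements of `k`, so it comes from a
-- finitely generated subfield, over which smoothness is known.
theorem formallySmooth_of_perfectField (F k : Type u) [Field F] [PerfectField F] [Field k]
    [Algebra F k] : Algebra.FormallySmooth F k := by
  refine ⟨inferInstance, ?_⟩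
  rw [Extension.subsingleton_h1Cotangent, injective_iff_map_eq_zero]
  intro z hz
  obtain ⟨p, rfl⟩ := Extension.Cotangent.mk_surjective z
  let vars : Finset k := (show MvPolynomial k F from p.1).vars
  let K := IntermediateField.adjoin F (vars : Set k)
  have : Algebra.EssFiniteType F K := IntermediateField.essFiniteType_iff.2 ⟨_, rfl⟩
  have smooth : Algebra.FormallySmooth F K := Algebra.FormallySmooth.of_perfectField
  have injective := (algebraMap K k).injective
  obtain ⟨q, hq⟩ := SelfGenerators.exists_cotangent_map_eq F K k injective p
    fun a ha ↦ ⟨⟨a, IntermediateField.subset_adjoin F _ ha⟩, rfl⟩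
  have cotangentComplex_q :
      (Generators.self F K).toExtension.cotangentComplex (Extension.Cotangent.mk q) = 0 := by
    apply SelfGenerators.injective_cotangentSpace_map F K k injective
    rw [Extension.CotangentSpace.map_cotangentComplex, hq, map_zero]
    exact hz
  have injective_cotangentComplex := (Extension.subsingleton_h1Cotangent
    (Generators.self F K).toExtension).1 smooth.subsingleton_h1Cotangent
  rw [← hq, (injective_iff_map_eq_zero _).1 injective_cotangentComplex _ cotangentComplex_q,
    map_zero]

end PerfectField

section CohenStructure

open RingTheory.Sequence

lemma exists_mvPowerSeries_ringHom_extending {σ k B : Type*} [Finite σ] [CommRing k] [CommRing B]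
    (I : Ideal B) [IsAdicComplete I B] (g : MvPolynomial σ k →+* B)
    (hg : ∀ j, g (MvPolynomial.X j) ∈ I) :
    ∃ ψ : MvPowerSeries σ k →+* B, ∀ p : MvPolynomial σ k, ψ p = g p := by
  let J := MvPolynomial.idealOfVars σ k
  have pow_le_comap (n : ℕ) : J ^ n ≤ (I ^ n).comap g := by
    refine (Ideal.pow_right_mono ?_ n).trans (Ideal.le_comap_pow g n)
    refine Ideal.span_le.2 ?_
    rintro _ ⟨j, rfl⟩
    exact hg j
  let trunc (n : ℕ) : MvPowerSeries σ k →+* B ⧸ I ^ n :=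
    (Ideal.quotientMap (I ^ n) g (pow_le_comap n)).comp
      (MvPowerSeries.truncTotalAlgHom σ k n : MvPowerSeries σ k →+* MvPolynomial σ k ⧸ J ^ n)
  have trunc_apply (n : ℕ) (x : MvPowerSeries σ k) :
      trunc n x = Ideal.Quotient.mk (I ^ n) (g (MvPowerSeries.truncTotal n x)) := rfl
  have factorPow_trunc {m n : ℕ} (h : m ≤ n) :
      (Ideal.Quotient.factorPow I h).comp (trunc n) = trunc m := by
    ext x
    refine Ideal.Quotient.eq.2 ?_
    rw [← map_sub]
    exact pow_le_comap m
      (MvPowerSeries.truncTotal_sub_truncTotal_mem_pow_idealOfVars h le_rfl x)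
  refine ⟨IsAdicComplete.liftRingHom I trunc factorPow_trunc, fun p ↦ ?_⟩
  rw [IsHausdorff.eq_iff_smodEq (I := I)]
  intro n
  rw [smul_eq_mul, Ideal.mul_top, SModEq.sub_mem, ← Ideal.Quotient.eq,
    IsAdicComplete.mk_liftRingHom, trunc_apply, Ideal.Quotient.eq, ← map_sub]
  refine pow_le_comap n ((MvPolynomial.mem_pow_idealOfVars_iff' n _).2 fun d hd ↦ ?_)
  rw [MvPolynomial.coeff_sub, MvPowerSeries.coeff_truncTotal _ hd, MvPolynomial.coeff_coe, sub_self]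

lemma mem_span_range_X_of_constantCoeff_eq_zero {σ k : Type*} [Finite σ] [CommRing k]
    {f : MvPowerSeries σ k} (hf : MvPowerSeries.constantCoeff f = 0) :
    f ∈ Ideal.span (Set.range (MvPowerSeries.X : σ → MvPowerSeries σ k)) := by
  let e := (MvPowerSeries.toAdicCompletionAlgEquiv σ k).toRingEquiv
  have map_span : Ideal.map e (Ideal.span (Set.range MvPowerSeries.X)) =
      (MvPolynomial.idealOfVars σ k).map (algebraMap _ _) := by
    simp_rw [MvPolynomial.idealOfVars, Ideal.map_span, ← Set.range_comp]
    congr 2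
    ext1
    simp [e, AdicCompletion.algebraMap_apply, ← MvPolynomial.coe_X,
      MvPowerSeries.toAdicCompletion_coe]
  have e_mem : e f ∈ Ideal.map e (Ideal.span (Set.range MvPowerSeries.X)) := by
    have eval_e : AdicCompletion.evalOneₐ _ (e f) =
        Ideal.Quotient.mk (MvPolynomial.idealOfVars σ k) (MvPowerSeries.truncTotal 1 f) := rfl
    rw [map_span, ← AdicCompletion.ker_evalOneₐ_eq_map _ (MvPolynomial.idealOfVars_fg σ k)]
    refine eval_e.trans (Ideal.Quotient.eq_zero_iff_mem.2 ?_)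
    rw [← pow_one (MvPolynomial.idealOfVars σ k), MvPolynomial.mem_pow_idealOfVars_iff']
    intro d hd
    rw [MvPowerSeries.coeff_truncTotal _ hd,
      (Finsupp.degree_eq_zero_iff d).1 (Nat.lt_one_iff.1 hd)]
    exact hf
  obtain ⟨f', hf', h⟩ := (Ideal.mem_map_of_equiv e _).1 e_mem
  rwa [← e.injective h]

theorem ker_eq_bot_of_isWeaklyRegular_map {A B : Type*} [CommRing A] [CommRing B]
    [IsNoetherianRing A] [IsLocalRing A] (ψ : A →+* B) (surjective : Function.Surjective ψ)
    (l : List A) (hl : ∀ a ∈ l, a ∈ IsLocalRing.maximalIdeal A)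
    (regular : IsWeaklyRegular B (l.map ψ)) (ker_le : RingHom.ker ψ ≤ Ideal.ofList l) :
    RingHom.ker ψ = ⊥ := by
  induction l using List.reverseRecOn with
  | nil => simpa using ker_le
  | append_singleton l a ih =>
    rw [List.map_append, isWeaklyRegular_append_iff, List.map_singleton,
      isWeaklyRegular_singleton_iff] at regular
    obtain ⟨regular, regular_a⟩ := regular
    refine ih (fun b hb ↦ hl b (List.mem_append_left _ hb)) regular ?_
    refine Submodule.le_of_le_smul_of_le_jacobson_bot (I := IsLocalRing.maximalIdeal A)
      (IsNoetherian.noetherian _) (IsLocalRing.maximalIdeal_le_jacobson _) fun f hf ↦ ?_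
    obtain ⟨z, hz, y, hy, rfl⟩ :=
      Submodule.mem_sup.1 (Ideal.ofList_append l [a] ▸ ker_le hf)
    rw [Ideal.ofList_singleton] at hy
    obtain ⟨g, rfl⟩ := Ideal.mem_span_singleton'.1 hy
    have ψz_mem : ψ z ∈ Ideal.ofList (l.map ψ) := Ideal.map_ofList ψ l ▸ Ideal.mem_map_of_mem _ hz
    have ψg_mem : ψ g ∈ Ideal.ofList (l.map ψ) := by
      have mul_mem : ψ a * ψ g ∈ Ideal.ofList (l.map ψ) := by
        rw [RingHom.mem_ker, map_add, map_mul, mul_comm] at hf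
        rw [eq_neg_of_add_eq_zero_right hf]
        exact neg_mem ψz_mem
      rw [smul_eq_mul, Ideal.mul_top] at regular_a
      refine (Submodule.Quotient.mk_eq_zero _).1 (regular_a ?_)
      refine Eq.trans ?_ (smul_zero (ψ a)).symm
      exact (Submodule.Quotient.mk_eq_zero _).2 mul_mem
    rw [← Ideal.map_ofList, Ideal.mem_map_iff_of_surjective _ surjective] at ψg_mem
    obtain ⟨u, hu, hug⟩ := ψg_mem
    have mem_smul_ker : a * (g - u) ∈ IsLocalRing.maximalIdeal A • RingHom.ker ψ :=
      Submodule.smul_mem_smul (hl a (by simp)) (by rw [RingHom.mem_ker, map_sub, hug, sub_self])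
    have decomposition : z + g * a = (z + u * a) + a * (g - u) := by ring
    rw [decomposition]
    exact Submodule.add_mem_sup (add_mem hz (Ideal.mul_mem_right _ _ hu)) mem_smul_ker

lemma surjective_of_forall_exists_C_sub_mem {σ k B : Type*} [Finite σ] [CommRing k] [CommRing B]
    (I : Ideal B) [IsHausdorff I B] (ψ : MvPowerSeries σ k →+* B)
    (map_span : Ideal.map ψ (Ideal.span (Set.range MvPowerSeries.X)) = I)
    (h : ∀ y, ∃ a, ψ (MvPowerSeries.C a) - y ∈ I) : Function.Surjective ψ := by
  subst map_span
  refine surjective_of_mk_map_comp_surjective (I := Ideal.span (Set.range MvPowerSeries.X)) ψ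
    fun y ↦ ?_
  obtain ⟨y, rfl⟩ := Ideal.Quotient.mk_surjective y
  obtain ⟨a, ha⟩ := h y
  exact ⟨MvPowerSeries.C a, Ideal.Quotient.eq.2 ha⟩

lemma ofList_ofFn {A : Type*} [CommRing A] {n : ℕ} (f : Fin n → A) :
    Ideal.ofList (List.ofFn f) = Ideal.span (Set.range f) :=
  congrArg Ideal.span (Set.ext fun a ↦ List.mem_ofFn' f a)

lemma injective_of_isWeaklyRegular_map_X {n : ℕ} {k B : Type*} [Field k] [CommRing B]
    [Nontrivial B] (ψ : MvPowerSeries (Fin n) k →+* B) (surjective : Function.Surjective ψ)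
    (regular : IsWeaklyRegular B (List.ofFn fun j ↦ ψ (MvPowerSeries.X j))) :
    Function.Injective ψ := by
  rw [RingHom.injective_iff_ker_eq_bot]
  refine ker_eq_bot_of_isWeaklyRegular_map ψ surjective (List.ofFn MvPowerSeries.X) ?_ ?_ ?_
  · intro a ha
    obtain ⟨j, rfl⟩ := (List.mem_ofFn' _ _).1 ha
    rw [IsLocalRing.mem_maximalIdeal, mem_nonunits_iff, MvPowerSeries.isUnit_iff_constantCoeff]
    simp
  · rwa [List.map_ofFn]
  · intro f hf
    have constantCoeff_f : MvPowerSeries.constantCoeff f = 0 := by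
      by_contra ne
      have unit := (MvPowerSeries.isUnit_iff_constantCoeff.2 (isUnit_iff_ne_zero.2 ne)).map ψ
      rw [RingHom.mem_ker.1 hf] at unit
      exact not_isUnit_zero unit
    rw [ofList_ofFn]
    exact mem_span_range_X_of_constantCoeff_eq_zero constantCoeff_f

theorem exists_mvPowerSeries_ringEquiv_of_forall_exists_sub_mem {n : ℕ} {k B : Type*} [Field k]
    [CommRing B] [IsLocalRing B] [IsAdicComplete (IsLocalRing.maximalIdeal B) B] (g : k →+* B)
    (exists_sub_mem : ∀ y, ∃ a, g a - y ∈ IsLocalRing.maximalIdeal B) (x : Fin n → B)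
    (span_eq : Ideal.span (Set.range x) = IsLocalRing.maximalIdeal B)
    (regular : IsWeaklyRegular B (List.ofFn x)) :
    ∃ Ψ : MvPowerSeries (Fin n) k ≃+* B, ∀ j, Ψ (MvPowerSeries.X j) = x j := by
  let G : MvPolynomial (Fin n) k →+* B := MvPolynomial.eval₂Hom g x
  have G_X (j) : G (MvPolynomial.X j) = x j := MvPolynomial.eval₂Hom_X' ..
  have G_C (a) : G (MvPolynomial.C a) = g a := MvPolynomial.eval₂Hom_C ..
  obtain ⟨ψ, hψ⟩ := exists_mvPowerSeries_ringHom_extending (IsLocalRing.maximalIdeal B) G fun j ↦ by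
    rw [G_X, ← span_eq]
    exact Ideal.subset_span ⟨j, rfl⟩
  have ψ_X (j) : ψ (MvPowerSeries.X j) = x j := by rw [← MvPolynomial.coe_X, hψ, G_X]
  have ψ_C (a) : ψ (MvPowerSeries.C a) = g a := by rw [← MvPolynomial.coe_C, hψ, G_C]
  have map_span : Ideal.map ψ (Ideal.span (Set.range MvPowerSeries.X)) =
      IsLocalRing.maximalIdeal B := by
    rw [Ideal.map_span, ← Set.range_comp, ← span_eq]
    exact congrArg (fun f ↦ Ideal.span (Set.range f)) (funext ψ_X)
  have surjective : Function.Surjective ψ :=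
    surjective_of_forall_exists_C_sub_mem _ ψ map_span (by simpa only [ψ_C])
  have injective : Function.Injective ψ :=
    injective_of_isWeaklyRegular_map_X ψ surjective (by rwa [funext ψ_X])
  exact ⟨RingEquiv.ofBijective ψ ⟨injective, surjective⟩, ψ_X⟩

-- Cohen's structure theorem: smoothness of the residue field over `F` lifts it into the completion.
theorem exists_mvPowerSeries_ringEquiv_adicCompletion (F : Type u) [Field F] [PerfectField F]
    {S : Type u} [CommRing S] [Algebra F S] [IsNoetherianRing S] [IsLocalRing S] (l : List S)
    (regular : IsWeaklyRegular S l) (ofList_eq : Ideal.ofList l = IsLocalRing.maximalIdeal S) :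
    ∃ Ψ : MvPowerSeries (Fin l.length) (IsLocalRing.ResidueField S) ≃+*
      AdicCompletion (IsLocalRing.maximalIdeal S) S,
      ∀ j, Ψ (MvPowerSeries.X j) = algebraMap S _ (l.get j) := by
  let k := IsLocalRing.ResidueField S
  let m := IsLocalRing.maximalIdeal S
  let B := AdicCompletion m S
  have : Algebra.FormallySmooth F k := formallySmooth_of_perfectField F k
  obtain ⟨g, hg⟩ := Algebra.FormallySmooth.exists_adicCompletionEvalOneₐ_comp_eq (R := F) (A := k)
    (S := S) (I := m) (AlgHom.id F k : k →ₐ[F] S ⧸ m)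
  have maximalIdeal_eq : IsLocalRing.maximalIdeal B = m.map (algebraMap S B) :=
    AdicCompletion.maximalIdeal_eq_map
  have ofFn_eq : (List.ofFn fun j ↦ algebraMap S B (l.get j)) = l.map (algebraMap S B) :=
    List.map_ofFn.symm.trans (congrArg _ (List.ofFn_get l))
  refine exists_mvPowerSeries_ringEquiv_of_forall_exists_sub_mem (g : k →+* B) (fun y ↦ ?_)
    (fun j ↦ algebraMap S B (l.get j)) ?_ (ofFn_eq ▸ regular.of_flat)
  · have ⟨a, ha⟩ : ∃ a : k, a = AdicCompletion.evalOneₐ m y := ⟨_, rfl⟩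
    refine ⟨a, ?_⟩
    rw [maximalIdeal_eq, ← AdicCompletion.ker_evalOneₐ_eq_map _ (IsNoetherian.noetherian m)]
    refine (map_sub (AdicCompletion.evalOneₐ m) _ _).trans (sub_eq_zero.2 ?_)
    exact (DFunLike.congr_fun hg a).trans ha
  · rw [← ofList_ofFn, ofFn_eq, ← Ideal.map_ofList, ofList_eq, maximalIdeal_eq]

end CohenStructure

section TruncatedPolynomial

/-- The truncated polynomial ring `k[t] ⧸ (t ^ (N + 1))`. -/
abbrev TruncatedPolynomial (k : Type u) [Field k] (N : ℕ) : Type u :=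
  AdjoinRoot (Polynomial.X ^ (N + 1) : Polynomial k)

namespace TruncatedPolynomial

variable (k : Type u) [Field k] (N : ℕ)

/-- The class of the variable `t`. -/
noncomputable def var : TruncatedPolynomial k N := AdjoinRoot.root _

/-- The basis `1, t, …, t ^ N`. -/
noncomputable def basis : Module.Basis (Fin (N + 1)) k (TruncatedPolynomial k N) :=
  (AdjoinRoot.powerBasis' (Polynomial.monic_X_pow _)).basis.reindex
    (finCongr (by rw [AdjoinRoot.powerBasis'_dim, Polynomial.natDegree_X_pow]))

/-- Evaluation at `t = 0`. -/
noncomputable def evalZero : TruncatedPolynomial k N →ₐ[k] k :=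
  AdjoinRoot.liftAlgHom _ (Algebra.ofId k k) 0 (by simp)

/-- The coefficient of `t ^ N`. -/
noncomputable def topCoeff : TruncatedPolynomial k N →ₗ[k] k := (basis k N).coord (Fin.last N)

lemma mk_X : AdjoinRoot.mk (Polynomial.X ^ (N + 1)) Polynomial.X = var k N := AdjoinRoot.mk_X

lemma basis_last : basis k N (Fin.last N) = var k N ^ N := by
  rw [basis, Module.Basis.reindex_apply, PowerBasis.coe_basis, AdjoinRoot.powerBasis'_gen]
  rfl

lemma var_pow_succ : var k N ^ (N + 1) = 0 := by
  rw [← mk_X, ← map_pow]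
  exact AdjoinRoot.mk_self

lemma evalZero_mk (g : Polynomial k) : evalZero k N (AdjoinRoot.mk _ g) = g.coeff 0 := by
  rw [evalZero, AdjoinRoot.liftAlgHom_mk, Polynomial.coeff_zero_eq_eval_zero]
  rfl

lemma evalZero_var : evalZero k N (var k N) = 0 := by
  rw [← mk_X, evalZero_mk, Polynomial.coeff_X_zero]

lemma mk_eq_var_mul_add (g : Polynomial k) : AdjoinRoot.mk (Polynomial.X ^ (N + 1)) g =
    var k N * AdjoinRoot.mk _ g.divX + algebraMap k _ (g.coeff 0) := by
  conv_lhs => rw [← Polynomial.divX_mul_X_add g]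
  rw [map_add, map_mul, mk_X, mul_comm]
  rfl

variable {k N}

lemma exists_eq_var_mul {z : TruncatedPolynomial k N} (hz : evalZero k N z = 0) :
    ∃ w, z = var k N * w := by
  obtain ⟨g, rfl⟩ := AdjoinRoot.mk_surjective z
  rw [evalZero_mk] at hz
  exact ⟨_, by rw [mk_eq_var_mul_add, hz, map_zero, add_zero]⟩

lemma topCoeff_var_pow_mul (z : TruncatedPolynomial k N) :
    topCoeff k N (var k N ^ N * z) = evalZero k N z := by
  obtain ⟨g, rfl⟩ := AdjoinRoot.mk_surjective z
  rw [evalZero_mk, mk_eq_var_mul_add, mul_add, ← mul_assoc, ← pow_succ, var_pow_succ, zero_mul,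
    zero_add, mul_comm, ← Algebra.smul_def, map_smul, ← basis_last, topCoeff,
    Module.Basis.coord_apply, Module.Basis.repr_self, Finsupp.single_eq_same, smul_eq_mul, mul_one]

end TruncatedPolynomial

end TruncatedPolynomial

section PowerSeriesTranslation

/-- The map applying `c` to each coefficient of a power series. -/
noncomputable def mapCoeff {k K : Type*} [CommRing k] [CommRing K] [Algebra k K] (σ : Type*)
    (c : K →ₗ[k] k) : MvPowerSeries σ K →ₗ[MvPowerSeries σ k] MvPowerSeries σ k where
  toFun z := fun m ↦ c (MvPowerSeries.coeff m z)
  map_add' x y := funext fun m ↦ (congrArg c (map_add _ x y)).trans (map_add c _ _)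
  map_smul' f z := by
    classical
    refine MvPowerSeries.ext fun m ↦ ?_
    refine Eq.trans ?_ (MvPowerSeries.coeff_mul m f _).symm
    change c (MvPowerSeries.coeff m (f • z)) = _
    rw [Algebra.smul_def, MvPowerSeries.coeff_mul, map_sum]
    refine Finset.sum_congr rfl fun x _ ↦ ?_
    rw [MvPowerSeries.algebraMap_apply'', MvPowerSeries.coeff_map, ← Algebra.smul_def, map_smul]
    rfl

variable {k : Type u}

lemma coeff_mapCoeff {σ K : Type*} [CommRing k] [CommRing K] [Algebra k K] (c : K →ₗ[k] k)
    (z : MvPowerSeries σ K) (m : σ →₀ ℕ) :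
    MvPowerSeries.coeff m (mapCoeff σ c z) = c (MvPowerSeries.coeff m z) := rfl

lemma flat_mvPowerSeries_of_basis {σ K ι : Type*} [CommRing k] [CommRing K] [Algebra k K]
    [Finite ι] (b : Module.Basis ι k K) :
    Module.Flat (MvPowerSeries σ k) (MvPowerSeries σ K) := by
  let L : MvPowerSeries σ K →ₗ[MvPowerSeries σ k] (ι → MvPowerSeries σ k) :=
    LinearMap.pi fun i ↦ mapCoeff σ (b.coord i)
  have coeff_L (z : MvPowerSeries σ K) (i : ι) (m : σ →₀ ℕ) :
      MvPowerSeries.coeff m (L z i) = b.equivFun (MvPowerSeries.coeff m z) i := rfl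
  have bijective : Function.Bijective L := by
    refine ⟨fun y z hyz ↦ MvPowerSeries.ext fun m ↦ b.equivFun.injective (funext fun i ↦ ?_),
      fun y ↦ ⟨fun m ↦ b.equivFun.symm fun i ↦ MvPowerSeries.coeff m (y i),
        funext fun i ↦ MvPowerSeries.ext fun m ↦ ?_⟩⟩
    · rw [← coeff_L, ← coeff_L, hyz]
    · exact congrFun (b.equivFun.apply_symm_apply _) i
  exact Module.Flat.of_linearEquiv (LinearEquiv.ofBijective L bijective)

variable {σ : Type} [Field k]

open TruncatedPolynomial

lemma map_evalZero_algebraMap (N : ℕ) (f : MvPowerSeries σ k) :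
    MvPowerSeries.map (evalZero k N : TruncatedPolynomial k N →+* k)
      (algebraMap _ (MvPowerSeries σ (TruncatedPolynomial k N)) f) = f := by
  ext m
  rw [MvPowerSeries.coeff_map, MvPowerSeries.algebraMap_apply'', MvPowerSeries.coeff_map]
  exact (evalZero k N).commutes _

lemma exists_eq_C_var_mul {N : ℕ} {z : MvPowerSeries σ (TruncatedPolynomial k N)}
    (hz : MvPowerSeries.map (evalZero k N : TruncatedPolynomial k N →+* k) z = 0) :
    ∃ w, z = MvPowerSeries.C (var k N) * w := by
  have exists_coeff (m : σ →₀ ℕ) : ∃ w, MvPowerSeries.coeff m z = var k N * w := by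
    refine exists_eq_var_mul ?_
    have coeff_map_z := congrArg (MvPowerSeries.coeff m) hz
    rwa [MvPowerSeries.coeff_map, map_zero] at coeff_map_z
  choose w hw using exists_coeff
  refine ⟨show MvPowerSeries σ _ from w, MvPowerSeries.ext fun m ↦ ?_⟩
  rw [hw]
  exact (MvPowerSeries.coeff_C_mul ..).symm

variable [Finite σ]

open scoped Classical in
lemma hasSubst_translation (j : σ) (N : ℕ) : MvPowerSeries.HasSubst fun i : σ ↦
    (MvPowerSeries.X i + MvPowerSeries.C (if i = j then var k N else 0) :
      MvPowerSeries σ (TruncatedPolynomial k N)) := by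
  refine MvPowerSeries.hasSubst_of_constantCoeff_nilpotent fun i ↦ ⟨N + 1, ?_⟩
  rw [map_add, MvPowerSeries.constantCoeff_X, zero_add, MvPowerSeries.constantCoeff_C]
  split_ifs
  · exact var_pow_succ k N
  · exact zero_pow N.succ_ne_zero

variable (k) in
/-- The substitution `X j ↦ X j + t` on power series, with values in power series over
`k[t] ⧸ (t ^ (N + 1))`. -/
noncomputable def translation (j : σ) (N : ℕ) :
    MvPowerSeries σ k →+* MvPowerSeries σ (TruncatedPolynomial k N) :=
  (MvPowerSeries.substAlgHom (R := TruncatedPolynomial k N)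
    (hasSubst_translation j N)).toRingHom.comp (MvPowerSeries.map (algebraMap k _))

lemma translation_X_self (j : σ) (N : ℕ) :
    translation k j N (MvPowerSeries.X j) = MvPowerSeries.X j + MvPowerSeries.C (var k N) := by
  classical
  refine (congrArg _ (MvPowerSeries.map_X _ j)).trans
    ((MvPowerSeries.substAlgHom_X (hasSubst_translation j N) j).trans ?_)
  rw [if_pos rfl]

lemma translation_X_of_ne {i j : σ} (hij : i ≠ j) (N : ℕ) :
    translation k j N (MvPowerSeries.X i) = MvPowerSeries.X i := by
  classical
  refine (congrArg _ (MvPowerSeries.map_X _ i)).trans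
    ((MvPowerSeries.substAlgHom_X (hasSubst_translation j N) i).trans ?_)
  rw [if_neg hij, map_zero, add_zero]

lemma map_evalZero_translation (j : σ) (N : ℕ) (f : MvPowerSeries σ k) :
    MvPowerSeries.map (evalZero k N : TruncatedPolynomial k N →+* k) (translation k j N f) = f := by
  classical
  have translation_eq : translation k j N f = MvPowerSeries.subst _ _ :=
    congrFun (MvPowerSeries.coe_substAlgHom (hasSubst_translation j N)) _
  have map_coordinate : (fun i ↦ MvPowerSeries.map (evalZero k N : TruncatedPolynomial k N →+* k)
      (MvPowerSeries.X i + MvPowerSeries.C (if i = j then var k N else 0))) =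
        (MvPowerSeries.X : σ → MvPowerSeries σ k) := by
    funext i
    have evalZero_ite : evalZero k N (if i = j then var k N else 0) = 0 := by
      split_ifs
      exacts [evalZero_var k N, map_zero _]
    rw [map_add, MvPowerSeries.map_X, MvPowerSeries.map_C, RingHom.coe_coe, evalZero_ite, map_zero,
      add_zero]
  rw [translation_eq, MvPowerSeries.map_subst (hasSubst_translation j N), map_coordinate,
    MvPowerSeries.subst_self]
  exact map_evalZero_algebraMap N f

variable (k) in
/-- The Taylor datum over a power series ring given by translating the coordinate `X j`. -/
noncomputable abbrev translationDatum (j : σ) (N : ℕ) : TaylorDatum (MvPowerSeries σ k) where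
  Jet := MvPowerSeries σ (TruncatedPolynomial k N)
  Base := MvPowerSeries σ k
  flatJet := flat_mvPowerSeries_of_basis (basis k N)
  aug := { MvPowerSeries.map (evalZero k N : TruncatedPolynomial k N →+* k) with
           commutes' := map_evalZero_algebraMap N }
  topCoeff := mapCoeff σ (topCoeff k N)
  t := MvPowerSeries.C (var k N)
  order := N
  shift := translation k j N
  t_pow_succ_order := by rw [← map_pow, var_pow_succ, map_zero]
  aug_t := (MvPowerSeries.map_C ..).trans ((congrArg _ (evalZero_var k N)).trans (map_zero _))
  exists_shift_eq f := by
    obtain ⟨w, hw⟩ := exists_eq_C_var_mul (z := translation k j N f - algebraMap _ _ f) (by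
      rw [map_sub, map_evalZero_translation, map_evalZero_algebraMap, sub_self])
    exact ⟨w, by rw [← hw, add_sub_cancel]⟩
  topCoeff_t_pow_order_mul z := MvPowerSeries.ext fun m ↦ by
    rw [coeff_mapCoeff, ← map_pow, MvPowerSeries.coeff_C_mul, topCoeff_var_pow_mul]
    rfl

open TaylorDatum in
theorem exists_translates_of_faithfullyFlat {S : Type u} [CommRing S] {l : List S}
    (φ : S →+* MvPowerSeries (Fin l.length) k) (faithfullyFlat : φ.FaithfullyFlat)
    (hφ : ∀ i, φ (l.get i) = MvPowerSeries.X i) {x : S} (hx : x ∈ l) (n : ℕ) :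
    ∃ D : TaylorDatum S, D.Translates x l n := by
  obtain ⟨j, rfl⟩ := List.mem_iff_get.1 hx
  let _ : Algebra S (MvPowerSeries (Fin l.length) k) := φ.toAlgebra
  have : Module.FaithfullyFlat S (MvPowerSeries (Fin l.length) k) := faithfullyFlat
  have algebraMap_get (i) : algebraMap (MvPowerSeries (Fin l.length) k)
      (MvPowerSeries (Fin l.length) (TruncatedPolynomial k n)) (φ (l.get i)) =
        MvPowerSeries.X i := by
    rw [hφ, MvPowerSeries.algebraMap_apply'', MvPowerSeries.map_X]
  refine ⟨(translationDatum k j n).restrict S, rfl, this, ?_, fun y hy hne ↦ ?_⟩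
  · change translation k j n (φ (l.get j)) = algebraMap _ _ (φ (l.get j)) + _
    rw [algebraMap_get, hφ, translation_X_self]
  · obtain ⟨i, rfl⟩ := List.mem_iff_get.1 hy
    change translation k j n (φ (l.get i)) = algebraMap _ _ (φ (l.get i))
    rw [algebraMap_get, hφ, translation_X_of_ne fun h ↦ hne (congrArg l.get h)]

theorem exists_translates (F : Type u) [Field F] [PerfectField F] {S : Type u} [CommRing S]
    [Algebra F S] [IsNoetherianRing S] [IsLocalRing S] (l : List S)
    (regular : RingTheory.Sequence.IsWeaklyRegular S l)
    (ofList_eq : Ideal.ofList l = IsLocalRing.maximalIdeal S) {x : S} (hx : x ∈ l) (n : ℕ) :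
    ∃ D : TaylorDatum S, D.Translates x l n := by
  obtain ⟨Ψ, hΨ⟩ := exists_mvPowerSeries_ringEquiv_adicCompletion F l regular ofList_eq
  let completion := AdicCompletion (IsLocalRing.maximalIdeal S) S
  have : Module.Flat S completion := AdicCompletion.flat_of_isNoetherian _
  have faithfullyFlat : Module.FaithfullyFlat S completion :=
    Module.FaithfullyFlat.of_flat_of_isLocalHom
  refine exists_translates_of_faithfullyFlat
    (Ψ.symm.toRingHom.comp (algebraMap S completion)) ?_ (fun i ↦ ?_) hx n
  · exact RingHom.FaithfullyFlat.stableUnderComposition _ _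
      (RingHom.faithfullyFlat_algebraMap_iff.2 faithfullyFlat)
      (RingHom.FaithfullyFlat.of_bijective Ψ.symm.bijective)
  · exact (congrArg Ψ.symm (hΨ i)).symm.trans (Ψ.symm_apply_apply _)

end PowerSeriesTranslation

section RegularGenerators

open IsLocalRing RingTheory.Sequence
open scoped Pointwise

/-- The maximal ideal of `S` is generated by a regular sequence; for Noetherian `S` this is
regularity. -/
def HasRegularGenerators (S : Type u) [CommRing S] [IsLocalRing S] : Prop :=
  ∃ l : List S, IsWeaklyRegular S l ∧ Ideal.ofList l = maximalIdeal S

variable {S : Type u} [CommRing S] [IsLocalRing S] {x : S}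

lemma isLocalRing_quotient_span_singleton (hx : x ∈ maximalIdeal S) :
    IsLocalRing (S ⧸ Ideal.span {x}) :=
  have : Nontrivial (S ⧸ Ideal.span {x}) :=
    Ideal.Quotient.nontrivial_iff.2 (Ideal.span_singleton_ne_top hx)
  .of_surjective' (Ideal.Quotient.mk _) Ideal.Quotient.mk_surjective

lemma HasRegularGenerators.of_maximalIdeal_eq_bot (h : maximalIdeal S = ⊥) :
    HasRegularGenerators S :=
  ⟨[], IsWeaklyRegular.nil S S, by rw [Ideal.ofList_nil, h]⟩

lemma HasRegularGenerators.of_quotient (regular : IsSMulRegular S x)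
    [IsLocalRing (S ⧸ Ideal.span {x})] (h : HasRegularGenerators (S ⧸ Ideal.span {x})) :
    HasRegularGenerators S := by
  obtain ⟨l', regular', ofList_eq⟩ := h
  obtain ⟨l, rfl⟩ := List.map_surjective_iff.2 (Ideal.Quotient.mk_surjective (I := .span {x})) l'
  refine ⟨x :: l, (isWeaklyRegular_cons_iff S x l).2 ⟨regular, ?_⟩, ?_⟩
  · have span_eq : x • (⊤ : Submodule S S) = Ideal.span {x} := by
      rw [← Submodule.ideal_span_singleton_smul, smul_eq_mul, Ideal.mul_top]
    exact ((Submodule.quotEquivOfEq _ _ span_eq).isWeaklyRegular_congr l).2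
      ((isWeaklyRegular_map_algebraMap_iff (S ⧸ Ideal.span {x}) _ l).1 regular')
  · have : IsLocalHom (Ideal.Quotient.mk (Ideal.span {x})) :=
      .of_surjective _ Ideal.Quotient.mk_surjective
    rw [Ideal.ofList_cons, ← maximalIdeal_comap (Ideal.Quotient.mk (Ideal.span {x})), ← ofList_eq,
      ← Ideal.map_ofList, Ideal.comap_map_of_surjective _ Ideal.Quotient.mk_surjective,
      ← RingHom.ker_eq_comap_bot, Ideal.mk_ker, sup_comm]

variable [IsNoetherianRing S]

lemma exists_mem_maximalIdeal_notMem_sq {T : Set (Ideal S)} (finite : T.Finite)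
    (prime : ∀ P ∈ T, P.IsPrime) (not_le : ∀ P ∈ T, ¬ maximalIdeal S ≤ P)
    (ne_bot : maximalIdeal S ≠ ⊥) :
    ∃ x ∈ maximalIdeal S, x ∉ maximalIdeal S ^ 2 ∧ ∀ P ∈ T, x ∉ P := by
  by_contra! hcover
  have subset_union :
      (maximalIdeal S : Set S) ⊆ ⋃ P ∈ insert (maximalIdeal S ^ 2) T, (id P : Ideal S) := by
    intro x hx
    by_cases hsq : x ∈ maximalIdeal S ^ 2
    · exact Set.mem_biUnion (Set.mem_insert _ _) hsq
    · obtain ⟨P, hP, hxP⟩ := hcover x hx hsq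
      exact Set.mem_biUnion (Set.mem_insert_of_mem _ hP) hxP
  rw [Ideal.subset_union_prime_finite (finite.insert _) (f := id) (maximalIdeal S ^ 2)
    (maximalIdeal S ^ 2) fun P hP hne _ ↦ prime P (Set.mem_of_mem_insert_of_ne hP hne)]
    at subset_union
  obtain ⟨P, rfl | hP, hle⟩ := subset_union
  · exact ne_bot (Submodule.eq_bot_of_le_smul_of_le_jacobson_bot _ _ (IsNoetherian.noetherian _)
      (hle.trans_eq (pow_two _)) (maximalIdeal_le_jacobson _))
  · exact not_le P hP hle

lemma spanFinrank_maximalIdeal_quotient_add_one_le [IsLocalRing (S ⧸ Ideal.span {x})]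
    (hx : x ∈ maximalIdeal S) (hsq : x ∉ maximalIdeal S ^ 2) :
    (maximalIdeal (S ⧸ Ideal.span {x})).spanFinrank + 1 ≤ (maximalIdeal S).spanFinrank := by
  classical
  obtain ⟨s, hcard, hspan⟩ :=
    (IsNoetherian.noetherian (maximalIdeal S)).exists_span_finset_card_eq_spanFinrank
  obtain ⟨a, -, ha⟩ := Submodule.mem_span_finset.1 (hspan.ge hx)
  obtain ⟨y, hys, hy⟩ : ∃ y ∈ s, IsUnit (a y) := by
    by_contra! hnonunit
    refine hsq (ha ▸ pow_two (maximalIdeal S) ▸ Ideal.sum_mem _ fun y hy ↦ ?_)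
    exact Ideal.mul_mem_mul ((mem_maximalIdeal _).2 (hnonunit y hy))
      (hspan ▸ Submodule.subset_span hy)
  let π := Ideal.Quotient.mk (Ideal.span {x})
  have mem_span : π y ∈ Ideal.span (π '' (s.erase y)) := by
    have sum_eq_zero : π (a y) * π y + ∑ z ∈ s.erase y, π (a z) * π z = 0 := by
      simp only [← map_mul, ← map_sum, ← map_add]
      rw [Finset.add_sum_erase s (fun z ↦ a z * z) hys, Ideal.Quotient.eq_zero_iff_mem]
      exact ha ▸ Ideal.mem_span_singleton_self x
    rw [← Ideal.unit_mul_mem_iff_mem _ (hy.map π), eq_neg_of_add_eq_zero_left sum_eq_zero]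
    exact neg_mem (Ideal.sum_mem _ fun z hz ↦
      Ideal.mul_mem_left _ _ (Ideal.subset_span (Set.mem_image_of_mem π hz)))
  have span_image : Ideal.span (π '' (s.erase y)) = maximalIdeal (S ⧸ Ideal.span {x}) := by
    rw [← map_maximalIdeal_of_surjective π Ideal.Quotient.mk_surjective, ← hspan,
      Ideal.submodule_span_eq, Ideal.map_span, ← Finset.insert_erase hys, Finset.coe_insert,
      Set.image_insert_eq, Finset.erase_insert_eq_erase, Finset.erase_idem, Ideal.span_insert,
      sup_eq_right.2 ((Ideal.span_singleton_le_iff_mem _).2 mem_span)]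
  have := Submodule.spanFinrank_span_le_ncard_of_finite (R := S ⧸ Ideal.span {x})
    ((s.erase y).finite_toSet.image π)
  rw [Ideal.submodule_span_eq, span_image] at this
  rw [← hcard, ← Finset.card_erase_add_one hys]
  exact Nat.add_le_add_right (this.trans ((Set.ncard_image_le (s.erase y).finite_toSet).trans_eq
    (Set.ncard_coe_finset _))) 1

end RegularGenerators

section RegularLocalRing

open IsLocalRing

lemma isRegularLocalRing_quotient_span_singleton {S : Type u} [CommRing S] [IsRegularLocalRing S]
    {x : S} (hx : x ∈ maximalIdeal S) (hsq : x ∉ maximalIdeal S ^ 2) :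
    IsRegularLocalRing (S ⧸ Ideal.span {x}) := by
  have := isLocalRing_quotient_span_singleton hx
  refine .of_spanFinrank_maximalIdeal_le _ (le_of_not_gt fun hlt ↦ ?_)
  have dim_le := ringKrullDim_le_ringKrullDim_quotient_add_spanFinrank (Ideal.span {x})
    ((Ideal.span_singleton_le_iff_mem _).2 (ringJacobson_eq_maximalIdeal S ▸ hx))
  rw [Submodule.spanFinrank_singleton (ne_of_mem_of_not_mem (zero_mem _) hsq).symm, Nat.cast_one,
    ← IsRegularLocalRing.spanFinrank_maximalIdeal] at dim_le
  have finrank_le := Nat.cast_le.1 (dim_le.trans (ENat.WithBot.add_one_le_natCast_iff.2 hlt))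
  exact absurd (spanFinrank_maximalIdeal_quotient_add_one_le hx hsq) (by omega)

lemma maximalIdeal_eq_bot_of_mem_minimalPrimes (S : Type u) [CommRing S] [IsRegularLocalRing S]
    (h : maximalIdeal S ∈ minimalPrimes S) : maximalIdeal S = ⊥ := by
  have finrank_eq := IsRegularLocalRing.spanFinrank_maximalIdeal (R := S)
  rw [← maximalIdeal_height_eq_ringKrullDim, Ideal.height_eq_zero_iff.2 h] at finrank_eq
  exact (Submodule.spanFinrank_eq_zero_iff_eq_bot (IsNoetherian.noetherian _)).1
    (by exact_mod_cast finrank_eq)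

lemma exists_mem_maximalIdeal_notMem_sq_of_isRegularLocalRing {S : Type u} [CommRing S]
    [IsRegularLocalRing S] (ne_bot : maximalIdeal S ≠ ⊥) :
    ∃ x ∈ maximalIdeal S, x ∉ maximalIdeal S ^ 2 ∧ ∀ P ∈ minimalPrimes S, x ∉ P :=
  exists_mem_maximalIdeal_notMem_sq (minimalPrimes.finite_of_isNoetherianRing S)
    (fun _ hP ↦ hP.1.1) (fun _ hP hle ↦ ne_bot (maximalIdeal_eq_bot_of_mem_minimalPrimes S
      (le_antisymm hle (le_maximalIdeal hP.1.1.ne_top) ▸ hP))) ne_bot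

/-- Nakayama: a minimal prime `P ⊆ (x)` with `x ∉ P` satisfies `P = xP`. -/
lemma isDomain_of_isPrime_span_singleton {S : Type u} [CommRing S] [IsLocalRing S]
    [IsNoetherianRing S] {x : S} (hx : x ∈ maximalIdeal S) (notMem : ∀ P ∈ minimalPrimes S, x ∉ P)
    (prime : (Ideal.span {x}).IsPrime) : IsDomain S := by
  obtain ⟨P, hP, hle⟩ := Ideal.exists_minimalPrimes_le (bot_le (a := Ideal.span {x}))
  have P_prime : P.IsPrime := hP.1.1
  have P_eq_bot : P = ⊥ := by
    refine Submodule.eq_bot_of_le_smul_of_le_jacobson_bot (maximalIdeal S) P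
      (IsNoetherian.noetherian _) (fun y hy ↦ ?_) (maximalIdeal_le_jacobson _)
    obtain ⟨z, rfl⟩ := Ideal.mem_span_singleton.1 (hle hy)
    exact Ideal.mul_mem_mul hx ((P_prime.mem_or_mem hy).resolve_left (notMem P hP))
  have : (⊥ : Ideal S).IsPrime := P_eq_bot ▸ P_prime
  exact .of_bot_isPrime S

lemma isDomain_of_isRegularLocalRing (S : Type u) [CommRing S] [IsRegularLocalRing S] :
    IsDomain S := by
  induction h : (maximalIdeal S).spanFinrank using Nat.strong_induction_on generalizing S with
  | _ n ih =>
  by_cases ne_bot : maximalIdeal S = ⊥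
  · exact (isField_iff_maximalIdeal_eq.2 ne_bot).isDomain
  obtain ⟨x, hx, hsq, notMem⟩ := exists_mem_maximalIdeal_notMem_sq_of_isRegularLocalRing ne_bot
  have := isRegularLocalRing_quotient_span_singleton hx hsq
  have finrank_lt := spanFinrank_maximalIdeal_quotient_add_one_le hx hsq
  have := ih _ (by omega) (S ⧸ Ideal.span {x}) rfl
  exact isDomain_of_isPrime_span_singleton hx notMem ((Ideal.Quotient.isDomain_iff_prime _).1 this)

lemma HasRegularGenerators.of_isRegularLocalRing (S : Type u) [CommRing S]
    [IsRegularLocalRing S] : HasRegularGenerators S := by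
  induction h : (maximalIdeal S).spanFinrank using Nat.strong_induction_on generalizing S with
  | _ n ih =>
  by_cases ne_bot : maximalIdeal S = ⊥
  · exact .of_maximalIdeal_eq_bot ne_bot
  obtain ⟨x, hx, hsq, -⟩ := exists_mem_maximalIdeal_notMem_sq_of_isRegularLocalRing ne_bot
  have := isRegularLocalRing_quotient_span_singleton hx hsq
  have := isDomain_of_isRegularLocalRing S
  have finrank_lt := spanFinrank_maximalIdeal_quotient_add_one_le hx hsq
  exact .of_quotient (.of_ne_zero (ne_of_mem_of_not_mem (zero_mem _) hsq).symm)
    (ih _ (by omega) (S ⧸ Ideal.span {x}) rfl)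

end RegularLocalRing

section ProjectiveDimension

open IsLocalRing
open scoped Pointwise

/-- The projective dimension of `M` is less than `n`: Mathlib's `HasProjectiveDimensionLT` for an
unbundled module. -/
abbrev ProjDimLT (R : Type u) [CommRing R] (M : Type u) [AddCommGroup M] [Module R M] (n : ℕ) :
    Prop :=
  HasProjectiveDimensionLT (ModuleCat.of R M) n

variable {R : Type u} [CommRing R] {M N : Type u} [AddCommGroup M] [Module R M] [AddCommGroup N]
  [Module R N] {n : ℕ}

lemma ProjDimLT.of_linearEquiv (h : ProjDimLT R M n) (e : M ≃ₗ[R] N) : ProjDimLT R N n :=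
  have : HasProjectiveDimensionLT (ModuleCat.of R M) n := h
  hasProjectiveDimensionLT_of_iso e.toModuleIso n

lemma projDimLT_one_iff : ProjDimLT R M 1 ↔ Module.Projective R M := by
  rw [IsProjective.iff_projective]
  exact (projective_iff_hasProjectiveDimensionLT_one (X := ModuleCat.of R M)).symm

lemma projDimLT_succ_of_projective (R M : Type u) [CommRing R] [AddCommGroup M] [Module R M]
    [Module.Projective R M] (n : ℕ) : ProjDimLT R M (n + 1) :=
  have := projDimLT_one_iff.2 (‹_› : Module.Projective R M)
  hasProjectiveDimensionLT_of_ge _ 1 _ (Nat.le_add_left 1 n)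

lemma projDimLT_of_subsingleton (R M : Type u) [CommRing R] [AddCommGroup M] [Module R M]
    [Subsingleton M] (n : ℕ) : ProjDimLT R M n :=
  have := (hasProjectiveDimensionLT_zero_iff_isZero (ModuleCat.of R M)).2
    (ModuleCat.isZero_iff_subsingleton.2 (inferInstanceAs (Subsingleton M)))
  hasProjectiveDimensionLT_of_ge _ 0 _ (Nat.zero_le n)

lemma ProjDimLT.ker_of_surjective [Module.Projective R M] (h : ProjDimLT R N (n + 2))
    (g : M →ₗ[R] N) (hg : Function.Surjective g) : ProjDimLT R (LinearMap.ker g) (n + 1) :=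
  (shortExact_of_exact (LinearMap.ker g).injective_subtype hg
    (LinearMap.exact_subtype_ker_map g)).hasProjectiveDimensionLT_X₁ (n + 1)
    (projDimLT_succ_of_projective R M n) h

lemma ProjDimLT.of_retract (h : ProjDimLT R N n) (f : M →ₗ[R] N) (g : N →ₗ[R] M)
    (hgf : g ∘ₗ f = LinearMap.id) : ProjDimLT R M n :=
  (Retract.mk (X := ModuleCat.of R M) (Y := ModuleCat.of R N) (ModuleCat.ofHom f)
    (ModuleCat.ofHom g) (by rw [← ModuleCat.ofHom_comp, hgf]; rfl)).hasProjectiveDimensionLT n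

lemma ProjDimLT.localizedModule (h : ProjDimLT R M (n + 1)) (W : Submonoid R) :
    ProjDimLT (Localization W) (LocalizedModule W M) (n + 1) :=
  have : HasProjectiveDimensionLE (ModuleCat.of R M) n := h
  ProjDimLT.of_linearEquiv (ModuleCat.localizedModule_hasProjectiveDimensionLE n W (.of R M))
    (Shrink.linearEquiv (Localization W) (LocalizedModule W M))

lemma ProjDimLT.quotient_of_colon {J : Ideal R} {a : R}
    (colon : ProjDimLT R (R ⧸ J.colon {a}) n) (sup : ProjDimLT R (R ⧸ J ⊔ Ideal.span {a}) n) :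
    ProjDimLT R (R ⧸ J) n := by
  have colon_eq : J.colon {a} = LinearMap.ker (LinearMap.toSpanSingleton R (R ⧸ J) (J.mkQ a)) := by
    ext r
    rw [Submodule.mem_colon_singleton, LinearMap.mem_ker, LinearMap.toSpanSingleton_apply,
      ← map_smul, Submodule.mkQ_apply, Submodule.Quotient.mk_eq_zero]
  let mulA : (R ⧸ J.colon {a}) →ₗ[R] R ⧸ J := (J.colon {a}).liftQ _ colon_eq.le
  have sup' : ProjDimLT R ((R ⧸ J) ⧸ Submodule.map J.mkQ (Ideal.span {a})) n :=
    sup.of_linearEquiv (J.quotientQuotientEquivQuotientSup (Ideal.span {a})).symm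
  refine (shortExact_of_exact (f := mulA)
    (LinearMap.ker_eq_bot.1 (Submodule.ker_liftQ_eq_bot' _ _ colon_eq))
    (Submodule.mkQ_surjective _) ?_).hasProjectiveDimensionLT_X₂ n colon sup'
  rw [LinearMap.exact_iff, Submodule.ker_mkQ, Submodule.range_liftQ,
    LinearMap.range_toSpanSingleton, Submodule.map_span, Set.image_singleton]

lemma ProjDimLT.of_quotSMulTop [IsLocalRing R] [IsNoetherianRing R] [Module.Finite R M] {x : R}
    (h : ProjDimLT R (QuotSMulTop x M) n) (hx : x ∈ maximalIdeal R) (regular : IsSMulRegular M x) :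
    ProjDimLT R M n := by
  have succ_eq := ModuleCat.projectiveDimension_quotSMulTop_eq_succ_of_isSMulRegular
    (ModuleCat.of R M) x regular hx
  refine projectiveDimension_lt_iff.1 (lt_of_le_of_lt ?_ (projectiveDimension_lt_iff.2 h))
  exact (le_add_of_nonneg_right zero_le_one).trans succ_eq.ge

/-- Noetherian induction on `J`: a prime `J` is reduced to `J ⊔ (x)` by a regular element `x` of
`R ⧸ J`, any other `J` to `J.colon {a}` and `J ⊔ (a)` by a zero divisor `a` of `R ⧸ J`. -/
lemma ProjDimLT.quotient_of_residueField [IsLocalRing R] [IsNoetherianRing R]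
    (h : ProjDimLT R (ResidueField R) n) (J : Ideal R) : ProjDimLT R (R ⧸ J) n := by
  induction J using WellFoundedGT.induction with
  | ind J ih =>
  by_cases hJ : J = ⊤
  · have := Ideal.Quotient.subsingleton_iff.2 hJ
    exact projDimLT_of_subsingleton R (R ⧸ J) n
  have lt_sup {a : R} (ha : a ∉ J) : J < J ⊔ Ideal.span {a} :=
    left_lt_sup.2 (mt (Ideal.span_singleton_le_iff_mem J).1 ha)
  by_cases prime : J.IsPrime
  · by_cases hmax : J = maximalIdeal R
    · exact hmax ▸ h
    obtain ⟨x, hx, hxJ⟩ := SetLike.exists_of_lt ((le_maximalIdeal hJ).lt_of_ne hmax)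
    have map_span : Submodule.map J.mkQ (Ideal.span {x}) = x • ⊤ := by
      rw [← Submodule.ideal_span_singleton_smul, ← J.range_mkQ, ← Submodule.map_top,
        ← Submodule.map_smul'', smul_eq_mul, Ideal.mul_top]
    refine ProjDimLT.of_quotSMulTop (x := x) ?_ hx ?_
    · exact (ih _ (lt_sup hxJ)).of_linearEquiv
        ((J.quotientQuotientEquivQuotientSup (Ideal.span {x})).symm.trans
          (Submodule.quotEquivOfEq _ _ map_span))
    · exact (isSMulRegular_algebraMap_iff (R ⧸ J)).1 (IsSMulRegular.of_ne_zero
        (mt (Ideal.Quotient.eq_zero_iff_mem (I := J)).1 hxJ))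
  · obtain ⟨a, ha, b, hb, hab⟩ := (Ideal.not_isPrime_iff.1 prime).resolve_left hJ
    refine .quotient_of_colon (ih _ (SetLike.lt_iff_le_and_exists.2 ⟨?_, b, ?_, hb⟩))
      (ih _ (lt_sup ha))
    · exact fun y hy ↦ Submodule.mem_colon_singleton.2 (J.mul_mem_right a hy)
    · exact Submodule.mem_colon_singleton.2 (by rwa [smul_eq_mul, mul_comm])

lemma HasRegularGenerators.exists_projDimLT_residueField [IsLocalRing R] [IsNoetherianRing R]
    (h : HasRegularGenerators R) : ∃ n, ProjDimLT R (ResidueField R) (n + 1) := by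
  obtain ⟨l, regular, ofList_eq⟩ := h
  have projDim_eq := ModuleCat.projectiveDimension_quotient_eq_add_length_of_isWeaklyRegular
    (ModuleCat.of R R) l regular fun r hr ↦ ofList_eq ▸ Ideal.subset_span hr
  have projective : Projective (ModuleCat.of R R) := (IsProjective.iff_projective R).1 inferInstance
  rw [ModuleCat.projectiveDimension_eq_zero_of_projective (.of R R), zero_add] at projDim_eq
  refine ⟨l.length, ProjDimLT.of_linearEquiv ((projectiveDimension_le_iff _ _).1 projDim_eq.le)
    (Submodule.quotEquivOfEq _ (maximalIdeal R) ?_)⟩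
  rw [ofList_eq, smul_eq_mul, Ideal.mul_top]

end ProjectiveDimension

section Serre

open IsLocalRing
open scoped Pointwise TensorProduct

lemma exists_minimal_presentation (S M : Type u) [CommRing S] [IsLocalRing S] [AddCommGroup M]
    [Module S M] [Module.Finite S M] : ∃ (r : ℕ) (g : (Fin r → S) →ₗ[S] M),
      Function.Surjective g ∧ ∀ v ∈ LinearMap.ker g, ∀ i, v i ∈ maximalIdeal S := by
  let b := Module.finBasis (ResidueField S) (ResidueField S ⊗[S] M)
  obtain ⟨m, hm⟩ := (TensorProduct.mk_surjective S M (ResidueField S)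
    Ideal.Quotient.mk_surjective).comp_left (α := Fin _) b
  have tmul_m (i) : (1 : ResidueField S) ⊗ₜ[S] m i = b i := congrFun hm i
  refine ⟨_, Fintype.linearCombination S m, ?_, fun v hv i ↦ ?_⟩
  · rw [← LinearMap.range_eq_top, Fintype.range_linearCombination]
    exact span_eq_top_of_tmul_eq_basis m b tmul_m
  · have sum_eq : ∑ i, residue S (v i) • b i = 0 := by
      have := congrArg (TensorProduct.mk S (ResidueField S) M 1) (LinearMap.mem_ker.1 hv)
      simp only [Fintype.linearCombination_apply, map_sum, map_smul, TensorProduct.mk_apply,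
        tmul_m, map_zero] at this
      exact (Finset.sum_congr rfl fun i _ ↦
        algebraMap_smul (ResidueField S) (v i) (b i)).trans this
    exact (residue_eq_zero_iff _).1 (Fintype.linearIndependent_iff.1 b.linearIndependent _ sum_eq i)

lemma ProjDimLT.free_of_mul_maximalIdeal_eq_zero {S : Type u} [CommRing S] [IsLocalRing S]
    [IsNoetherianRing S] {s : S} (hs : s ≠ 0) (mul_eq_zero : ∀ y ∈ maximalIdeal S, s * y = 0)
    {n : ℕ} {M : Type u} [AddCommGroup M] [Module S M] [Module.Finite S M]
    (h : ProjDimLT S M (n + 1)) : Module.Free S M := by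
  induction n generalizing M with
  | zero =>
    have := projDimLT_one_iff.1 h
    exact Module.free_of_flat_of_isLocalRing
  | succ n ih =>
    obtain ⟨r, g, hg, ker_le⟩ := exists_minimal_presentation S M
    have free_ker := ih (h.ker_of_surjective g hg)
    have ker_eq_bot : LinearMap.ker g = ⊥ := by
      by_contra ne_bot
      have := Submodule.nontrivial_iff_ne_bot.2 ne_bot
      have mem_annihilator : s ∈ Module.annihilator S (LinearMap.ker g) :=
        Module.mem_annihilator.2 fun v ↦ Subtype.ext <| funext fun i ↦
          mul_eq_zero _ (ker_le v v.2 i)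
      rw [Module.annihilator_eq_bot.2 inferInstance] at mem_annihilator
      exact hs mem_annihilator
    exact Module.Free.of_equiv
      (LinearEquiv.ofBijective g ⟨LinearMap.ker_eq_bot.1 ker_eq_bot, hg⟩)

lemma injective_quotSMulTop_map_ker_subtype {S M N : Type u} [CommRing S] [AddCommGroup M]
    [Module S M] [AddCommGroup N] [Module S N] {x : S} (regular : IsSMulRegular N x)
    (g : M →ₗ[S] N) : Function.Injective (QuotSMulTop.map x (LinearMap.ker g).subtype) := by
  rw [injective_iff_map_eq_zero]
  intro a ha
  obtain ⟨v, rfl⟩ := Submodule.Quotient.mk_surjective _ a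
  rw [QuotSMulTop.map_apply_mk, Submodule.Quotient.mk_eq_zero] at ha
  obtain ⟨w, -, hw : x • w = v⟩ := ha
  have w_mem_ker : g w = 0 := by
    refine regular.right_eq_zero_of_smul ?_
    rw [← map_smul, hw]
    exact v.2
  exact (Submodule.Quotient.mk_eq_zero _).2 ⟨⟨w, w_mem_ker⟩, trivial, Subtype.ext hw⟩

lemma ProjDimLT.quotSMulTop {S : Type u} [CommRing S] [IsLocalRing S] [IsNoetherianRing S]
    {x : S} (hx : IsSMulRegular S x) {n : ℕ} {M : Type u} [AddCommGroup M] [Module S M]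
    [Module.Finite S M] (regular : IsSMulRegular M x) (h : ProjDimLT S M (n + 1)) :
    ProjDimLT (S ⧸ Ideal.span {x}) (QuotSMulTop x M) (n + 1) := by
  induction n generalizing M with
  | zero =>
    have := projDimLT_one_iff.1 h
    have : Module.Free S M := Module.free_of_flat_of_isLocalRing
    exact projDimLT_one_iff.2 inferInstance
  | succ n ih =>
    obtain ⟨r, g, hg⟩ := Module.Finite.exists_fin' S M
    have regular_pi : IsSMulRegular (Fin r → S) x := IsSMulRegular.pi fun _ ↦ hx
    have surj : Function.Surjective (algebraMap S (S ⧸ Ideal.span {x})) :=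
      Ideal.Quotient.mk_surjective
    exact (shortExact_of_exact
      (f := (QuotSMulTop.map x (LinearMap.ker g).subtype).extendScalarsOfSurjective surj)
      (g := (QuotSMulTop.map x g).extendScalarsOfSurjective surj)
      (injective_quotSMulTop_map_ker_subtype regular g) (QuotSMulTop.map_surjective x hg)
      (QuotSMulTop.map_exact x (LinearMap.exact_subtype_ker_map g) hg)).hasProjectiveDimensionLT_X₃
      (n + 1) (ih (regular_pi.submodule _ _) (h.ker_of_surjective g hg))
      (projDimLT_succ_of_projective _ _ _)

lemma ProjDimLT.residueField_of_linearMap {A N : Type u} [CommRing A] [IsLocalRing A]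
    [AddCommGroup N] [Module A N] {n : ℕ} (h : ProjDimLT A N n) {y : N}
    (smul_eq_zero : ∀ a ∈ maximalIdeal A, a • y = 0) (g : N →ₗ[A] ResidueField A) (hg : g y = 1) :
    ProjDimLT A (ResidueField A) n := by
  refine h.of_retract ((maximalIdeal A).liftQ (LinearMap.toSpanSingleton A N y) smul_eq_zero) g
    (Submodule.linearMap_qext _ (LinearMap.ext_ring ?_))
  change g ((1 : A) • y) = 1
  rw [one_smul, hg]

lemma exists_linearMap_maximalIdeal_residueField {S : Type u} [CommRing S] [IsLocalRing S]
    {x : maximalIdeal S} (hx : (x : S) ∉ maximalIdeal S ^ 2) :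
    ∃ φ : maximalIdeal S →ₗ[S] ResidueField S, φ x = 1 := by
  have cotangent_ne_zero : ((maximalIdeal S).toCotangent x : CotangentSpace S) ≠ 0 :=
    mt (Ideal.toCotangent_eq_zero _ _).1 hx
  obtain ⟨f, hf⟩ := Module.Projective.exists_dual_eq_one (ResidueField S) cotangent_ne_zero
  exact ⟨(f.restrictScalars S) ∘ₗ (maximalIdeal S).toCotangent, hf⟩

lemma algebraMap_residueField_quotient_eq_zero {S : Type u} [CommRing S] [IsLocalRing S]
    {J : Ideal S} [IsLocalRing (S ⧸ J)] {a : S} (ha : a ∈ maximalIdeal S) :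
    algebraMap S (ResidueField (S ⧸ J)) a = 0 := by
  have := IsLocalHom.of_surjective (Ideal.Quotient.mk J) Ideal.Quotient.mk_surjective
  exact (residue_eq_zero_iff _).2 (map_nonunit (Ideal.Quotient.mk J) a ha)

/-- Since `x ∉ m ^ 2`, the residue field is a direct summand of `m ⧸ x m`, spanned by the class
of `x`. -/
lemma ProjDimLT.residueField_quotient_span_singleton {S : Type u} [CommRing S] [IsLocalRing S]
    [IsNoetherianRing S] {x : S} [IsLocalRing (S ⧸ Ideal.span {x})] (regular : IsSMulRegular S x)
    (hx : x ∈ maximalIdeal S) (hx2 : x ∉ maximalIdeal S ^ 2) {n : ℕ}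
    (h : ProjDimLT S (ResidueField S) (n + 2)) :
    ProjDimLT (S ⧸ Ideal.span {x}) (ResidueField (S ⧸ Ideal.span {x})) (n + 1) := by
  have projDim_ker := h.ker_of_surjective (maximalIdeal S).mkQ (Submodule.mkQ_surjective _)
  have projDim_maximalIdeal : ProjDimLT S (maximalIdeal S) (n + 1) :=
    projDim_ker.of_linearEquiv (LinearEquiv.ofEq _ _ (Submodule.ker_mkQ _))
  obtain ⟨φ, hφ⟩ := exists_linearMap_maximalIdeal_residueField (x := ⟨x, hx⟩) hx2
  let e : ResidueField S →ₐ[S] ResidueField (S ⧸ Ideal.span {x}) :=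
    Ideal.Quotient.liftₐ (maximalIdeal S) (Algebra.ofId S _) fun _ ↦
      algebraMap_residueField_quotient_eq_zero
  have smul_le_ker : x • ⊤ ≤ LinearMap.ker (e.toLinearMap ∘ₗ φ) := by
    rintro _ ⟨y, -, rfl⟩
    change e (φ (x • y)) = 0
    rw [map_smul, map_smul, Algebra.smul_def, algebraMap_residueField_quotient_eq_zero hx,
      zero_mul]
  let g : QuotSMulTop x (maximalIdeal S) →ₗ[S] ResidueField (S ⧸ Ideal.span {x}) :=
    Submodule.liftQ _ _ smul_le_ker
  refine (projDim_maximalIdeal.quotSMulTop regular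
    (regular.submodule _ _)).residueField_of_linearMap
    (y := Submodule.Quotient.mk ⟨x, hx⟩) ?_
    (g.extendScalarsOfSurjective Ideal.Quotient.mk_surjective) ?_
  · intro a ha
    obtain ⟨a, rfl⟩ := Ideal.Quotient.mk_surjective a
    have a_mem : a ∈ maximalIdeal S := fun unit ↦ ha (unit.map _)
    exact (Submodule.Quotient.mk_eq_zero _).2 ⟨⟨a, a_mem⟩, trivial, Subtype.ext (mul_comm x a)⟩
  · change e (φ ⟨x, hx⟩) = 1
    rw [hφ, map_one]

lemma exists_mul_maximalIdeal_eq_zero_of_le_associatedPrime {S : Type u} [CommRing S]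
    [IsLocalRing S] [IsNoetherianRing S] {P : Ideal S} (hP : P ∈ associatedPrimes S S)
    (le : maximalIdeal S ≤ P) : ∃ s : S, s ≠ 0 ∧ ∀ y ∈ maximalIdeal S, s * y = 0 := by
  obtain ⟨prime, s, rfl⟩ := isAssociatedPrime_iff.1 hP
  refine ⟨s, fun hs ↦ prime.ne_top ?_, fun y hy ↦ ?_⟩
  · exact (Submodule.colon_eq_top_iff_subset _).2 (Set.singleton_subset_iff.2 hs)
  · exact (mul_comm s y).trans (Submodule.mem_colon_singleton.1 (le hy))

lemma exists_isSMulRegular_mem_maximalIdeal_notMem_sq {S : Type u} [CommRing S] [IsLocalRing S]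
    [IsNoetherianRing S] (ne_bot : maximalIdeal S ≠ ⊥) {n : ℕ}
    (h : ProjDimLT S (ResidueField S) (n + 1)) :
    ∃ x ∈ maximalIdeal S, x ∉ maximalIdeal S ^ 2 ∧ IsSMulRegular S x := by
  have not_le : ∀ P ∈ associatedPrimes S S, ¬ maximalIdeal S ≤ P := by
    intro P hP le
    obtain ⟨s, hs, mul_eq_zero⟩ := exists_mul_maximalIdeal_eq_zero_of_le_associatedPrime hP le
    have free : Module.Free S (S ⧸ maximalIdeal S) :=
      h.free_of_mul_maximalIdeal_eq_zero hs mul_eq_zero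
    exact ne_bot (Ideal.annihilator_quotient (I := maximalIdeal S) ▸
      Module.annihilator_eq_bot.2 inferInstance)
  obtain ⟨x, hx, hx2, notMem⟩ := exists_mem_maximalIdeal_notMem_sq
    (associatedPrimes.finite S S) (fun P hP ↦ hP.isPrime) not_le ne_bot
  refine ⟨x, hx, hx2, not_not.1 fun not_regular ↦ ?_⟩
  have mem_biUnion : x ∈ ⋃ p ∈ associatedPrimes S S, (p : Set S) := by
    rw [biUnion_associatedPrimes_eq_compl_regular]
    exact not_regular
  obtain ⟨P, hP, mem⟩ := Set.mem_iUnion₂.1 mem_biUnion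
  exact notMem P hP mem

lemma ProjDimLT.hasRegularGenerators {S : Type u} [CommRing S] [IsLocalRing S]
    [IsNoetherianRing S] {n : ℕ} (h : ProjDimLT S (ResidueField S) (n + 1)) :
    HasRegularGenerators S := by
  induction hd : (maximalIdeal S).spanFinrank using Nat.strong_induction_on
    generalizing S n with
  | h d ih =>
  by_cases ne_bot : maximalIdeal S = ⊥
  · exact .of_maximalIdeal_eq_bot ne_bot
  obtain ⟨x, hx, hx2, regular⟩ := exists_isSMulRegular_mem_maximalIdeal_notMem_sq ne_bot h
  have := isLocalRing_quotient_span_singleton hx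
  have h_quotient := ProjDimLT.residueField_quotient_span_singleton regular hx hx2
    (hasProjectiveDimensionLT_of_ge _ (n + 1) (n + 2) (Nat.le_succ _))
  have lt := spanFinrank_maximalIdeal_quotient_add_one_le hx hx2
  exact .of_quotient regular (ih _ (by omega) h_quotient rfl)

end Serre

section LocalizationAtPrime

open IsLocalRing
open RingTheory.Sequence (IsWeaklyRegular isWeaklyRegular_append_iff isWeaklyRegular_singleton_iff)

lemma nodup_of_isWeaklyRegular {S : Type*} [CommRing S] {l : List S}
    (regular : IsWeaklyRegular S l) (ne_top : Ideal.ofList l ≠ ⊤) : l.Nodup := by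
  induction l using List.reverseRecOn with
  | nil => exact List.nodup_nil
  | append_singleton l x ih =>
    have ne_top_l : Ideal.ofList l ≠ ⊤ := fun h ↦
      ne_top (by rw [Ideal.ofList_append, h, top_sup_eq])
    obtain ⟨regular_l, regular_x⟩ := (isWeaklyRegular_append_iff _ _ _).1 regular
    rw [smul_eq_mul, Ideal.mul_top, isWeaklyRegular_singleton_iff] at regular_x
    refine List.nodup_append_comm.1
      (List.nodup_cons.2 ⟨fun hx ↦ ne_top_l ?_, ih regular_l ne_top_l⟩)
    have one_eq_zero : (1 : S ⧸ Ideal.ofList l) = 0 :=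
      regular_x.right_eq_zero_of_smul ((Submodule.Quotient.mk_eq_zero _).2
        ((Ideal.ofList l).mul_mem_right 1 (Ideal.subset_span hx)))
    exact (Ideal.eq_top_iff_one _).2 (Ideal.Quotient.eq_zero_iff_mem.1 one_eq_zero)

lemma perfectField_subfield_bot (k : Type*) [Field k] : PerfectField (⊥ : Subfield k) := by
  obtain ⟨q, hq⟩ := CharP.exists k
  rcases CharP.char_is_prime_or_zero k q with prime | rfl
  · have : Fact q.Prime := ⟨prime⟩
    let _ : Algebra (ZMod q) k := ZMod.algebra k q
    rw [Subfield.bot_eq_of_zMod_algebra q]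
    have : Finite (algebraMap (ZMod q) k).fieldRange :=
      Finite.of_surjective _ (algebraMap (ZMod q) k).rangeRestrict_surjective
    infer_instance
  · have : CharZero k := CharP.charP_to_charZero k
    infer_instance

variable {R : Type u} [CommRing R]

lemma comap_mem_support_of_mem_support_localizedModule (W : Submonoid R) (M : Type*)
    [AddCommGroup M] [Module R M] {q : PrimeSpectrum (Localization W)}
    (hq : q ∈ Module.support (Localization W) (LocalizedModule W M)) :
    PrimeSpectrum.comap (algebraMap R (Localization W)) q ∈ Module.support R M := by
  obtain ⟨z, hz⟩ := Module.mem_support_iff_exists_annihilator.1 hq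
  induction z using LocalizedModule.induction_on with
  | h m w =>
    refine Module.mem_support_iff_exists_annihilator.2 ⟨m, fun r hr ↦ hz ?_⟩
    rw [Submodule.mem_annihilator_span_singleton] at hr ⊢
    rw [algebraMap_smul, LocalizedModule.smul'_mk, hr, LocalizedModule.zero_mk]

lemma supportDim_localizedModule_add_one_le [IsLocalRing R] (M : Type u) [AddCommGroup M]
    [Module R M] {p : Ideal R} [p.IsPrime] (hp : p ≠ maximalIdeal R) :
    Module.supportDim (Localization.AtPrime p) (LocalizedModule p.primeCompl M) + 1 ≤
      Module.supportDim R M := by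
  let S := Localization.AtPrime p
  let SuppLoc := Module.support S (LocalizedModule p.primeCompl M)
  let f : SuppLoc → Module.support R M := fun q ↦
    ⟨PrimeSpectrum.comap (algebraMap R S) q,
      comap_mem_support_of_mem_support_localizedModule p.primeCompl M q.2⟩
  have strictMono_f : StrictMono f := fun a b hab ↦
    (IsLocalization.orderEmbedding p.primeCompl S).lt_iff_lt.2 hab
  have exists_gt (q : SuppLoc) : ∃ q', f q < q' := by
    have le_p : (f q).1.asIdeal ≤ p :=
      (Ideal.comap_mono (le_maximalIdeal q.1.2.ne_top)).trans
        Localization.AtPrime.under_maximalIdeal.le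
    have lt_closedPoint : (f q).1 < closedPoint R :=
      le_p.trans_lt ((le_maximalIdeal Ideal.IsPrime.ne_top').lt_of_ne hp)
    exact ⟨⟨closedPoint R, Module.mem_support_mono lt_closedPoint.le (f q).2⟩, lt_closedPoint⟩
  simpa only [Module.supportDim, Order.krullDim_orderDual] using
    krullDim_add_one_le_of_forall_exists_lt strictMono_f.dual exists_gt

lemma nonempty_localizedModule_quotient_linearEquiv_residueField (p : Ideal R) [p.IsPrime] :
    Nonempty (LocalizedModule p.primeCompl (R ⧸ p) ≃ₗ[Localization.AtPrime p]
      ResidueField (Localization.AtPrime p)) := by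
  have submonoid_eq :
      Algebra.algebraMapSubmonoid (R ⧸ p) p.primeCompl = nonZeroDivisors (R ⧸ p) := by
    have : (⊥ : Ideal (R ⧸ p)).LiesOver p :=
      ⟨by rw [Ideal.under_def, ← RingHom.ker_eq_comap_bot]; exact Ideal.mk_ker.symm⟩
    rw [Ideal.algebraMapSubmonoid_primeCompl_of_liesOver_surjective (P := (⊥ : Ideal (R ⧸ p)))
      p Ideal.Quotient.mk_surjective, Ideal.primeCompl_bot]
  have : IsLocalization (Algebra.algebraMapSubmonoid (R ⧸ p) p.primeCompl) p.ResidueField :=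
    submonoid_eq ▸ inferInstanceAs (IsFractionRing (R ⧸ p) p.ResidueField)
  exact ⟨(IsLocalizedModule.iso p.primeCompl (IsScalarTower.toAlgHom R (R ⧸ p)
    p.ResidueField).toLinearMap).extendScalarsOfIsLocalization p.primeCompl _⟩

lemma HasRegularGenerators.localization [IsLocalRing R] [IsNoetherianRing R]
    (h : HasRegularGenerators R) (p : Ideal R) [p.IsPrime] :
    HasRegularGenerators (Localization.AtPrime p) := by
  obtain ⟨n, hn⟩ := h.exists_projDimLT_residueField
  obtain ⟨e⟩ := nonempty_localizedModule_quotient_linearEquiv_residueField p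
  have := IsLocalization.isNoetherianRing p.primeCompl (Localization.AtPrime p) inferInstance
  exact (((hn.quotient_of_residueField p).localizedModule
    p.primeCompl).of_linearEquiv e).hasRegularGenerators

lemma hasTaylorExpansions_localizedModule_localCohomology [IsNoetherianRing R]
    (F : Type u) [Field F] [PerfectField F] [Algebra F R] (p : Ideal R) [p.IsPrime]
    {l : List (Localization.AtPrime p)}
    (regular : IsWeaklyRegular (Localization.AtPrime p) l)
    (ofList_eq : Ideal.ofList l = maximalIdeal (Localization.AtPrime p)) (I : Ideal R) (i : ℕ) :
    HasTaylorExpansions l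
      (LocalizedModule p.primeCompl ((localCohomology I i).obj (ModuleCat.of R R))) := by
  intro x hx n
  have := IsLocalization.isNoetherianRing p.primeCompl (Localization.AtPrime p) inferInstance
  have := IsLocalization.flat (Localization.AtPrime p) p.primeCompl
  obtain ⟨D, hD⟩ := exists_translates F l regular ofList_eq hx n
  obtain ⟨s⟩ := TaylorDatum.Structure.nonempty_localCohomology (D.restrict R) I i
  obtain ⟨s', -⟩ := s.exists_compatible_localizedModule p.primeCompl
  exact ⟨D, hD, s'.nonempty_of_restrict p.primeCompl⟩

lemma subsingleton_ext_residueField_localizedModule_localCohomology [IsRegularLocalRing R]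
    (F : Type u) [Field F] [PerfectField F] [Algebra F R] (p : Ideal R) [p.IsPrime] (I : Ideal R)
    (i : ℕ) {j : ℕ}
    (hj : Module.supportDim (Localization.AtPrime p)
      (LocalizedModule p.primeCompl ((localCohomology I i).obj (ModuleCat.of R R))) < j) :
    Subsingleton (ModuleExt (Localization.AtPrime p) (ResidueField (Localization.AtPrime p))
      (LocalizedModule p.primeCompl ((localCohomology I i).obj (ModuleCat.of R R))) j) := by
  obtain ⟨l, regular, ofList_eq⟩ := (HasRegularGenerators.of_isRegularLocalRing R).localization p
  have nodup := nodup_of_isWeaklyRegular regular (ofList_eq ▸ Ideal.IsPrime.ne_top')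
  have taylor := hasTaylorExpansions_localizedModule_localCohomology F p regular ofList_eq I i
  have subsingleton := taylor.subsingleton_ext nodup regular hj
  rwa [ofList_eq] at subsingleton

end LocalizationAtPrime

lemma IsRegularLocal.isRegularLocalRing {R : Type} [CommRing R] [IsLocalRing R]
    (h : IsRegularLocal R) : IsRegularLocalRing R := by
  obtain ⟨_, s, span_eq, card_eq⟩ := h
  refine .of_spanFinrank_maximalIdeal_le R ?_
  rw [← card_eq, ← span_eq, ← Set.ncard_coe_finset]
  exact_mod_cast Submodule.spanFinrank_span_le_ncard_of_finite s.finite_toSet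

lemma ContainsField.exists_perfectField_algebra {R : Type} [CommRing R] (h : ContainsField R) :
    ∃ (F : Type) (_ : Field F) (_ : PerfectField F), Nonempty (Algebra F R) := by
  obtain ⟨k, hk⟩ := h
  let _ : Field k := hk.toField
  exact ⟨(⊥ : Subfield k), inferInstance, perfectField_subfield_bot k,
    ⟨(k.subtype.comp (⊥ : Subfield k).subtype).toAlgebra⟩⟩

theorem stmt2_general (R : Type) [CommRing R] [IsLocalRing R]
    (hreg : IsRegularLocal R) (hfield : ContainsField R)
    (I : Ideal R) (i : ℕ) (c : ℕ)
    (h2 : moduleSuppDim R (LocalCohomologyMod R I i) ≤ ((c : ℕ∞) : WithBot ℕ∞))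
    (p : Ideal R) [p.IsPrime]
    (hμ : BassNumberNonzero R p (LocalCohomologyMod R I i) c) :
    p = IsLocalRing.maximalIdeal R := by
  by_contra hp
  have := hreg.isRegularLocalRing
  obtain ⟨F, _, _, ⟨_⟩⟩ := hfield.exists_perfectField_algebra
  have dim_lt : Module.supportDim (Localization.AtPrime p)
      (LocalizedModule p.primeCompl (LocalCohomologyMod R I i)) < c :=
    ENat.WithBot.add_one_le_natCast_iff.1
      ((supportDim_localizedModule_add_one_le (LocalCohomologyMod R I i) hp).trans h2)
  have subsingleton :=
    subsingleton_ext_residueField_localizedModule_localCohomology F p I i dim_lt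
  exact not_subsingleton_iff_nontrivial.2 hμ
    (derivedExtEquiv (projectiveResolution _) _ c).toEquiv.subsingleton

/-- Regular local `R` containing a field, `I` an ideal, with
`inj.dim H_I^i(R) = dim H_I^i(R) = c`.  If `μ^c(p, H_I^i(R)) ≠ 0` then `p` is the
maximal ideal. -/
theorem stmt2 (R : Type) [CommRing R] [IsLocalRing R]
    (hreg : IsRegularLocal R) (hfield : ContainsField R)
    (I : Ideal R) (i : ℕ) (c : ℕ)
    (h1 : injDim R (LocalCohomologyMod R I i) = (c : ℕ∞))
    (h2 : moduleSuppDim R (LocalCohomologyMod R I i) = ((c : ℕ∞) : WithBot ℕ∞))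
    (p : Ideal R) [p.IsPrime]
    (hμ : BassNumberNonzero R p (LocalCohomologyMod R I i) c) :
    p = IsLocalRing.maximalIdeal R :=
  stmt2_general R hreg hfield I i c h2.le p hμ
end

section
/- Let (R, m) be a commutative Noetherian local ring and let R̂ denote the m-adic completion of R. Then for every R-module M (not necessarily finitely generated), dim_R(M) = dim_{R̂}(M ⊗_R R̂). -/
open CategoryTheory Opposite

noncomputable section

/-!
The support of `M` is a union of closed sets `V(ann m)`, so `dim M` is the supremum of the numbers
`dim R/(ann m)`. Let `R → S` be a flat local homomorphism of Noetherian local rings. The elements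
`1 ⊗ m` generate `S ⊗ M`, and `ann (1 ⊗ m) = (ann m)S` by flatness, so it is enough to compare
`dim S/IS` with `dim R/I` for an ideal `I`. Going down for `R/I → S/IS` shows that they differ by
the dimension of the closed fibre `S/mS`, which for the completion is the residue field.

The completion is Noetherian because it is a quotient of a power series ring
`R⟦X₁, …, Xₙ⟧`, with the variables mapping to generators of the ideal.
-/

section AdicCompletionLift

variable {A B : Type*} [CommRing A] [CommRing B] {I : Ideal A} {J : Ideal B} {f : A →+* B}

theorem pow_le_comap_pow_of_map_le (hf : I.map f ≤ J) (n : ℕ) : I ^ n ≤ (J ^ n).comap f :=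
  Ideal.map_le_iff_le_comap.mp ((Ideal.map_pow f I n).trans_le (Ideal.pow_right_mono hf n))

variable (I) in
theorem factorPow_comp_evalₐ {m n : ℕ} (h : m ≤ n) :
    (Ideal.Quotient.factorPow I h).comp
        (AdicCompletion.evalₐ I n : AdicCompletion I A →+* A ⧸ I ^ n) =
      AdicCompletion.evalₐ I m := by
  ext x
  induction x using AdicCompletion.induction_on with
  | h a => simpa using AdicCompletion.Ideal.mk_eq_mk I h a

theorem factorPow_comp_quotientMap_comp_evalₐ (hf : I.map f ≤ J) {m n : ℕ} (h : m ≤ n) :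
    (Ideal.Quotient.factorPow J h).comp
        ((Ideal.quotientMap (J ^ n) f (pow_le_comap_pow_of_map_le hf n)).comp
          (AdicCompletion.evalₐ I n : AdicCompletion I A →+* A ⧸ I ^ n)) =
      (Ideal.quotientMap (J ^ m) f (pow_le_comap_pow_of_map_le hf m)).comp
        (AdicCompletion.evalₐ I m : AdicCompletion I A →+* A ⧸ I ^ m) := by
  rw [← factorPow_comp_evalₐ I h, ← RingHom.comp_assoc, ← RingHom.comp_assoc]
  congr 1
  ext a
  simp

variable [IsAdicComplete J B]

/-- The extension of a ring homomorphism `f : A →+* B` with `f(I) ⊆ J` to the `I`-adic completion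
of `A`, when `B` is `J`-adically complete. -/
def adicCompletionLift (hf : I.map f ≤ J) : AdicCompletion I A →+* B :=
  IsAdicComplete.liftRingHom J
    (fun n ↦ (Ideal.quotientMap (J ^ n) f (pow_le_comap_pow_of_map_le hf n)).comp
      (AdicCompletion.evalₐ I n : AdicCompletion I A →+* A ⧸ I ^ n))
    (factorPow_comp_quotientMap_comp_evalₐ hf)

theorem adicCompletionLift_comp_algebraMap (hf : I.map f ≤ J) :
    (adicCompletionLift hf).comp (algebraMap A (AdicCompletion I A)) = f := by
  refine DFunLike.coe_injective (IsHausdorff.funext' J fun n a ↦ ?_)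
  rw [adicCompletionLift, RingHom.comp_apply,
    IsAdicComplete.mk_liftRingHom _ _ (factorPow_comp_quotientMap_comp_evalₐ hf)]
  simp

theorem adicCompletionLift_surjective (hI : I.FG) (hf : I.map f = J)
    (hsurj : Function.Surjective ((Ideal.Quotient.mk J).comp f)) :
    Function.Surjective (adicCompletionLift hf.le) := by
  have := AdicCompletion.isAdicComplete_self I hI
  have hmap : (I.map (algebraMap A (AdicCompletion I A))).map (adicCompletionLift hf.le) = J := by
    rw [Ideal.map_map, adicCompletionLift_comp_algebraMap, hf]
  have : IsHausdorff
      ((I.map (algebraMap A (AdicCompletion I A))).map (adicCompletionLift hf.le)) B := by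
    rw [hmap]
    infer_instance
  refine surjective_of_mk_map_comp_surjective (I := I.map (algebraMap A (AdicCompletion I A))) _ ?_
  rw [hmap]
  refine Function.Surjective.of_comp (g := algebraMap A (AdicCompletion I A)) ?_
  rwa [← RingHom.coe_comp, RingHom.comp_assoc, adicCompletionLift_comp_algebraMap]

end AdicCompletionLift

section Noetherian

variable {R : Type*} [CommRing R] [IsNoetherianRing R]

variable (R) in
theorem isNoetherianRing_adicCompletion_idealOfVars (σ : Type*) [Finite σ] :
    IsNoetherianRing (AdicCompletion (MvPolynomial.idealOfVars σ R) (MvPolynomial σ R)) :=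
  have := MvPowerSeries.isNoetherianRing (σ := σ) R
  isNoetherianRing_of_ringEquiv _ (MvPowerSeries.toAdicCompletionAlgEquiv σ R).toRingEquiv

variable (R) in
theorem isNoetherianRing_of_isAdicComplete {A : Type*} [CommRing A] [Algebra R A] (J : Ideal A)
    [IsAdicComplete J A] (hJ : J.FG) (hsurj : Function.Surjective (algebraMap R (A ⧸ J))) :
    IsNoetherianRing A := by
  obtain ⟨s, hs⟩ := hJ
  let f : MvPolynomial s R →+* A := MvPolynomial.aeval (R := R) (Subtype.val : s → A)
  have hf : (MvPolynomial.idealOfVars s R).map f = J := by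
    rw [MvPolynomial.idealOfVars, Ideal.map_span, ← Set.range_comp, ← hs]
    simp [f, Function.comp_def]
  have hf_surj : Function.Surjective ((Ideal.Quotient.mk J).comp f) := fun x ↦
    have ⟨r, hr⟩ := hsurj x
    ⟨MvPolynomial.C r, by simpa [f] using hr⟩
  have := isNoetherianRing_adicCompletion_idealOfVars R s
  exact isNoetherianRing_of_surjective _ _ _
    (adicCompletionLift_surjective (MvPolynomial.idealOfVars_fg s R) hf hf_surj)

instance isNoetherianRing_adicCompletion (I : Ideal R) :
    IsNoetherianRing (AdicCompletion I R) := by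
  have hI : I.FG := IsNoetherian.noetherian I
  have := AdicCompletion.isAdicComplete_self I hI
  refine isNoetherianRing_of_isAdicComplete R (I.map (algebraMap R (AdicCompletion I R)))
    (hI.map _) fun x ↦ ?_
  obtain ⟨x, rfl⟩ := Ideal.Quotient.mk_surjective x
  obtain ⟨r, hr⟩ := Ideal.Quotient.mk_surjective (AdicCompletion.evalOneₐ I x)
  refine ⟨r, ?_⟩
  rw [IsScalarTower.algebraMap_apply R (AdicCompletion I R), Ideal.Quotient.algebraMap_eq,
    Ideal.Quotient.mk_eq_mk_iff_sub_mem, ← AdicCompletion.ker_evalOneₐ_eq_map I hI]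
  simp [RingHom.mem_ker, hr]

end Noetherian

section SupportDim

theorem krullDim_iUnion_of_isUpperSet {α ι : Type*} [Preorder α] {s : ι → Set α}
    (hs : ∀ i, IsUpperSet (s i)) :
    Order.krullDim (⋃ i, s i : Set α) = ⨆ i, Order.krullDim (s i) := by
  refine le_antisymm (iSup_le fun p ↦ ?_) (iSup_le fun i ↦ ?_)
  · obtain ⟨i, hi⟩ := Set.mem_iUnion.mp p.head.2
    let q : LTSeries (s i) :=
      { length := p.length
        toFun := fun k ↦ ⟨p k, hs i (p.head_le k) hi⟩
        step := p.step }
    exact (Order.LTSeries.length_le_krullDim q).trans (le_iSup (fun i ↦ Order.krullDim (s i)) i)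
  · exact Order.krullDim_le_of_strictMono (Set.inclusion (Set.subset_iUnion s i)) fun _ _ h ↦ h

theorem withBot_iSup_add {ι : Type*} (f : ι → WithBot ℕ∞) (a : WithBot ℕ∞) :
    (⨆ i, f i) + a = ⨆ i, f i + a := by
  refine le_antisymm ?_ (iSup_le fun i ↦ by gcongr; exact le_iSup f i)
  induction a with
  | bot => simp
  | coe a =>
  obtain hbot | ⟨i₀, hi₀⟩ := forall_or_exists_not fun i ↦ f i = ⊥
  · simp [hbot]
  let g : {i // f i ≠ ⊥} → ℕ∞ := fun i ↦ (f i).unbot i.2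
  have : Nonempty {i // f i ≠ ⊥} := ⟨⟨i₀, hi₀⟩⟩
  have hfg : ⨆ i, f i ≤ ((⨆ i, g i : ℕ∞) : WithBot ℕ∞) := iSup_le fun i ↦ by
    by_cases hi : f i = ⊥
    · simp [hi]
    · rw [← WithBot.coe_unbot (f i) hi]
      exact WithBot.coe_le_coe.mpr (le_iSup g ⟨i, hi⟩)
  calc (⨆ i, f i) + a ≤ ((⨆ i, g i : ℕ∞) : WithBot ℕ∞) + a := by gcongr
    _ = ⨆ i, ((g i + a : ℕ∞) : WithBot ℕ∞) := by
      rw [← WithBot.coe_add, ENat.iSup_add, WithBot.coe_iSup (OrderTop.bddAbove _)]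
    _ ≤ ⨆ i, f i + a := iSup_le fun i ↦ by
      simpa [g] using le_iSup (fun i ↦ f i + (a : WithBot ℕ∞)) i

theorem supportDim_eq_iSup_ringKrullDim_quotient_torsionOf {R M ι : Type*} [CommRing R]
    [AddCommGroup M] [Module R M] {x : ι → M} (hx : Submodule.span R (Set.range x) = ⊤) :
    Module.supportDim R M = ⨆ i, ringKrullDim (R ⧸ Ideal.torsionOf R M (x i)) := by
  have hsupp : Module.support R M =
      ⋃ i, PrimeSpectrum.zeroLocus (Ideal.torsionOf R M (x i) : Set R) := by
    ext p
    simp only [Module.mem_support_iff_of_span_eq_top hx, Set.exists_range_iff, Set.mem_iUnion,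
      PrimeSpectrum.mem_zeroLocus, SetLike.coe_subset_coe,
      Ideal.annihilator_span_singleton_eq_torsionOf]
  simp_rw [ringKrullDim_quotient]
  rw [Module.supportDim, hsupp, krullDim_iUnion_of_isUpperSet]
  exact fun i p q hpq hp ↦ Set.Subset.trans hp hpq

end SupportDim

section BaseChange

open TensorProduct

variable {R : Type*} (S : Type*) [CommRing R] [CommRing S] [Algebra R S]
  {M : Type*} [AddCommGroup M] [Module R M]

theorem span_range_one_tmul_eq_top :
    Submodule.span S (Set.range fun m : M ↦ (1 : S) ⊗ₜ[R] m) = ⊤ := by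
  rw [← Submodule.baseChange_top, ← Submodule.span_univ, Submodule.baseChange_span, Set.image_univ]
  rfl

theorem torsionOf_one_tmul [Module.Flat R S] (m : M) :
    Ideal.torsionOf S (S ⊗[R] M) (1 ⊗ₜ m) = (Ideal.torsionOf R M m).map (algebraMap R S) := by
  let I := Ideal.torsionOf R M m
  let φ : R ⧸ I →ₗ[R] M :=
    (R ∙ m).subtype ∘ₗ (Ideal.quotTorsionOfEquivSpanSingleton R M m : R ⧸ I →ₗ[R] R ∙ m)
  have hφ : Function.Injective φ :=
    Subtype.val_injective.comp (Ideal.quotTorsionOfEquivSpanSingleton R M m).injective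
  have hφ_one : φ 1 = m := by
    simpa using! congrArg Subtype.val
      (Ideal.quotTorsionOfEquivSpanSingleton_apply_mk (R := R) (M := M) m 1)
  ext s
  calc s ∈ Ideal.torsionOf S (S ⊗[R] M) (1 ⊗ₜ m)
    _ ↔ φ.lTensor S (s ⊗ₜ 1) = 0 := by simp [Ideal.mem_torsionOf_iff, smul_tmul', hφ_one]
    _ ↔ s ⊗ₜ[R] (1 : R ⧸ I) = 0 :=
      map_eq_zero_iff _ (Module.Flat.lTensor_preserves_injective_linearMap φ hφ)
    _ ↔ Algebra.TensorProduct.quotIdealMapEquivTensorQuot S I (Ideal.Quotient.mk _ s) = 0 := by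
      rw [Algebra.TensorProduct.quotIdealMapEquivTensorQuot_mk]
    _ ↔ s ∈ I.map (algebraMap R S) := by
      rw [EmbeddingLike.map_eq_zero_iff, Ideal.Quotient.eq_zero_iff_mem]

end BaseChange

section FlatLocal

open IsLocalRing TensorProduct

theorem ringKrullDim_quotient_maximalIdeal (A : Type*) [CommRing A] [IsLocalRing A] :
    ringKrullDim (A ⧸ maximalIdeal A) = 0 :=
  ringKrullDim_eq_zero_of_field (ResidueField A)

variable {A B : Type*} [CommRing A] [CommRing B] [IsLocalRing A] [IsLocalRing B]
  [IsNoetherianRing A] [IsNoetherianRing B] [Algebra A B] [IsLocalHom (algebraMap A B)]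
  [Module.Flat A B]

variable (A B) in
theorem ringKrullDim_eq_add_ringKrullDim_quotient_map_maximalIdeal :
    ringKrullDim B =
      ringKrullDim A + ringKrullDim (B ⧸ (maximalIdeal A).map (algebraMap A B)) := by
  have : Nontrivial (B ⧸ (maximalIdeal A).map (algebraMap A B)) :=
    Ideal.Quotient.nontrivial_iff.mpr (map_maximalIdeal_lt_top _).ne
  have : IsLocalRing (B ⧸ (maximalIdeal A).map (algebraMap A B)) :=
    .of_surjective' _ Ideal.Quotient.mk_surjective
  rw [← maximalIdeal_height_eq_ringKrullDim, ← maximalIdeal_height_eq_ringKrullDim (R := A),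
    ← maximalIdeal_height_eq_ringKrullDim (R := B ⧸ _),
    ← map_maximalIdeal_of_surjective _ Ideal.Quotient.mk_surjective,
    Ideal.height_eq_height_add_of_liesOver_of_hasGoingDown (maximalIdeal A) (maximalIdeal B),
    WithBot.coe_add]

theorem ringKrullDim_quotient_map_eq_add (I : Ideal A) :
    ringKrullDim (B ⧸ I.map (algebraMap A B)) =
      ringKrullDim (A ⧸ I) + ringKrullDim (B ⧸ (maximalIdeal A).map (algebraMap A B)) := by
  obtain rfl | hI := eq_or_ne I ⊤
  · simp [Ideal.map_top, ringKrullDim_eq_bot_of_subsingleton]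
  have hle : I ≤ maximalIdeal A := le_maximalIdeal hI
  have : Nontrivial (A ⧸ I) := Ideal.Quotient.nontrivial_iff.mpr hI
  have : Nontrivial (B ⧸ I.map (algebraMap A B)) := Ideal.Quotient.nontrivial_iff.mpr
    ((Ideal.map_mono hle).trans_lt (map_maximalIdeal_lt_top (algebraMap A B))).ne
  have : IsLocalRing (A ⧸ I) := .of_surjective' _ Ideal.Quotient.mk_surjective
  have : IsLocalRing (B ⧸ I.map (algebraMap A B)) := .of_surjective' _ Ideal.Quotient.mk_surjective
  have : Module.Flat (A ⧸ I) (B ⧸ I.map (algebraMap A B)) :=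
    .of_linearEquiv (Algebra.TensorProduct.quotIdealMapEquivQuotTensor B I).toLinearEquiv
  have hmap : (maximalIdeal (A ⧸ I)).map (algebraMap (A ⧸ I) (B ⧸ I.map (algebraMap A B))) =
      ((maximalIdeal A).map (algebraMap A B)).map (Ideal.Quotient.mk _) := by
    rw [← map_maximalIdeal_of_surjective _ (Ideal.Quotient.mk_surjective (I := I)),
      Ideal.map_map, Ideal.map_map]
    rfl
  have : IsLocalHom (algebraMap (A ⧸ I) (B ⧸ I.map (algebraMap A B))) := by
    refine ((local_hom_TFAE _).out 0 2).mpr ?_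
    rw [hmap, ← map_maximalIdeal_of_surjective _ (Ideal.Quotient.mk_surjective (I := I.map _))]
    exact Ideal.map_mono (map_maximalIdeal_le (algebraMap A B))
  rw [ringKrullDim_eq_add_ringKrullDim_quotient_map_maximalIdeal (A ⧸ I), hmap,
    ringKrullDim_eq_of_ringEquiv (DoubleQuot.quotQuotEquivQuotOfLE (Ideal.map_mono hle))]

variable (B) in
theorem stmt3_general (M : Type*) [AddCommGroup M] [Module A M] :
    Module.supportDim B (B ⊗[A] M) =
      Module.supportDim A M + ringKrullDim (B ⧸ (maximalIdeal A).map (algebraMap A B)) := by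
  have hspan : Submodule.span A (Set.range fun m : M ↦ m) = ⊤ := by
    rw [Set.range_id', Submodule.span_univ]
  rw [supportDim_eq_iSup_ringKrullDim_quotient_torsionOf (span_range_one_tmul_eq_top B),
    supportDim_eq_iSup_ringKrullDim_quotient_torsionOf hspan, withBot_iSup_add]
  refine iSup_congr fun m ↦ ?_
  rw [torsionOf_one_tmul, ringKrullDim_quotient_map_eq_add]

end FlatLocal

/-- For a commutative Noetherian local ring `(R, m)` with `m`-adic
completion `R̂`, and any `R`-module `M`, we have `dim_R M = dim_{R̂} (M ⊗_R R̂)`. -/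
theorem stmt3 (R : Type) [CommRing R] [IsLocalRing R] [IsNoetherianRing R]
    (M : Type) [AddCommGroup M] [Module R M] :
    moduleSuppDim R M =
      moduleSuppDim (AdicCompletion (IsLocalRing.maximalIdeal R) R)
        (TensorProduct R (AdicCompletion (IsLocalRing.maximalIdeal R) R) M) := by
  have h := stmt3_general (A := R) (AdicCompletion (IsLocalRing.maximalIdeal R) R) M
  rw [← AdicCompletion.maximalIdeal_eq_map, ringKrullDim_quotient_maximalIdeal, add_zero] at h
  exact h.symm

end
end
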